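/- arXiv:1703.07666 — 4 statements merged into one kernel-verified Lean document; each statement's English description precedes it below -/
import Mathlib

section
/- Uniform marginals lemma (simple version): There exists N such that for every n ≥ N the following holds with m = n^256. Let X ⊆ [m]^n be nonempty and 0.9-dense, and let Y ⊆ ({0,1}^m)^n be nonempty with deficiency nm − log₂|Y| ≤ n³. Then for every z ∈ {0,1}^n the set G^{-1}(z) ∩ (X × Y) is nonempty, and the uniform distribution on G^{-1}(z) ∩ (X × Y) has both of its marginal distributions (on the first and second coordinate, respectively) 1/n²-close in total variation distance to the uniform distribution on X and to the uniform distribution on Y. -/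
open Finset

namespace UMS

/-- Crude two-point inequality. -/
lemma two_point (r : ℕ) (a b : ℝ) :
    (a + b) ^ (2 * r) + (a - b) ^ (2 * r) ≤ 2 * (a ^ 2 + (4 * (r : ℝ) ^ 2) * b ^ 2) ^ r := by
  have h1 : (a + b) ^ (2 * r) + (a - b) ^ (2 * r)
      = ∑ k ∈ range (2 * r + 1), (1 + (-1) ^ k) * (b ^ k * a ^ (2 * r - k) * ((2 * r).choose k)) := by
    have e1 : a + b = b + a := by ring
    have e2 : a - b = (-b) + a := by ring
    rw [e1, e2, add_pow, add_pow, ← Finset.sum_add_distrib]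
    refine Finset.sum_congr rfl fun k _ => ?_
    rw [neg_pow b k]; ring
  have h2 : ∀ (R : ℕ) (f : ℕ → ℝ), ∑ k ∈ range (2 * R + 1), (1 + (-1 : ℝ) ^ k) * f k
      = 2 * ∑ j ∈ range (R + 1), f (2 * j) := by
    intro R f
    induction R with
    | zero => norm_num
    | succ R ih =>
      rw [show 2 * (R + 1) + 1 = (2 * R + 1) + 1 + 1 by ring, Finset.sum_range_succ,
        Finset.sum_range_succ, ih, Finset.sum_range_succ _ (R + 1)]
      have : (-1 : ℝ) ^ (2 * R + 1) = -1 := by rw [pow_succ, pow_mul]; simp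
      have h' : (-1 : ℝ) ^ (2 * R + 1 + 1) = 1 := by rw [pow_succ, this]; norm_num
      rw [this, h', show 2 * R + 1 + 1 = 2 * (R + 1) by ring]; ring
  rw [h1, h2, add_comm (a ^ 2), add_pow]
  refine mul_le_mul_of_nonneg_left (Finset.sum_le_sum fun j hj => ?_) (by norm_num)
  have hj' : j ≤ r := by simpa [Nat.lt_succ_iff] using hj
  rw [show 2 * r - 2 * j = 2 * (r - j) by omega, pow_mul b, pow_mul a, mul_pow]
  have hc : (((2 * r).choose (2 * j) : ℕ) : ℝ) ≤ (4 * (r : ℝ) ^ 2) ^ j := by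
    have : (2 * r).choose (2 * j) ≤ (2 * r) ^ (2 * j) := Nat.choose_le_pow _ _
    calc (((2 * r).choose (2 * j) : ℕ) : ℝ) ≤ (((2 * r) ^ (2 * j) : ℕ) : ℝ) := by exact_mod_cast this
      _ = _ := by push_cast; rw [pow_mul]; congr 1; ring
  have hc2 : (1 : ℝ) ≤ (r.choose j : ℕ) := by exact_mod_cast Nat.choose_pos hj'
  have hp : 0 ≤ (b ^ 2) ^ j * (a ^ 2) ^ (r - j) := by positivity
  calc (b ^ 2) ^ j * (a ^ 2) ^ (r - j) * ((2 * r).choose (2 * j) : ℕ)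
      ≤ (b ^ 2) ^ j * (a ^ 2) ^ (r - j) * ((4 * (r : ℝ) ^ 2) ^ j * (r.choose j : ℕ)) := by
        refine mul_le_mul_of_nonneg_left (hc.trans ?_) hp
        exact le_mul_of_one_le_right (by positivity) hc2
    _ = _ := by ring

/-- Minkowski in power form. -/
lemma mink {Ω : Type*} [Fintype Ω] (r : ℕ) (hr : r ≠ 0) (f g : Ω → ℝ) (hf : ∀ w, 0 ≤ f w)
    (hg : ∀ w, 0 ≤ g w) (A B C : ℝ) (hA : 0 ≤ A) (hB : 0 ≤ B)
    (h1 : ∑ w, f w ^ r ≤ C * A ^ r) (h2 : ∑ w, g w ^ r ≤ C * B ^ r) :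
    ∑ w, (f w + g w) ^ r ≤ C * (A + B) ^ r := by
  have key : ∀ (f : Ω → ℝ), (∀ w, 0 ≤ f w) → ∑ w, f w ^ r ≤ C * 0 ^ r → ∀ w, f w = 0 := by
    intro f hf h w
    rw [zero_pow hr, mul_zero] at h
    have : ∑ w, f w ^ r = 0 := le_antisymm h (Finset.sum_nonneg fun w _ => pow_nonneg (hf w) r)
    rw [Finset.sum_eq_zero_iff_of_nonneg (fun w _ => pow_nonneg (hf w) r)] at this
    exact pow_eq_zero_iff hr |>.1 (this w (mem_univ _))
  rcases hA.eq_or_lt with rfl | hA'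
  · have := key f hf h1
    simpa [this] using h2
  rcases hB.eq_or_lt with rfl | hB'
  · have := key g hg h2
    simpa [this] using h1
  have hAB : 0 < A + B := by positivity
  have pw : ∀ w, (f w + g w) ^ r ≤
      (A + B) ^ r * (A / (A + B) * (f w ^ r / A ^ r) + B / (A + B) * (g w ^ r / B ^ r)) := by
    intro w
    have hc := (convexOn_pow (𝕜 := ℝ) r).2
      (Set.mem_Ici.2 (div_nonneg (hf w) hA)) (Set.mem_Ici.2 (div_nonneg (hg w) hB))
      (show 0 ≤ A / (A + B) by positivity) (show 0 ≤ B / (A + B) by positivity)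
      (by field_simp)
    simp only [smul_eq_mul, div_pow] at hc
    have e : A / (A + B) * (f w / A) + B / (A + B) * (g w / B) = (f w + g w) / (A + B) := by
      field_simp
    rw [e, div_pow, div_le_iff₀ (by positivity)] at hc
    linarith
  calc ∑ w, (f w + g w) ^ r ≤ ∑ w, _ := Finset.sum_le_sum fun w _ => pw w
    _ = (A + B) ^ r * (A / (A + B) * ((∑ w, f w ^ r) / A ^ r)
          + B / (A + B) * ((∑ w, g w ^ r) / B ^ r)) := by
        rw [← Finset.mul_sum, Finset.sum_add_distrib, ← Finset.mul_sum, ← Finset.mul_sum,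
          Finset.sum_div, Finset.sum_div]
    _ ≤ (A + B) ^ r * (A / (A + B) * C + B / (A + B) * C) := by
        have h1' : (∑ w, f w ^ r) / A ^ r ≤ C := by rwa [div_le_iff₀ (by positivity)]
        have h2' : (∑ w, g w ^ r) / B ^ r ≤ C := by rwa [div_le_iff₀ (by positivity)]
        gcongr
    _ = C * (A + B) ^ r := by field_simp

/-- Hypercontractive moment bound. -/
lemma hyper {Ω V : Type*} [Fintype Ω] [DecidableEq V] (e : V → Ω → ℝ)
    (he : ∀ v w, e v w ^ 2 = 1) (φ : V → Equiv.Perm Ω)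
    (h1 : ∀ v w, e v (φ v w) = - e v w) (h2 : ∀ v u w, u ≠ v → e u (φ v w) = e u w)
    (r : ℕ) (hr : r ≠ 0) (A : Finset V) : ∀ c : Finset V → ℝ,
    ∑ w, (∑ T ∈ A.powerset, c T * ∏ v ∈ T, e v w) ^ (2 * r) ≤
      (Fintype.card Ω : ℝ) * (∑ T ∈ A.powerset, (4 * (r : ℝ) ^ 2) ^ T.card * c T ^ 2) ^ r := by
  induction A using Finset.induction_on with
  | empty => intro c; simp [pow_mul]
  | insert a A ha ih =>
    intro c
    set K : ℝ := 4 * (r : ℝ) ^ 2 with hK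
    have hK0 : 0 ≤ K := by positivity
    set u : Ω → ℝ := fun w => ∑ T ∈ A.powerset, c T * ∏ v ∈ T, e v w with hu
    set b : Ω → ℝ := fun w => ∑ T ∈ A.powerset, c (insert a T) * ∏ v ∈ T, e v w with hb
    have hnot : ∀ T ∈ A.powerset, a ∉ T := fun T hT h => ha (Finset.mem_powerset.1 hT h)
    have hsplit : ∀ w, ∑ T ∈ (insert a A).powerset, c T * ∏ v ∈ T, e v w = u w + e a w * b w := by
      intro w
      rw [Finset.sum_powerset_insert ha, hu, hb]
      simp only
      rw [Finset.mul_sum]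
      congr 1
      refine Finset.sum_congr rfl fun T hT => ?_
      rw [Finset.prod_insert (hnot T hT)]; ring
    have hprod : ∀ w, ∀ T ∈ A.powerset, ∏ v ∈ T, e v (φ a w) = ∏ v ∈ T, e v w := by
      intro w T hT
      refine Finset.prod_congr rfl fun v hv => h2 a v w ?_
      rintro rfl; exact hnot T hT hv
    have huf : ∀ w, u (φ a w) = u w := fun w =>
      Finset.sum_congr rfl fun T hT => by rw [hprod w T hT]
    have hbf : ∀ w, b (φ a w) = b w := fun w =>
      Finset.sum_congr rfl fun T hT => by rw [hprod w T hT]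
    simp only [hsplit]
    have hflip : ∑ w, (u w + e a w * b w) ^ (2 * r) = ∑ w, (u w - e a w * b w) ^ (2 * r) := by
      rw [← Equiv.sum_comp (φ a)]
      refine Finset.sum_congr rfl fun w _ => ?_
      rw [huf, hbf, h1]; ring
    have hpt : ∑ w, (u w + e a w * b w) ^ (2 * r) ≤ ∑ w, (u w ^ 2 + K * b w ^ 2) ^ r := by
      have : 2 * ∑ w, (u w + e a w * b w) ^ (2 * r) ≤ 2 * ∑ w, (u w ^ 2 + K * b w ^ 2) ^ r := by
        rw [two_mul]
        nth_rewrite 2 [hflip]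
        rw [← Finset.sum_add_distrib, Finset.mul_sum]
        refine Finset.sum_le_sum fun w _ => (two_point r (u w) (e a w * b w)).trans_eq ?_
        rw [mul_pow (e a w), he, one_mul]
      linarith
    refine hpt.trans ?_
    have hW : ∑ T ∈ (insert a A).powerset, K ^ T.card * c T ^ 2
        = (∑ T ∈ A.powerset, K ^ T.card * c T ^ 2)
          + K * ∑ T ∈ A.powerset, K ^ T.card * c (insert a T) ^ 2 := by
      rw [Finset.sum_powerset_insert ha, Finset.mul_sum]
      congr 1
      refine Finset.sum_congr rfl fun T hT => ?_
      rw [Finset.card_insert_of_notMem (hnot T hT)]; ring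
    rw [hW]
    refine mink r hr _ _ (fun w => by positivity) (fun w => by positivity) _ _ _ ?_ ?_ ?_ ?_
    · exact Finset.sum_nonneg fun T _ => by positivity
    · exact mul_nonneg hK0 (Finset.sum_nonneg fun T _ => by positivity)
    · have := ih c
      simpa only [pow_mul] using this
    · have := ih (fun T => c (insert a T))
      simp only [pow_mul] at this
      simp only [mul_pow, ← Finset.mul_sum]
      calc K ^ r * ∑ w, (b w ^ 2) ^ r ≤ K ^ r * _ := mul_le_mul_of_nonneg_left this (by positivity)
        _ = _ := by ring

/-- From pointwise-average closeness to total variation. -/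
lemma tv {ι : Type*} (X : Finset ι) (hX : X.Nonempty) (N : ι → ℝ) (B ε : ℝ) (hB : 0 < B)
    (hε : ε ≤ 1 / 2) (h : ∑ x ∈ X, |N x / B - 1| ≤ ε * X.card) :
    0 < ∑ x ∈ X, N x ∧
    (1 / 2) * ∑ x ∈ X, |N x / (∑ x ∈ X, N x) - 1 / (X.card : ℝ)| ≤ 2 * ε := by
  set T := ∑ x ∈ X, N x with hT
  have hc : (0 : ℝ) < X.card := by exact_mod_cast hX.card_pos
  have h1 : |T / B - X.card| ≤ ε * X.card := by
    refine le_trans (le_of_eq_of_le ?_ (Finset.abs_sum_le_sum_abs (fun x => N x / B - 1) X)) h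
    rw [Finset.sum_sub_distrib, hT, Finset.sum_div]; simp
  have h2 : (X.card : ℝ) / 2 ≤ T / B := by
    have := (abs_le.1 h1).1
    nlinarith
  have hTB : 0 < T / B := by linarith
  have hT0 : 0 < T := by
    have := mul_pos hTB hB
    rwa [div_mul_cancel₀ _ hB.ne'] at this
  refine ⟨hT0, ?_⟩
  have pw : ∀ x ∈ X, |N x / T - 1 / (X.card : ℝ)| ≤
      (T / B)⁻¹ * (|N x / B - 1| + |T / B - X.card| / X.card) := by
    intro x _
    have e : N x / T - 1 / (X.card : ℝ)
        = (T / B)⁻¹ * ((N x / B - 1) - (T / B - X.card) / X.card) := by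
      field_simp; ring
    rw [e, abs_mul, abs_of_pos (inv_pos.2 hTB)]
    refine mul_le_mul_of_nonneg_left ?_ (inv_pos.2 hTB).le
    refine (abs_sub _ _).trans ?_
    rw [abs_div, abs_of_pos hc]
  have hs := Finset.sum_le_sum pw
  rw [← Finset.mul_sum, Finset.sum_add_distrib, Finset.sum_const, nsmul_eq_mul,
    mul_div_cancel₀ _ hc.ne'] at hs
  have h3 : (T / B)⁻¹ * (∑ x ∈ X, |N x / B - 1| + |T / B - X.card|) ≤ 4 * ε := by
    rw [inv_mul_le_iff₀ hTB]
    have : 0 ≤ ε := by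
      have := (abs_nonneg _).trans h1
      exact nonneg_of_mul_nonneg_left this hc
    nlinarith
  linarith

/-- sign of a bit -/
def sg (b : Bool) : ℝ := if b then -1 else 1

lemma sg_sq (b : Bool) : sg b ^ 2 = 1 := by cases b <;> simp [sg]
lemma sg_not (b : Bool) : sg (!b) = - sg b := by cases b <;> simp [sg]
lemma sg_abs (b : Bool) : |sg b| = 1 := by cases b <;> simp [sg]
lemma sg_mul (a b : Bool) : 1 + sg a * sg b = if b = a then 2 else 0 := by
  cases a <;> cases b <;> norm_num [sg]

/-- flipping one bit -/
def flip {n m : ℕ} (v : Fin n × Fin m) : Equiv.Perm (Fin n → Fin m → Bool) where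
  toFun y := fun i j => if (i, j) = v then !(y i j) else y i j
  invFun y := fun i j => if (i, j) = v then !(y i j) else y i j
  left_inv y := by
    funext i j
    by_cases h : (i, j) = v <;> simp [h]
  right_inv y := by
    funext i j
    by_cases h : (i, j) = v <;> simp [h]

/-- graph of x on S -/
def gr {n m : ℕ} (x : Fin n → Fin m) (S : Finset (Fin n)) : Finset (Fin n × Fin m) :=
  S.image fun i => (i, x i)

lemma gr_card {n m : ℕ} (x : Fin n → Fin m) (S : Finset (Fin n)) : (gr x S).card = S.card := by
  exact Finset.card_image_of_injective _ fun _ _ h => (Prod.ext_iff.1 h).1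

lemma gr_fst {n m : ℕ} (x : Fin n → Fin m) (S : Finset (Fin n)) : (gr x S).image Prod.fst = S := by
  ext i; simp [gr]

lemma gr_prod {n m : ℕ} (x : Fin n → Fin m) (S : Finset (Fin n)) (f : Fin n × Fin m → ℝ) :
    ∏ v ∈ gr x S, f v = ∏ i ∈ S, f (i, x i) := by
  exact Finset.prod_image fun _ _ _ _ h => (Prod.ext_iff.1 h).1

lemma gr_eq {n m : ℕ} (x x' : Fin n → Fin m) (S : Finset (Fin n)) (h : gr x S = gr x' S) :
    ∀ i ∈ S, x i = x' i := by
  intro i hi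
  have : (i, x i) ∈ gr x' S := by rw [← h]; simp [gr, hi]
  simp [gr] at this
  exact this.2.symm

lemma expand {n m : ℕ} (x : Fin n → Fin m) (y : Fin n → Fin m → Bool) (z : Fin n → Bool) :
    (if ∀ i, y i (x i) = z i then (2 : ℝ) ^ n else 0) - 1 =
      ∑ S ∈ (univ : Finset (Finset (Fin n))).erase ∅,
        (∏ i ∈ S, sg (z i)) * ∏ i ∈ S, sg (y i (x i)) := by
  have h : (if ∀ i, y i (x i) = z i then (2 : ℝ) ^ n else 0)
      = ∑ S : Finset (Fin n), (∏ i ∈ S, sg (z i)) * ∏ i ∈ S, sg (y i (x i)) := by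
    have : ∏ i : Fin n, (1 + sg (z i) * sg (y i (x i)))
        = ∑ S : Finset (Fin n), (∏ i ∈ S, sg (z i)) * ∏ i ∈ S, sg (y i (x i)) := by
      rw [Finset.prod_one_add]
      simp [Finset.prod_mul_distrib]
    rw [← this]
    simp only [sg_mul]
    split_ifs with hh
    · simp [hh]
    · push Not at hh
      obtain ⟨i, hi⟩ := hh
      exact (Finset.prod_eq_zero (mem_univ i) (by simp [hi])).symm
  rw [h, ← Finset.add_sum_erase _ _ (mem_univ (∅ : Finset (Fin n)))]
  simp

/-- Moment bound over the whole cube. -/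
lemma moment {n m : ℕ} (X : Finset (Fin n → Fin m)) (hX : X.Nonempty) (p : ℝ) (hp : 0 ≤ p)
    (hd : ∀ I : Finset (Fin n), I.Nonempty → ∀ α : Fin n → Fin m,
        ((X.filter fun x => ∀ i ∈ I, x i = α i).card : ℝ) ≤ X.card * p ^ I.card)
    (σ : (Fin n → Fin m) → ℝ) (hσ : ∀ x, |σ x| ≤ 1) (z : Fin n → Bool) (r : ℕ) (hr : r ≠ 0) :
    ∑ y : Fin n → Fin m → Bool,
      ((∑ x ∈ X, σ x * ((if ∀ i, y i (x i) = z i then (2 : ℝ) ^ n else 0) - 1)) / X.card) ^ (2 * r)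
      ≤ (2 : ℝ) ^ (n * m) * ((1 + 4 * (r : ℝ) ^ 2 * p) ^ n - 1) ^ r := by
  classical
  have hc : (0 : ℝ) < X.card := by exact_mod_cast hX.card_pos
  set P := (univ : Finset (Finset (Fin n))).erase ∅ with hP
  set K : ℝ := 4 * (r : ℝ) ^ 2 with hK
  have hK0 : 0 ≤ K := by positivity
  set d : Finset (Fin n × Fin m) → ℝ := fun T => (∑ x ∈ X, ∑ S ∈ P,
    if gr x S = T then σ x * ∏ i ∈ S, sg (z i) else 0) / X.card with hdd
  have hF : ∀ y : Fin n → Fin m → Bool,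
      (∑ x ∈ X, σ x * ((if ∀ i, y i (x i) = z i then (2 : ℝ) ^ n else 0) - 1)) / X.card
      = ∑ T ∈ (univ : Finset (Fin n × Fin m)).powerset, d T * ∏ v ∈ T, sg (y v.1 v.2) := by
    intro y
    simp only [hdd, Finset.powerset_univ, div_mul_eq_mul_div, ← Finset.sum_div]
    congr 1
    simp only [Finset.sum_mul]
    rw [Finset.sum_comm]
    refine Finset.sum_congr rfl fun x _ => ?_
    rw [Finset.sum_comm, expand, Finset.mul_sum]
    refine Finset.sum_congr rfl fun S _ => ?_
    simp only [ite_mul, zero_mul, Finset.sum_ite_eq, mem_univ, if_true]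
    rw [gr_prod]; ring
  have hh := hyper (fun (v : Fin n × Fin m) (y : Fin n → Fin m → Bool) => sg (y v.1 v.2))
    (fun v w => sg_sq _) flip (fun v w => by simp [flip, sg_not])
    (fun v u w huv => by simp [flip, huv]) r hr univ d
  simp only [hF]
  refine hh.trans ?_
  have hcard : (Fintype.card (Fin n → Fin m → Bool) : ℝ) = 2 ^ (n * m) := by
    simp [← pow_mul, mul_comm]
  rw [hcard]
  have hW0 : 0 ≤ ∑ T ∈ (univ : Finset (Fin n × Fin m)).powerset, K ^ T.card * d T ^ 2 :=
    Finset.sum_nonneg fun T _ => by positivity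
  refine mul_le_mul_of_nonneg_left (pow_le_pow_left₀ hW0 ?_ r) (by positivity)
  -- absolute-value version of coefficients
  set D : Finset (Fin n × Fin m) → ℝ := fun T => (∑ x ∈ X, ∑ S ∈ P,
    if gr x S = T then (1 : ℝ) else 0) / X.card with hDD
  have hD0 : ∀ T, 0 ≤ D T := fun T => div_nonneg
    (Finset.sum_nonneg fun x _ => Finset.sum_nonneg fun S _ => by split_ifs <;> norm_num) hc.le
  have hdD : ∀ T, |d T| ≤ D T := by
    intro T
    simp only [hdd, hDD]
    rw [abs_div, abs_of_pos hc]
    refine div_le_div_of_nonneg_right ?_ hc.le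
    refine (Finset.abs_sum_le_sum_abs _ _).trans (Finset.sum_le_sum fun x _ => ?_)
    refine (Finset.abs_sum_le_sum_abs _ _).trans (Finset.sum_le_sum fun S _ => ?_)
    split_ifs
    · rw [abs_mul, Finset.abs_prod]
      simp [sg_abs, hσ]
    · simp
  have hDp : ∀ T, D T ≤ p ^ T.card := by
    intro T
    by_cases hex : ∃ x ∈ X, ∃ S ∈ P, gr x S = T
    · obtain ⟨x0, hx0, S0, hS0, rfl⟩ := hex
      have hne : S0.Nonempty := by
        rw [Finset.nonempty_iff_ne_empty]; exact (Finset.mem_erase.1 hS0).1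
      simp only [hDD]
      rw [div_le_iff₀ hc, gr_card, mul_comm]
      refine le_trans ?_ (hd S0 hne x0)
      rw [Finset.card_filter]
      push_cast
      refine Finset.sum_le_sum fun x _ => ?_
      have hS : ∀ S, gr x S = gr x0 S0 → S = S0 := fun S h => by
        rw [← gr_fst x S, h, gr_fst]
      calc (∑ S ∈ P, if gr x S = gr x0 S0 then (1 : ℝ) else 0)
          ≤ ∑ S ∈ P, if S = S0 then (if ∀ i ∈ S0, x i = x0 i then (1 : ℝ) else 0) else 0 := by
            refine Finset.sum_le_sum fun S _ => ?_
            by_cases h : gr x S = gr x0 S0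
            · have e := hS S h
              subst e
              rw [if_pos h, if_pos rfl, if_pos (gr_eq x x0 S h)]
            · rw [if_neg h]; split_ifs <;> norm_num
        _ ≤ _ := by
            rw [Finset.sum_ite_eq' P S0, if_pos hS0]
    · push Not at hex
      have : D T = 0 := by
        simp only [hDD]
        rw [Finset.sum_eq_zero, zero_div]
        intro x hx
        exact Finset.sum_eq_zero fun S hS => if_neg (hex x hx S hS)
      rw [this]; positivity
  calc ∑ T ∈ (univ : Finset (Fin n × Fin m)).powerset, K ^ T.card * d T ^ 2
      ≤ ∑ T : Finset (Fin n × Fin m), (K * p) ^ T.card * D T := by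
        rw [Finset.powerset_univ]
        refine Finset.sum_le_sum fun T _ => ?_
        rw [mul_pow K p, mul_assoc (K ^ T.card)]
        refine mul_le_mul_of_nonneg_left ?_ (pow_nonneg hK0 _)
        rw [← sq_abs, sq]
        exact mul_le_mul ((hdD T).trans (hDp T)) (hdD T) (abs_nonneg _) (pow_nonneg hp _)
    _ = ∑ S ∈ P, (K * p) ^ S.card := by
        simp only [hDD, ← mul_div_assoc, ← Finset.sum_div, Finset.mul_sum]
        rw [div_eq_iff hc.ne', Finset.sum_comm, mul_comm _ (X.card : ℝ), ← nsmul_eq_mul, ← Finset.sum_const]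
        refine Finset.sum_congr rfl fun x _ => ?_
        rw [Finset.sum_comm]
        refine Finset.sum_congr rfl fun S _ => ?_
        simp [gr_card]
    _ = (1 + K * p) ^ n - 1 := by
        have := Finset.add_sum_erase (univ : Finset (Finset (Fin n)))
          (fun S => (K * p) ^ S.card) (mem_univ ∅)
        have h2 : ∑ S : Finset (Fin n), (K * p) ^ S.card = (1 + K * p) ^ n := by
          have h3 := Finset.prod_one_add (f := fun _ : Fin n => K * p) (s := univ)
          simpa using h3.symm
        rw [h2] at this
        rw [← this, Finset.card_empty, pow_zero]
        ring

/-- Average over Y. -/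
lemma avg {n m : ℕ} (X : Finset (Fin n → Fin m)) (hX : X.Nonempty) (p : ℝ) (hp : 0 ≤ p)
    (hd : ∀ I : Finset (Fin n), I.Nonempty → ∀ α : Fin n → Fin m,
        ((X.filter fun x => ∀ i ∈ I, x i = α i).card : ℝ) ≤ X.card * p ^ I.card)
    (Y : Finset (Fin n → Fin m → Bool)) (r : ℕ) (hr : r ≠ 0)
    (hY : (2 : ℝ) ^ (n * m) ≤ 2 ^ r * Y.card)
    (ε : ℝ) (hε : 0 ≤ ε) (hW : 2 * ((1 + 4 * (r : ℝ) ^ 2 * p) ^ n - 1) ≤ ε ^ 2)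
    (σ : (Fin n → Fin m) → ℝ) (hσ : ∀ x, |σ x| ≤ 1) (z : Fin n → Bool) :
    ∑ y ∈ Y, |∑ x ∈ X, σ x * ((if ∀ i, y i (x i) = z i then (2 : ℝ) ^ n else 0) - 1)|
      ≤ ε * X.card * Y.card := by
  have hc : (0 : ℝ) < X.card := by exact_mod_cast hX.card_pos
  have hm := moment X hX p hp hd σ hσ z r hr
  set F : (Fin n → Fin m → Bool) → ℝ := fun y =>
    (∑ x ∈ X, σ x * ((if ∀ i, y i (x i) = z i then (2 : ℝ) ^ n else 0) - 1)) with hFdef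
  set W := (1 + 4 * (r : ℝ) ^ 2 * p) ^ n - 1 with hWdef
  have hW0 : 0 ≤ W := by
    have : (1 : ℝ) ≤ (1 + 4 * (r : ℝ) ^ 2 * p) ^ n := one_le_pow₀ (by
      have : 0 ≤ 4 * (r : ℝ) ^ 2 * p := by positivity
      linarith)
    linarith
  have hYc : (0 : ℝ) < Y.card := by
    have : (0 : ℝ) < 2 ^ r * Y.card := lt_of_lt_of_le (by positivity) hY
    exact pos_of_mul_pos_right this (by positivity)
  have h1 : (∑ y ∈ Y, |F y / X.card|) ^ (2 * r) ≤ (ε * Y.card) ^ (2 * r) := by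
    obtain ⟨k, hk⟩ : ∃ k, 2 * r = k + 1 := ⟨2 * r - 1, by omega⟩
    calc (∑ y ∈ Y, |F y / X.card|) ^ (2 * r)
        ≤ (Y.card : ℝ) ^ k * ∑ y ∈ Y, |F y / X.card| ^ (2 * r) := by
          rw [hk]
          have := pow_sum_div_card_le_sum_pow (s := Y) (f := fun y => |F y / X.card|)
            (fun y _ => abs_nonneg _) k
          rwa [div_le_iff₀' (by positivity)] at this
      _ ≤ (Y.card : ℝ) ^ k * (2 ^ r * Y.card * W ^ r) := by
          refine mul_le_mul_of_nonneg_left ?_ (by positivity)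
          calc ∑ y ∈ Y, |F y / X.card| ^ (2 * r) ≤ ∑ y, |F y / X.card| ^ (2 * r) :=
                Finset.sum_le_univ_sum_of_nonneg fun y => by positivity
            _ = ∑ y, (F y / X.card) ^ (2 * r) :=
                Finset.sum_congr rfl fun y _ => (Even.pow_abs (even_two_mul r) _)
            _ ≤ 2 ^ (n * m) * W ^ r := hm
            _ ≤ _ := mul_le_mul_of_nonneg_right hY (by positivity)
      _ = (Y.card : ℝ) ^ (2 * r) * (2 * W) ^ r := by rw [hk, mul_pow]; ring
      _ ≤ (Y.card : ℝ) ^ (2 * r) * (ε ^ 2) ^ r := by gcongr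
      _ = _ := by rw [mul_pow, ← pow_mul, mul_comm]
  have h2 := (pow_le_pow_iff_left₀ (Finset.sum_nonneg fun y _ => abs_nonneg _)
    (by positivity) (by omega)).1 h1
  simp only [abs_div, abs_of_pos hc, ← Finset.sum_div] at h2
  rw [div_le_iff₀ hc] at h2
  linarith

lemma core {n m : ℕ} (X : Finset (Fin n → Fin m)) (hX : X.Nonempty) (p : ℝ) (hp : 0 ≤ p)
    (hd : ∀ I : Finset (Fin n), I.Nonempty → ∀ α : Fin n → Fin m,
        ((X.filter fun x => ∀ i ∈ I, x i = α i).card : ℝ) ≤ X.card * p ^ I.card)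
    (Y : Finset (Fin n → Fin m → Bool)) (hYn : Y.Nonempty) (r : ℕ) (hr : r ≠ 0)
    (hY : (2 : ℝ) ^ (n * m) ≤ 2 ^ r * Y.card)
    (ε : ℝ) (hε : 0 ≤ ε) (hε2 : ε ≤ 1 / 2)
    (hW : 2 * ((1 + 4 * (r : ℝ) ^ 2 * p) ^ n - 1) ≤ ε ^ 2) (z : Fin n → Bool) :
    (((X ×ˢ Y).filter fun p => ∀ i, p.2 i (p.1 i) = z i).Nonempty) ∧
        ((1 / 2) * ∑ x : Fin n → Fin m,
            |(((X ×ˢ Y).filter fun p => (∀ i, p.2 i (p.1 i) = z i) ∧ p.1 = x).card : ℝ) /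
                (((X ×ˢ Y).filter fun p => ∀ i, p.2 i (p.1 i) = z i).card : ℝ) -
              (if x ∈ X then 1 / (X.card : ℝ) else 0)| ≤ 2 * ε) ∧
        ((1 / 2) * ∑ y : Fin n → Fin m → Bool,
            |(((X ×ˢ Y).filter fun p => (∀ i, p.2 i (p.1 i) = z i) ∧ p.2 = y).card : ℝ) /
                (((X ×ˢ Y).filter fun p => ∀ i, p.2 i (p.1 i) = z i).card : ℝ) -
              (if y ∈ Y then 1 / (Y.card : ℝ) else 0)| ≤ 2 * ε) := by
  have hc : (0 : ℝ) < X.card := by exact_mod_cast hX.card_pos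
  have hcY : (0 : ℝ) < Y.card := by exact_mod_cast hYn.card_pos
  set R : (Fin n → Fin m) → (Fin n → Fin m → Bool) → ℝ := fun x y =>
    if ∀ i, y i (x i) = z i then (1 : ℝ) else 0 with hR
  set B : (Fin n → Fin m) → (Fin n → Fin m → Bool) → ℝ := fun x y =>
    (if ∀ i, y i (x i) = z i then (2 : ℝ) ^ n else 0) - 1 with hB
  have hBR : ∀ x y, B x y = 2 ^ n * R x y - 1 := by
    intro x y
    simp only [hB, hR]
    split_ifs <;> ring
  -- the two averages
  have hy : ∑ y ∈ Y, |∑ x ∈ X, B x y| ≤ ε * X.card * Y.card := by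
    have := avg X hX p hp hd Y r hr hY ε hε hW (fun _ => 1) (by simp) z
    simpa only [one_mul] using this
  have hx : ∑ x ∈ X, |∑ y ∈ Y, B x y| ≤ ε * X.card * Y.card := by
    set σ : (Fin n → Fin m) → ℝ := fun x => if 0 ≤ ∑ y ∈ Y, B x y then 1 else -1 with hσ
    have := avg X hX p hp hd Y r hr hY ε hε hW σ
      (fun x => by simp only [hσ]; split_ifs <;> simp) z
    refine le_trans ?_ this
    calc ∑ x ∈ X, |∑ y ∈ Y, B x y| = ∑ x ∈ X, σ x * ∑ y ∈ Y, B x y := by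
          refine Finset.sum_congr rfl fun x _ => ?_
          simp only [hσ]
          split_ifs with h
          · rw [abs_of_nonneg h, one_mul]
          · rw [abs_of_neg (not_le.1 h), neg_one_mul]
      _ = ∑ y ∈ Y, ∑ x ∈ X, σ x * B x y := by
          simp only [Finset.mul_sum]
          rw [Finset.sum_comm]
      _ ≤ _ := Finset.sum_le_sum fun y _ => le_abs_self _
  -- counts
  have hT : (((X ×ˢ Y).filter fun p => ∀ i, p.2 i (p.1 i) = z i).card : ℝ)
      = ∑ x ∈ X, ∑ y ∈ Y, R x y := by
    rw [Finset.card_filter, Finset.sum_product]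
    push_cast
    rfl
  have hNx : ∀ x, (((X ×ˢ Y).filter fun p => (∀ i, p.2 i (p.1 i) = z i) ∧ p.1 = x).card : ℝ)
      = if x ∈ X then ∑ y ∈ Y, R x y else 0 := by
    intro x
    rw [Finset.card_filter, Finset.sum_product]
    push_cast
    have : ∀ x' ∈ X, (∑ y ∈ Y, if (∀ i, y i (x' i) = z i) ∧ x' = x then (1 : ℝ) else 0)
        = if x' = x then ∑ y ∈ Y, R x' y else 0 := by
      intro x' _
      by_cases h : x' = x <;> simp [h, hR]
    rw [Finset.sum_congr rfl this, Finset.sum_ite_eq']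
  have hNy : ∀ y, (((X ×ˢ Y).filter fun p => (∀ i, p.2 i (p.1 i) = z i) ∧ p.2 = y).card : ℝ)
      = if y ∈ Y then ∑ x ∈ X, R x y else 0 := by
    intro y
    rw [Finset.card_filter, Finset.sum_product_right]
    push_cast
    have : ∀ y' ∈ Y, (∑ x ∈ X, if (∀ i, y' i (x i) = z i) ∧ y' = y then (1 : ℝ) else 0)
        = if y' = y then ∑ x ∈ X, R x y' else 0 := by
      intro y' _
      by_cases h : y' = y <;> simp [h, hR]
    rw [Finset.sum_congr rfl this, Finset.sum_ite_eq']
  have h2n : (0 : ℝ) < 2 ^ n := by positivity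
  have tx := tv X hX (fun x => ∑ y ∈ Y, R x y) (Y.card / 2 ^ n) ε (by positivity) hε2 (by
    have : ∀ x ∈ X, |(∑ y ∈ Y, R x y) / ((Y.card : ℝ) / 2 ^ n) - 1|
        = |∑ y ∈ Y, B x y| / Y.card := by
      intro x _
      rw [← abs_of_pos hcY, ← abs_div, abs_of_pos hcY]
      congr 1
      simp only [hBR, Finset.sum_sub_distrib, ← Finset.mul_sum, Finset.sum_const, nsmul_eq_mul]
      field_simp
    rw [Finset.sum_congr rfl this, ← Finset.sum_div, div_le_iff₀ hcY]
    exact hx)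
  have ty := tv Y hYn (fun y => ∑ x ∈ X, R x y) (X.card / 2 ^ n) ε (by positivity) hε2 (by
    have : ∀ y ∈ Y, |(∑ x ∈ X, R x y) / ((X.card : ℝ) / 2 ^ n) - 1|
        = |∑ x ∈ X, B x y| / X.card := by
      intro y _
      rw [← abs_of_pos hc, ← abs_div, abs_of_pos hc]
      congr 1
      simp only [hBR, Finset.sum_sub_distrib, ← Finset.mul_sum, Finset.sum_const, nsmul_eq_mul]
      field_simp
    rw [Finset.sum_congr rfl this, ← Finset.sum_div, div_le_iff₀ hc]
    linarith)
  refine ⟨?_, ?_, ?_⟩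
  · have := tx.1
    rw [← hT] at this
    exact Finset.card_pos.1 (by exact_mod_cast this)
  · refine le_trans (le_of_eq ?_) tx.2
    congr 1
    rw [hT]
    symm
    refine Finset.sum_subset_zero_on_sdiff (Finset.subset_univ X) ?_ ?_
    · intro x hx
      have hx' : x ∉ X := by simpa using hx
      rw [hNx, if_neg hx', if_neg hx']; simp
    · intro x hx
      rw [hNx, if_pos hx, if_pos hx]
  · refine le_trans (le_of_eq ?_) ty.2
    congr 1
    rw [hT, Finset.sum_comm]
    symm
    refine Finset.sum_subset_zero_on_sdiff (Finset.subset_univ Y) ?_ ?_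
    · intro y hy
      have hy' : y ∉ Y := by simpa using hy
      rw [hNy, if_neg hy', if_neg hy']; simp
    · intro y hy
      rw [hNy, if_pos hy, if_pos hy]

lemma one_add_pow_bound (n : ℕ) (q : ℝ) (hq : 0 ≤ q) (h : n * q ≤ 1) :
    (1 + q) ^ n - 1 ≤ 2 * (n * q) := by
  have h1 : (1 + q) ^ n ≤ Real.exp (n * q) := by
    rw [Real.exp_nat_mul]
    exact pow_le_pow_left₀ (by linarith) (by linarith [Real.add_one_le_exp q]) n
  have h0 : 0 ≤ n * q := by positivity
  have h2 := Real.abs_exp_sub_one_le (x := n * q) (by rwa [abs_of_nonneg h0])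
  rw [abs_of_nonneg h0] at h2
  linarith [le_abs_self (Real.exp (n * q) - 1)]

lemma num (n : ℕ) (hn : 2 ≤ n) :
    2 * ((1 + 4 * (((n ^ 3 : ℕ) : ℝ)) ^ 2 * ((n : ℝ) ^ 200)⁻¹) ^ n - 1)
      ≤ (1 / (2 * (n : ℝ) ^ 2)) ^ 2 := by
  have hn' : (2 : ℝ) ≤ n := by exact_mod_cast hn
  have hn0 : (0 : ℝ) < n := by linarith
  set q := 4 * (((n ^ 3 : ℕ) : ℝ)) ^ 2 * ((n : ℝ) ^ 200)⁻¹ with hq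
  have hq0 : 0 ≤ q := by positivity
  have h64 : (64 : ℝ) ≤ (n : ℝ) ^ 6 := by
    calc (64 : ℝ) = 2 ^ 6 := by norm_num
      _ ≤ _ := pow_le_pow_left₀ (by norm_num) hn' 6
  have h17 : (n : ℝ) ^ 17 ≤ (n : ℝ) ^ 200 := pow_le_pow_right₀ (by linarith) (by norm_num)
  have hnq : n * q ≤ 1 / (16 * (n : ℝ) ^ 4) := by
    rw [hq, le_div_iff₀ (by positivity)]
    push_cast
    rw [show (n : ℝ) * (4 * ((n : ℝ) ^ 3) ^ 2 * ((n : ℝ) ^ 200)⁻¹) * (16 * (n : ℝ) ^ 4)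
      = (64 * (n : ℝ) ^ 11) / (n : ℝ) ^ 200 by rw [div_eq_mul_inv]; ring]
    rw [div_le_one (by positivity)]
    refine le_trans ?_ h17
    calc 64 * (n : ℝ) ^ 11 ≤ (n : ℝ) ^ 6 * (n : ℝ) ^ 11 :=
          mul_le_mul_of_nonneg_right h64 (by positivity)
      _ = _ := by ring
  have hle : 1 / (16 * (n : ℝ) ^ 4) ≤ 1 := by
    rw [div_le_one (by positivity)]
    have : (1 : ℝ) ≤ (n : ℝ) ^ 4 := one_le_pow₀ (by linarith)
    linarith
  have := one_add_pow_bound n q hq0 (hnq.trans hle)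
  have e : (1 / (2 * (n : ℝ) ^ 2)) ^ 2 = 4 * (1 / (16 * (n : ℝ) ^ 4)) := by
    field_simp; norm_num
  rw [e]
  linarith

lemma dens (n s : ℕ) (hn : 2 ≤ n) :
    ((n ^ 256 : ℕ) : ℝ) ^ (-(0.9 * (s : ℝ))) ≤ (((n : ℝ) ^ 200)⁻¹) ^ s := by
  have hn' : (2 : ℝ) ≤ n := by exact_mod_cast hn
  have hn0 : (0 : ℝ) ≤ n := by linarith
  have e1 : ((n ^ 256 : ℕ) : ℝ) = (n : ℝ) ^ (256 : ℝ) := by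
    push_cast
    rw [← Real.rpow_natCast]; norm_num
  have e2 : (((n : ℝ) ^ 200)⁻¹) ^ s = (n : ℝ) ^ (-(200 * (s : ℝ))) := by
    rw [inv_pow, ← pow_mul, Real.rpow_neg hn0, ← Real.rpow_natCast]
    push_cast; rfl
  rw [e1, e2, ← Real.rpow_mul hn0]
  refine Real.rpow_le_rpow_of_exponent_le (by linarith) ?_
  have : (0 : ℝ) ≤ s := by positivity
  linarith

lemma defi (n m c : ℕ) (hc : 0 < c)
    (h : (n : ℝ) * (m : ℝ) - Real.logb 2 (c : ℝ) ≤ (n : ℝ) ^ 3) :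
    (2 : ℝ) ^ (n * m) ≤ 2 ^ (n ^ 3) * c := by
  have hc' : (0 : ℝ) < c := by exact_mod_cast hc
  have : (c : ℝ) = (2 : ℝ) ^ (Real.logb 2 (c : ℝ)) :=
    (Real.rpow_logb (by norm_num) (by norm_num) hc').symm
  rw [this, ← Real.rpow_natCast, ← Real.rpow_natCast, ← Real.rpow_add (by norm_num)]
  refine Real.rpow_le_rpow_of_exponent_le (by norm_num) ?_
  push_cast
  linarith

end UMS

/-- **Uniform marginals lemma (simple version).** There exists `N` such that for every
`n ≥ N` (with `m = n^256`): if `X ⊆ [m]^n` is nonempty and `0.9`-dense, and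
`Y ⊆ ({0,1}^m)^n` is nonempty with deficiency `nm - log₂|Y| ≤ n³`, then for every
`z ∈ {0,1}^n` the slice `G⁻¹(z) ∩ (X × Y)` is nonempty and the marginals of the uniform
distribution on it are `1/n²`-close in total variation to uniform on `X` and `Y`. -/
theorem uniform_marginals_simple :
    ∃ N : ℕ, ∀ n : ℕ, N ≤ n →
    ∀ (X : Finset (Fin n → Fin (n ^ 256))) (Y : Finset (Fin n → Fin (n ^ 256) → Bool)),
      X.Nonempty → Y.Nonempty →
      -- X is 0.9-dense
      (∀ I : Finset (Fin n), I.Nonempty → ∀ α : Fin n → Fin (n ^ 256),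
        ((X.filter fun x => ∀ i ∈ I, x i = α i).card : ℝ) ≤
          (X.card : ℝ) * ((n ^ 256 : ℕ) : ℝ) ^ (-(0.9 * (I.card : ℝ)))) →
      -- deficiency of Y at most n³
      ((n : ℝ) * ((n ^ 256 : ℕ) : ℝ) - Real.logb 2 (Y.card : ℝ) ≤ (n : ℝ) ^ 3) →
      ∀ z : Fin n → Bool,
        -- G⁻¹(z) ∩ (X × Y) is nonempty
        (((X ×ˢ Y).filter fun p => ∀ i, p.2 i (p.1 i) = z i).Nonempty) ∧
        -- the first marginal is 1/n²-close to uniform on X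
        ((1 / 2) * ∑ x : Fin n → Fin (n ^ 256),
            |(((X ×ˢ Y).filter fun p => (∀ i, p.2 i (p.1 i) = z i) ∧ p.1 = x).card : ℝ) /
                (((X ×ˢ Y).filter fun p => ∀ i, p.2 i (p.1 i) = z i).card : ℝ) -
              (if x ∈ X then 1 / (X.card : ℝ) else 0)| ≤ 1 / (n : ℝ) ^ 2) ∧
        -- the second marginal is 1/n²-close to uniform on Y
        ((1 / 2) * ∑ y : Fin n → Fin (n ^ 256) → Bool,
            |(((X ×ˢ Y).filter fun p => (∀ i, p.2 i (p.1 i) = z i) ∧ p.2 = y).card : ℝ) /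
                (((X ×ˢ Y).filter fun p => ∀ i, p.2 i (p.1 i) = z i).card : ℝ) -
              (if y ∈ Y then 1 / (Y.card : ℝ) else 0)| ≤ 1 / (n : ℝ) ^ 2) := by
  refine ⟨2, fun n hn X Y hX hY hd hdef z => ?_⟩
  have hn' : (2 : ℝ) ≤ n := by exact_mod_cast hn
  have hn2 : (1 : ℝ) ≤ (n : ℝ) ^ 2 := one_le_pow₀ (by linarith)
  have key := UMS.core X hX ((n : ℝ) ^ 200)⁻¹ (by positivity)
    (fun I hI α => (hd I hI α).trans
      (mul_le_mul_of_nonneg_left (UMS.dens n I.card hn) (Nat.cast_nonneg _)))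
    Y hY (n ^ 3) (pow_ne_zero 3 (by omega))
    (UMS.defi n (n ^ 256) Y.card hY.card_pos hdef)
    (1 / (2 * (n : ℝ) ^ 2)) (by positivity)
    (one_div_le_one_div_of_le (by norm_num) (by linarith)) (UMS.num n hn) z
  have e : 2 * (1 / (2 * (n : ℝ) ^ 2)) = 1 / (n : ℝ) ^ 2 := by field_simp
  rw [e] at key
  exact key
end

section
/- Uniform marginals lemma (general version): There exists N such that for every n ≥ N the following holds with m = n^256. Let ρ ∈ {0,1,*}^n be a partial assignment and let X × Y ⊆ [m]^n × ({0,1}^m)^n be a ρ-structured rectangle with nm − log₂|Y| ≤ n³. Then for every z ∈ {0,1}^n that agrees with ρ on the fixed positions fix(ρ), the set G^{-1}(z) ∩ (X × Y) is nonempty, and the uniform distribution on G^{-1}(z) ∩ (X × Y) has both of its marginal distributions 1/n²-close in total variation distance to the uniform distribution on X and to the uniform distribution on Y, respectively. -/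
open Finset

/-- product of `±1` agreement signs over the coordinates in `S` -/
def agreeSign {V α : Type} (z : V → Bool) (S : Finset V) (x : V → α) (y : V → α → Bool) : ℝ :=
  ∏ i ∈ S, if y i (x i) = z i then (1 : ℝ) else -1

lemma agreeSign_abs {V α : Type} (z : V → Bool) (S : Finset V) (x : V → α) (y : V → α → Bool) :
    |agreeSign z S x y| = 1 := by
  unfold agreeSign
  rw [Finset.abs_prod]
  apply Finset.prod_eq_one
  intro i _
  split_ifs <;> simp

lemma flip_sum_zero {V α : Type} [Fintype V] [DecidableEq V] [Fintype α] [DecidableEq α]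
    (z : V → Bool) (S : Finset V) (K : ℕ) (t : Fin K → V → α) (i₀ : V) (hi : i₀ ∈ S) (j₀ : Fin K)
    (hu : ∀ j, j ≠ j₀ → t j i₀ ≠ t j₀ i₀) :
    ∑ y : V → α → Bool, ∏ j, agreeSign z S (t j) y = 0 := by
  let e : (V → α → Bool) → (V → α → Bool) := fun y =>
    Function.update y i₀ (Function.update (y i₀) (t j₀ i₀) (!(y i₀ (t j₀ i₀))))
  have he : Function.Involutive e := by
    intro y
    simp [e]
  have key : ∀ y, ∏ j, agreeSign z S (t j) (e y) = - ∏ j, agreeSign z S (t j) y := by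
    intro y
    rw [← Finset.mul_prod_erase _ _ (Finset.mem_univ j₀),
      ← Finset.mul_prod_erase _ (fun j => agreeSign z S (t j) y) (Finset.mem_univ j₀), ← neg_mul]
    congr 1
    · unfold agreeSign
      rw [← Finset.mul_prod_erase _ _ hi,
        ← Finset.mul_prod_erase _ (fun i => if y i (t j₀ i) = z i then (1:ℝ) else -1) hi, ← neg_mul]
      congr 1
      · simp only [e, Function.update_self]
        cases y i₀ (t j₀ i₀) <;> cases z i₀ <;> simp
      · apply Finset.prod_congr rfl
        intro i hi'
        have : i ≠ i₀ := Finset.ne_of_mem_erase hi'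
        simp [e, Function.update_of_ne this]
    · apply Finset.prod_congr rfl
      intro j hj
      have hj' := hu j (Finset.ne_of_mem_erase hj)
      unfold agreeSign
      apply Finset.prod_congr rfl
      intro i _
      by_cases h : i = i₀
      · subst h
        simp [e, Function.update_of_ne hj']
      · simp [e, Function.update_of_ne h]
  have h1 : ∑ y, ∏ j, agreeSign z S (t j) (e y) = ∑ y : V → α → Bool, ∏ j, agreeSign z S (t j) y :=
    Fintype.sum_equiv he.toPerm _ _ (fun y => rfl)
  simp only [key, Finset.sum_neg_distrib] at h1
  linarith

/-- one step of the sequential exposure -/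
lemma step_bound {V α ι : Type} [DecidableEq V] [DecidableEq α] [Fintype ι]
    (c : ι → V → α) (F : Finset V) (M : ℝ) (hM : 0 < M)
    (hd : ∀ T : Finset V, T ⊆ F → ∀ β : V → α,
      ∑ a : ι, (if ∀ i ∈ T, c a i = β i then (1:ℝ) else 0) ≤ Fintype.card ι * (M⁻¹) ^ T.card)
    (w : ℝ) (hw : 0 ≤ w) (K : ℕ) (t : Fin K → V → α) (S : Finset V) :
    S ⊆ F → ∀ U ⊆ F, Disjoint S U → ∀ β : V → α,
    ∑ a : ι, (if ∀ i ∈ U, c a i = β i then (1:ℝ) else 0) *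
      ∏ i ∈ S, (1 + w * ∑ j, if t j i = c a i then (1:ℝ) else 0)
      ≤ Fintype.card ι * (M⁻¹) ^ U.card * (1 + w * K * M⁻¹) ^ S.card := by
  induction S using Finset.induction_on with
  | empty =>
    intro _ U hU _ β
    simpa using hd U hU β
  | insert i₀ S hi ih =>
    intro hS U hU hdis β
    have hS' : S ⊆ F := (Finset.subset_insert _ _).trans hS
    have hi₀F : i₀ ∈ F := hS (Finset.mem_insert_self _ _)
    rw [Finset.disjoint_insert_left] at hdis
    obtain ⟨hiU, hdis⟩ := hdis
    have h0 := ih hS' U hU hdis β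
    have hj : ∀ j : Fin K, ∑ a : ι, (if ∀ i ∈ insert i₀ U, c a i = (Function.update β i₀ (t j i₀)) i
        then (1:ℝ) else 0) *
      ∏ i ∈ S, (1 + w * ∑ j, if t j i = c a i then (1:ℝ) else 0)
      ≤ Fintype.card ι * (M⁻¹) ^ (U.card + 1) * (1 + w * K * M⁻¹) ^ S.card := by
      intro j
      have := ih hS' (insert i₀ U) (Finset.insert_subset hi₀F hU)
        (by rw [Finset.disjoint_insert_right]; exact ⟨hi, hdis⟩) (Function.update β i₀ (t j i₀))
      rwa [Finset.card_insert_of_notMem hiU] at this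
    have hsum := Finset.sum_le_sum (fun j (_ : j ∈ (Finset.univ : Finset (Fin K))) => hj j)
    have hcond : ∀ (a : ι) (j : Fin K),
        (if ∀ i ∈ insert i₀ U, c a i = (Function.update β i₀ (t j i₀)) i then (1:ℝ) else 0)
        = (if ∀ i ∈ U, c a i = β i then (1:ℝ) else 0) * (if t j i₀ = c a i₀ then (1:ℝ) else 0) := by
      intro a j
      have : (∀ i ∈ insert i₀ U, c a i = (Function.update β i₀ (t j i₀)) i) ↔
          ((∀ i ∈ U, c a i = β i) ∧ t j i₀ = c a i₀) := by
        rw [Finset.forall_mem_insert, Function.update_self, and_comm, eq_comm]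
        apply and_congr_left'
        apply forall₂_congr
        intro i hiU'
        rw [Function.update_of_ne (fun h : i = i₀ => hiU (h ▸ hiU'))]
      simp only [this, ite_and]
      split_ifs <;> simp
    simp only [hcond] at hsum
    rw [Finset.sum_comm] at hsum
    simp only [Finset.sum_const, Finset.card_univ, Fintype.card_fin, nsmul_eq_mul] at hsum
    rw [Finset.card_insert_of_notMem hi]
    have hexp : ∀ a : ι, (if ∀ i ∈ U, c a i = β i then (1:ℝ) else 0) *
      ∏ i ∈ insert i₀ S, (1 + w * ∑ j, if t j i = c a i then (1:ℝ) else 0)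
      = (if ∀ i ∈ U, c a i = β i then (1:ℝ) else 0) *
        ∏ i ∈ S, (1 + w * ∑ j, if t j i = c a i then (1:ℝ) else 0)
        + w * ∑ j, (if ∀ i ∈ U, c a i = β i then (1:ℝ) else 0) * (if t j i₀ = c a i₀ then (1:ℝ) else 0)
          * ∏ i ∈ S, (1 + w * ∑ j, if t j i = c a i then (1:ℝ) else 0) := by
      intro a
      rw [Finset.prod_insert hi, ← Finset.sum_mul, ← Finset.mul_sum]
      ring
    simp only [hexp, Finset.sum_add_distrib, ← Finset.mul_sum]
    have h2 := mul_le_mul_of_nonneg_left hsum hw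
    refine (add_le_add h0 h2).trans (le_of_eq ?_)
    ring

/-- weight of a tuple: a factor `w` for every coordinate that is repeated later -/
noncomputable def tupWeight {V α : Type} [DecidableEq α] (w : ℝ) (S : Finset V) (K : ℕ) (t : Fin K → V → α) : ℝ :=
  ∏ j, ∏ i ∈ S, if ∃ j', j < j' ∧ t j' i = t j i then w else 1

lemma tuple_bound {V α ι : Type} [DecidableEq V] [DecidableEq α] [Fintype ι]
    (c : ι → V → α) (F : Finset V) (M : ℝ) (hM : 0 < M)
    (hd : ∀ T : Finset V, T ⊆ F → ∀ β : V → α,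
      ∑ a : ι, (if ∀ i ∈ T, c a i = β i then (1:ℝ) else 0) ≤ Fintype.card ι * (M⁻¹) ^ T.card)
    (w : ℝ) (hw : 0 ≤ w) (S : Finset V) (hS : S ⊆ F) (K₀ : ℕ) (hK₀ : w * K₀ * M⁻¹ ≤ 1) (K : ℕ) :
    K ≤ K₀ → ∑ t : Fin K → ι, tupWeight w S K (fun j => c (t j))
      ≤ (Fintype.card ι * 2 ^ S.card) ^ K := by
  induction K with
  | zero => intro _; simp [tupWeight]
  | succ K ih =>
    intro hK
    have ih' := ih (by omega)
    rw [← (Fin.consEquiv (fun _ : Fin (K+1) => ι)).sum_comp, Fintype.sum_prod_type, Finset.sum_comm]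
    have hw1 : ∀ (t : Fin K → ι) (a : ι),
        tupWeight w S (K+1) (fun j => c ((Fin.consEquiv (fun _ : Fin (K+1) => ι)) (a, t) j))
        ≤ tupWeight w S K (fun j => c (t j)) *
          ∏ i ∈ S, (1 + w * ∑ j, if c (t j) i = c a i then (1:ℝ) else 0) := by
      intro t a
      unfold tupWeight
      rw [Fin.prod_univ_succ, mul_comm]
      apply mul_le_mul
      · apply le_of_eq
        apply Finset.prod_congr rfl
        intro j _
        apply Finset.prod_congr rfl
        intro i _
        simp [Fin.exists_fin_succ, Fin.consEquiv]
      · apply Finset.prod_le_prod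
        · intro i _; split_ifs <;> positivity
        · intro i _
          have hnn : ∀ j ∈ (Finset.univ : Finset (Fin K)), 0 ≤ (if c (t j) i = c a i then (1:ℝ) else 0) := by
            intro j _; split_ifs <;> norm_num
          have h0 := Finset.sum_nonneg hnn
          split_ifs with h
          · simp only [Fin.exists_fin_succ, Fin.consEquiv] at h
            simp at h
            obtain ⟨j, hj⟩ := h
            have h1 := Finset.single_le_sum hnn (Finset.mem_univ j)
            rw [if_pos hj] at h1
            nlinarith
          · nlinarith [mul_nonneg hw h0]
      · apply Finset.prod_nonneg; intro i _; split_ifs <;> positivity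
      · apply Finset.prod_nonneg; intro j _
        apply Finset.prod_nonneg; intro i _; split_ifs <;> positivity
    have hstep : ∀ t : Fin K → ι, ∑ a : ι, ∏ i ∈ S, (1 + w * ∑ j, if c (t j) i = c a i then (1:ℝ) else 0)
        ≤ Fintype.card ι * 2 ^ S.card := by
      intro t
      rcases isEmpty_or_nonempty ι with h | ⟨⟨a₀⟩⟩
      · simp
      have := step_bound c F M hM hd w hw K (fun j => c (t j)) S hS ∅ (by simp) (by simp) (c a₀)
      simp only [Finset.notMem_empty, false_imp_iff, implies_true, if_true, one_mul,
        Finset.card_empty, pow_zero, mul_one] at this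
      refine this.trans ?_
      have hKK : (K:ℝ) ≤ K₀ := by exact_mod_cast (by omega : K ≤ K₀)
      have : w * K * M⁻¹ ≤ w * K₀ * M⁻¹ := by gcongr
      have : 0 ≤ w * K * M⁻¹ := by positivity
      gcongr
      linarith
    have hWnn : ∀ t : Fin K → ι, 0 ≤ tupWeight w S K (fun j => c (t j)) := by
      intro t
      apply Finset.prod_nonneg; intro j _
      apply Finset.prod_nonneg; intro i _; split_ifs <;> positivity
    calc _ ≤ ∑ t : Fin K → ι, ∑ a : ι, tupWeight w S K (fun j => c (t j)) *
          ∏ i ∈ S, (1 + w * ∑ j, if c (t j) i = c a i then (1:ℝ) else 0) :=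
          Finset.sum_le_sum fun t _ => Finset.sum_le_sum fun a _ => hw1 t a
      _ ≤ ∑ t : Fin K → ι, tupWeight w S K (fun j => c (t j)) * (Fintype.card ι * 2 ^ S.card) := by
          apply Finset.sum_le_sum; intro t _
          rw [← Finset.mul_sum]
          exact mul_le_mul_of_nonneg_left (hstep t) (hWnn t)
      _ ≤ _ := by
          rw [← Finset.sum_mul, pow_succ]
          gcongr

lemma repeat_count {γ : Type} [DecidableEq γ] (q : ℕ) (g : Fin (2*q) → γ)
    (h : ∀ j, ∃ j', j' ≠ j ∧ g j' = g j) :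
    q ≤ (Finset.univ.filter fun j => ∃ j', j < j' ∧ g j' = g j).card := by
  classical
  choose f hf1 hf2 using h
  have hc := Finset.card_filter_add_card_filter_not (s := (Finset.univ : Finset (Fin (2*q))))
    (fun j => ∃ j', j < j' ∧ g j' = g j)
  have : (Finset.univ.filter fun j => ¬ ∃ j', j < j' ∧ g j' = g j).card ≤
      (Finset.univ.filter fun j => ∃ j', j < j' ∧ g j' = g j).card := by
    apply Finset.card_le_card_of_injOn f
    · intro j hj
      simp only [Finset.coe_filter, Finset.mem_univ, true_and, Set.mem_ofPred_eq, not_exists, not_and] at hj ⊢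
      refine ⟨j, ?_, (hf2 j).symm⟩
      rcases lt_trichotomy (f j) j with h | h | h
      · exact h
      · exact absurd h (hf1 j)
      · exact absurd (hf2 j) (hj _ h)
    · intro j hj j' hj' he
      simp only [Finset.coe_filter, Finset.mem_univ, true_and, Set.mem_ofPred_eq, not_exists, not_and] at hj hj'
      have hg : g j = g j' := by rw [← hf2 j, ← hf2 j', he]
      rcases lt_trichotomy j j' with h | h | h
      · exact absurd hg.symm (hj _ h)
      · exact h
      · exact absurd hg (hj' _ h)
  rw [Finset.card_univ, Fintype.card_fin] at hc
  omega

lemma weight_lower {V α : Type} [DecidableEq α] (w : ℝ) (hw : 1 ≤ w) (S : Finset V) (q : ℕ)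
    (t : Fin (2*q) → V → α) (h : ∀ i ∈ S, ∀ j, ∃ j', j' ≠ j ∧ t j' i = t j i) :
    w ^ (q * S.card) ≤ tupWeight w S (2*q) t := by
  unfold tupWeight
  rw [Finset.prod_comm, pow_mul, ← Finset.prod_const]
  apply Finset.prod_le_prod
  · intro i _; positivity
  · intro i hi
    rw [Finset.prod_ite, Finset.prod_const, Finset.prod_const_one, mul_one]
    exact pow_le_pow_right₀ hw (repeat_count q (fun j => t j i) (h i hi))

lemma moment_bound {V α ι : Type} [Fintype V] [DecidableEq V] [Fintype α] [DecidableEq α] [Fintype ι]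
    (c : ι → V → α) (F : Finset V) (M : ℝ) (hM : 0 < M)
    (hd : ∀ T : Finset V, T ⊆ F → ∀ β : V → α,
      ∑ a : ι, (if ∀ i ∈ T, c a i = β i then (1:ℝ) else 0) ≤ Fintype.card ι * (M⁻¹) ^ T.card)
    (z : V → Bool) (s : ι → ℝ) (hs : ∀ a, |s a| ≤ 1)
    (S : Finset V) (hS : S ⊆ F) (q : ℕ) (hq : 0 < q) (hqM : 2 * q ≤ M) :
    ∑ y : V → α → Bool, (∑ a, s a * agreeSign z S (c a) y) ^ (2*q) ≤
      Fintype.card (V → α → Bool) * ((Fintype.card ι : ℝ) ^ (2*q) * (8 * q / M) ^ (q * S.card)) := by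
  set w : ℝ := M / (2*q) with hwdef
  have hq' : (0:ℝ) < q := by exact_mod_cast hq
  have hw1 : 1 ≤ w := by rw [hwdef, le_div_iff₀ (by positivity)]; linarith
  have hw0 : 0 < w := by linarith
  have hT := tuple_bound c F M hM (by intro T hT β; convert hd T hT β) w hw0.le S hS (2*q)
    (by rw [hwdef]; push_cast; apply le_of_eq; field_simp) (2*q) le_rfl
  have hexp : ∀ y : V → α → Bool, (∑ a, s a * agreeSign z S (c a) y) ^ (2*q)
      = ∑ t : Fin (2*q) → ι, (∏ j, s (t j)) * ∏ j, agreeSign z S (c (t j)) y := by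
    intro y
    rw [Fintype.sum_pow]
    simp only [Finset.prod_mul_distrib]
  simp only [hexp]
  rw [Finset.sum_comm]
  simp only [← Finset.mul_sum]
  have hterm : ∀ t : Fin (2*q) → ι,
      (∏ j, s (t j)) * ∑ y : V → α → Bool, ∏ j, agreeSign z S (c (t j)) y ≤
      Fintype.card (V → α → Bool) * ((w ^ (q * S.card))⁻¹ * tupWeight w S (2*q) (fun j => c (t j))) := by
    intro t
    by_cases h : ∀ i ∈ S, ∀ j, ∃ j', j' ≠ j ∧ c (t j') i = c (t j) i
    · have h1 := weight_lower w hw1 S q (fun j => c (t j)) h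
      have h2 : 1 ≤ (w ^ (q * S.card))⁻¹ * tupWeight w S (2*q) (fun j => c (t j)) := by
        rw [inv_mul_eq_div, le_div_iff₀ (by positivity)]; linarith
      have h3 : |∏ j, s (t j)| ≤ 1 := by
        rw [Finset.abs_prod]
        exact Finset.prod_le_one (fun _ _ => abs_nonneg _) (fun _ _ => hs _)
      have h4 : |∑ y : V → α → Bool, ∏ j, agreeSign z S (c (t j)) y| ≤ Fintype.card (V → α → Bool) := by
        refine (Finset.abs_sum_le_sum_abs _ _).trans ?_
        simp only [Finset.abs_prod, agreeSign_abs, Finset.prod_const_one]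
        simp
      refine (le_abs_self _).trans ?_
      rw [abs_mul]
      calc _ ≤ 1 * (Fintype.card (V → α → Bool) : ℝ) := by gcongr
        _ ≤ _ := by rw [one_mul]; exact le_mul_of_one_le_right (by positivity) h2
    · push Not at h
      obtain ⟨i, hi, j, hj⟩ := h
      rw [flip_sum_zero z S (2*q) (fun j => c (t j)) i hi j hj, mul_zero]
      have : 0 ≤ tupWeight w S (2*q) (fun j => c (t j)) := by
        apply Finset.prod_nonneg; intro j _
        apply Finset.prod_nonneg; intro i _; split_ifs <;> positivity
      positivity
  refine (Finset.sum_le_sum fun t _ => hterm t).trans ?_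
  rw [← Finset.mul_sum, ← Finset.mul_sum]
  apply mul_le_mul_of_nonneg_left _ (by positivity)
  refine (mul_le_mul_of_nonneg_left hT (by positivity)).trans (le_of_eq ?_)
  have : (8 * (q:ℝ) / M) = 2^2 * w⁻¹ := by rw [hwdef]; field_simp; norm_num
  rw [this, mul_pow, mul_pow, ← pow_mul, ← pow_mul, inv_pow]
  ring

lemma single_S_bound {V α ι : Type} [Fintype V] [DecidableEq V] [Fintype α] [DecidableEq α] [Fintype ι]
    (c : ι → V → α) (F : Finset V) (M : ℝ) (hM : 0 < M)
    (hd : ∀ T : Finset V, T ⊆ F → ∀ β : V → α,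
      ∑ a : ι, (if ∀ i ∈ T, c a i = β i then (1:ℝ) else 0) ≤ Fintype.card ι * (M⁻¹) ^ T.card)
    (z : V → Bool) (s : ι → ℝ) (hs : ∀ a, |s a| ≤ 1)
    (q : ℕ) (hq : 0 < q) (hqM : 2 * q ≤ M) (δ : ℝ) (hδ : 0 ≤ δ) (hδM : 16 * q / M ≤ δ ^ 2)
    (Y : Finset (V → α → Bool)) (hY : (Fintype.card (V → α → Bool) : ℝ) ≤ 2 ^ q * Y.card)
    (S : Finset V) (hS : S ⊆ F) (hSne : S.Nonempty) :
    ∑ y ∈ Y, |∑ a, s a * agreeSign z S (c a) y| ≤ Fintype.card ι * Y.card * δ ^ S.card := by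
  have hm := moment_bound c F M hM hd z s hs S hS q hq hqM
  have hq' : (0:ℝ) < q := by exact_mod_cast hq
  have hcard : 1 ≤ S.card := hSne.card_pos
  set H : (V → α → Bool) → ℝ := fun y => ∑ a, s a * agreeSign z S (c a) y with hH
  have hsub : ∑ y ∈ Y, |H y| ^ (2*q) ≤ ∑ y, (H y) ^ (2*q) := by
    have : ∀ y, |H y| ^ (2*q) = (H y) ^ (2*q) := fun y => (even_two_mul q).pow_abs _
    simp only [this]
    exact Finset.sum_le_sum_of_subset_of_nonneg (Finset.subset_univ _)
      (fun y _ _ => (even_two_mul q).pow_nonneg _)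
  have hj : (∑ y ∈ Y, |H y|) ^ (2*q) ≤ (Y.card : ℝ) ^ (2*q-1) * ∑ y ∈ Y, |H y| ^ (2*q) := by
    have := pow_sum_le_card_mul_sum_pow (s := Y) (f := fun y => |H y|) (fun y _ => abs_nonneg _) (2*q-1)
    rwa [show 2*q-1+1 = 2*q by omega] at this
  have h1 : (∑ y ∈ Y, |H y|) ^ (2*q) ≤ (Fintype.card ι * Y.card * δ ^ S.card) ^ (2*q) := by
    calc _ ≤ (Y.card : ℝ) ^ (2*q-1) * (Fintype.card (V → α → Bool) *
            ((Fintype.card ι : ℝ) ^ (2*q) * (8 * q / M) ^ (q * S.card))) :=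
          hj.trans (by gcongr; exact hsub.trans hm)
      _ ≤ (Y.card : ℝ) ^ (2*q-1) * ((2 ^ q * Y.card) *
            ((Fintype.card ι : ℝ) ^ (2*q) * (8 * q / M) ^ (q * S.card))) := by gcongr
      _ = ((Y.card : ℝ) ^ (2*q-1) * Y.card) * (Fintype.card ι : ℝ) ^ (2*q) *
            (2 ^ q * (8 * q / M) ^ (q * S.card)) := by ring
      _ ≤ (Y.card : ℝ) ^ (2*q) * (Fintype.card ι : ℝ) ^ (2*q) * (δ ^ 2) ^ (q * S.card) := by
          rw [← pow_succ, show 2*q-1+1 = 2*q by omega]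
          gcongr
          calc (2:ℝ) ^ q * (8 * q / M) ^ (q * S.card)
              ≤ 2 ^ (q * S.card) * (8 * q / M) ^ (q * S.card) := by
                gcongr
                · norm_num
                · exact Nat.le_mul_of_pos_right _ hcard
            _ = (16 * q / M) ^ (q * S.card) := by rw [← mul_pow]; congr 1; ring
            _ ≤ _ := by gcongr
      _ = _ := by
          rw [mul_pow, mul_pow, ← pow_mul, ← pow_mul]
          ring
  exact le_of_pow_le_pow_left₀ (by omega) (by positivity) h1

lemma sum_pow_bound (δ : ℝ) {V : Type} [DecidableEq V] (F : Finset V) :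
    ∑ S ∈ F.powerset.erase ∅, δ ^ S.card = (1 + δ) ^ F.card - 1 := by
  have h := Finset.prod_one_add (f := fun _ : V => δ) F
  simp only [Finset.prod_const] at h
  rw [h, ← Finset.add_sum_erase _ _ (Finset.empty_mem_powerset F)]
  simp

/-- the discrepancy bound -/
lemma disc_bound {V α ι : Type} [Fintype V] [DecidableEq V] [Fintype α] [DecidableEq α] [Fintype ι]
    (c : ι → V → α) (F : Finset V) (M : ℝ) (hM : 0 < M)
    (hd : ∀ T : Finset V, T ⊆ F → ∀ β : V → α,
      ∑ a : ι, (if ∀ i ∈ T, c a i = β i then (1:ℝ) else 0) ≤ Fintype.card ι * (M⁻¹) ^ T.card)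
    (z : V → Bool) (s : ι → ℝ) (hs : ∀ a, |s a| ≤ 1)
    (q : ℕ) (hq : 0 < q) (hqM : 2 * q ≤ M) (δ : ℝ) (hδ : 0 ≤ δ) (hδM : 16 * q / M ≤ δ ^ 2)
    (Y : Finset (V → α → Bool)) (hY : (Fintype.card (V → α → Bool) : ℝ) ≤ 2 ^ q * Y.card) :
    ∑ y ∈ Y, |∑ a, s a * (2 ^ F.card * (if ∀ i ∈ F, y i (c a i) = z i then (1:ℝ) else 0) - 1)|
      ≤ Fintype.card ι * Y.card * ((1 + δ) ^ F.card - 1) := by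
  have hid : ∀ (a : ι) (y : V → α → Bool),
      2 ^ F.card * (if ∀ i ∈ F, y i (c a i) = z i then (1:ℝ) else 0) - 1
      = ∑ S ∈ F.powerset.erase ∅, agreeSign z S (c a) y := by
    intro a y
    have h := Finset.prod_one_add (f := fun i : V => if y i (c a i) = z i then (1:ℝ) else -1) F
    rw [← Finset.add_sum_erase _ _ (Finset.empty_mem_powerset F), Finset.prod_empty] at h
    have h2 : ∏ i ∈ F, (1 + if y i (c a i) = z i then (1:ℝ) else -1) =
        2 ^ F.card * (if ∀ i ∈ F, y i (c a i) = z i then (1:ℝ) else 0) := by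
      split_ifs with hall
      · rw [mul_one, ← Finset.prod_const]
        apply Finset.prod_congr rfl
        intro i hi
        rw [if_pos (hall i hi)]; norm_num
      · push Not at hall
        obtain ⟨i, hi, hne⟩ := hall
        rw [mul_zero]
        apply Finset.prod_eq_zero hi
        rw [if_neg hne]; norm_num
    rw [← h2, h]
    unfold agreeSign
    ring
  simp only [hid]
  calc _ ≤ ∑ y ∈ Y, ∑ S ∈ F.powerset.erase ∅, |∑ a, s a * agreeSign z S (c a) y| := by
        apply Finset.sum_le_sum
        intro y _
        simp only [Finset.mul_sum]
        rw [Finset.sum_comm]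
        exact Finset.abs_sum_le_sum_abs _ _
    _ = ∑ S ∈ F.powerset.erase ∅, ∑ y ∈ Y, |∑ a, s a * agreeSign z S (c a) y| := Finset.sum_comm
    _ ≤ ∑ S ∈ F.powerset.erase ∅, Fintype.card ι * Y.card * δ ^ S.card := by
        apply Finset.sum_le_sum
        intro S hS
        rw [Finset.mem_erase, Finset.mem_powerset] at hS
        exact single_S_bound c F M hM hd z s hs q hq hqM δ hδ hδM Y hY S hS.2
          (Finset.nonempty_iff_ne_empty.2 hS.1)
    _ = _ := by rw [← Finset.mul_sum, sum_pow_bound]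

lemma marg_bound {γ : Type} [Fintype γ] [DecidableEq γ] (X : Finset γ) (hX : X.Nonempty) (f : γ → ℝ)
    (hf : ∀ x, x ∉ X → f x = 0)
    (L b η ε C : ℝ) (hL : 0 < L) (hb : 0 < b) (hη : η < 1) (hε : η ≤ ε * (1 - η))
    (hC : C = ∑ x ∈ X, f x)
    (h : ∑ x ∈ X, |L * f x - b| ≤ η * (X.card * b)) :
    0 < C ∧ (1/2) * ∑ x, |f x / C - (if x ∈ X then 1 / (X.card : ℝ) else 0)| ≤ ε := by
  have hXc : (0:ℝ) < X.card := by exact_mod_cast hX.card_pos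
  set P : ℝ := X.card * b with hP
  have hPpos : 0 < P := by positivity
  have hLC : |L * C - P| ≤ η * P := by
    refine le_trans ?_ h
    have : L * C - P = ∑ x ∈ X, (L * f x - b) := by
      rw [Finset.sum_sub_distrib, ← Finset.mul_sum, hC, hP]; simp
    rw [this]
    exact Finset.abs_sum_le_sum_abs _ _
  have hLC' := abs_le.1 hLC
  have hLCpos : 0 < L * C := by nlinarith
  have hCpos : 0 < C := pos_of_mul_pos_right hLCpos hL.le
  refine ⟨hCpos, ?_⟩
  have hsum : ∑ x, |f x / C - (if x ∈ X then 1 / (X.card : ℝ) else 0)|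
      = ∑ x ∈ X, |f x / C - 1 / (X.card : ℝ)| := by
    rw [← Finset.sum_subset (Finset.subset_univ X)]
    · apply Finset.sum_congr rfl
      intro x hx; rw [if_pos hx]
    · intro x _ hx; rw [if_neg hx, hf x hx]; simp
  rw [hsum]
  have hterm : ∀ x ∈ X, |f x / C - 1 / (X.card : ℝ)| ≤
      |L * f x - b| / (L * C) + b * (|L * C - P| / (L * C * P)) := by
    intro x _
    have : f x / C - 1 / (X.card : ℝ) = (L * f x - b) / (L * C) - b * ((L * C - P) / (L * C * P)) := by
      rw [hP]; field_simp; ring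
    rw [this]
    refine (abs_sub _ _).trans (le_of_eq ?_)
    rw [abs_div, abs_mul b, abs_div (L * C - P), abs_of_pos hLCpos, abs_of_pos hb,
      abs_of_pos (mul_pos hLCpos hPpos)]
  have h2 := Finset.sum_le_sum hterm
  rw [Finset.sum_add_distrib, ← Finset.sum_div, Finset.sum_const, nsmul_eq_mul, ← mul_assoc, ← hP] at h2
  have h3 : P * (|L * C - P| / (L * C * P)) = |L * C - P| / (L * C) := by field_simp
  rw [h3, ← add_div] at h2
  have h4 : (∑ x ∈ X, |L * f x - b| + |L * C - P|) / (L * C) ≤ 2 * ε := by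
    rw [div_le_iff₀ hLCpos]
    have hη0 : 0 ≤ η := by
      by_contra hneg
      push Not at hneg
      nlinarith [abs_nonneg (L * C - P)]
    have hε0 : 0 ≤ ε := by
      by_contra hneg
      push Not at hneg
      nlinarith
    nlinarith [mul_le_mul_of_nonneg_right hε hPpos.le, mul_le_mul_of_nonneg_left hLC'.1 hε0]
  linarith

set_option maxHeartbeats 1000000 in
lemma rect_core (n m : ℕ)
    (X : Finset (Fin n → Fin m)) (Y : Finset (Fin n → Fin m → Bool)) (hXne : X.Nonempty) (hYne : Y.Nonempty)
    (F : Finset (Fin n)) (z : Fin n → Bool)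
    (hR : ∀ x ∈ X, ∀ y ∈ Y, ((∀ i, y i (x i) = z i) ↔ ∀ i ∈ F, y i (x i) = z i))
    (L : ℝ) (hLpos : 0 < L) (η ε : ℝ) (hη : η < 1) (hε : η ≤ ε * (1 - η))
    (hdisc : ∀ s : (Fin n → Fin m) → ℝ, (∀ x, |s x| ≤ 1) →
      ∑ y ∈ Y, |∑ x ∈ X, s x * (L * (if ∀ i ∈ F, y i (x i) = z i then (1:ℝ) else 0) - 1)|
      ≤ X.card * Y.card * η) :
    (((X ×ˢ Y).filter fun p => ∀ i, p.2 i (p.1 i) = z i).Nonempty) ∧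
    ((1 / 2) * ∑ x : Fin n → Fin m,
            |(((X ×ˢ Y).filter fun p => (∀ i, p.2 i (p.1 i) = z i) ∧ p.1 = x).card : ℝ) /
                (((X ×ˢ Y).filter fun p => ∀ i, p.2 i (p.1 i) = z i).card : ℝ) -
              (if x ∈ X then 1 / (X.card : ℝ) else 0)| ≤ ε) ∧
    ((1 / 2) * ∑ y : Fin n → Fin m → Bool,
            |(((X ×ˢ Y).filter fun p => (∀ i, p.2 i (p.1 i) = z i) ∧ p.2 = y).card : ℝ) /
                (((X ×ˢ Y).filter fun p => ∀ i, p.2 i (p.1 i) = z i).card : ℝ) -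
              (if y ∈ Y then 1 / (Y.card : ℝ) else 0)| ≤ ε) := by
  have hXc : (0:ℝ) < X.card := by exact_mod_cast hXne.card_pos
  have hYc : (0:ℝ) < Y.card := by exact_mod_cast hYne.card_pos
  set r : (Fin n → Fin m) → (Fin n → Fin m → Bool) → ℝ := fun x y => if ∀ i ∈ F, y i (x i) = z i then 1 else 0 with hr
  have hfx : ∀ x ∈ X, (((X ×ˢ Y).filter fun p => (∀ i, p.2 i (p.1 i) = z i) ∧ p.1 = x).card : ℝ)
      = ∑ y ∈ Y, r x y := by
    intro x hx
    rw [Finset.card_filter]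
    push_cast
    rw [Finset.sum_product, Finset.sum_eq_single x]
    · apply Finset.sum_congr rfl
      intro y hy
      simp only [hr, and_true, hR x hx y hy]
    · intro x' _ hne; simp [hne]
    · intro h; exact absurd hx h
  have hfy : ∀ y ∈ Y, (((X ×ˢ Y).filter fun p => (∀ i, p.2 i (p.1 i) = z i) ∧ p.2 = y).card : ℝ)
      = ∑ x ∈ X, r x y := by
    intro y hy
    rw [Finset.card_filter]
    push_cast
    rw [Finset.sum_product_right, Finset.sum_eq_single y]
    · apply Finset.sum_congr rfl
      intro x hx
      simp only [hr, and_true, hR x hx y hy]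
    · intro x' _ hne; simp [hne]
    · intro h; exact absurd hy h
  have hC : (((X ×ˢ Y).filter fun p => ∀ i, p.2 i (p.1 i) = z i).card : ℝ)
      = ∑ x ∈ X, ∑ y ∈ Y, r x y := by
    rw [Finset.card_filter]
    push_cast
    rw [Finset.sum_product]
    apply Finset.sum_congr rfl
    intro x hx
    apply Finset.sum_congr rfl
    intro y hy
    simp only [hr, hR x hx y hy]
  -- the two discrepancy sums
  have hDy : ∑ y ∈ Y, |L * (∑ x ∈ X, r x y) - X.card| ≤ η * (Y.card * X.card) := by
    have h := hdisc (fun _ => 1) (by simp)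
    refine le_trans (le_of_eq ?_) (h.trans (le_of_eq (by ring)))
    apply Finset.sum_congr rfl
    intro y _
    congr 1
    simp only [one_mul]
    rw [Finset.sum_sub_distrib, ← Finset.mul_sum, Finset.sum_const, nsmul_eq_mul, mul_one]
  have hDx : ∑ x ∈ X, |L * (∑ y ∈ Y, r x y) - Y.card| ≤ η * (X.card * Y.card) := by
    set g : (Fin n → Fin m) → ℝ := fun x => L * (∑ y ∈ Y, r x y) - Y.card with hg
    have h := hdisc (fun x => if 0 ≤ g x then 1 else -1)
      (by intro x; split_ifs <;> simp)
    refine le_trans ?_ (h.trans (le_of_eq (by ring)))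
    have h1 : ∑ x ∈ X, |g x| = ∑ y ∈ Y, ∑ x ∈ X, (if 0 ≤ g x then (1:ℝ) else -1) * (L * r x y - 1) := by
      rw [Finset.sum_comm]
      apply Finset.sum_congr rfl
      intro x _
      rw [← Finset.mul_sum]
      have : ∑ y ∈ Y, (L * r x y - 1) = g x := by
        rw [Finset.sum_sub_distrib, ← Finset.mul_sum, Finset.sum_const, nsmul_eq_mul, mul_one]
      rw [this]
      split_ifs with h0
      · rw [abs_of_nonneg h0, one_mul]
      · rw [abs_of_neg (not_le.1 h0)]; ring
    rw [h1]
    exact Finset.sum_le_sum fun y _ => le_abs_self _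
  have hX := marg_bound X hXne
    (fun x => (((X ×ˢ Y).filter fun p => (∀ i, p.2 i (p.1 i) = z i) ∧ p.1 = x).card : ℝ))
    (by
      intro x hx
      rw [Nat.cast_eq_zero, Finset.card_eq_zero, Finset.filter_eq_empty_iff]
      rintro p hp ⟨-, h⟩
      exact hx (h ▸ (Finset.mem_product.1 hp).1))
    L Y.card η ε (((X ×ˢ Y).filter fun p => ∀ i, p.2 i (p.1 i) = z i).card : ℝ) hLpos hYc hη hε (hC.trans (Finset.sum_congr rfl fun x hx => (hfx x hx).symm))
    ((Finset.sum_congr rfl fun x hx => by rw [hfx x hx]).trans_le hDx)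
  have hY := marg_bound Y hYne
    (fun y => (((X ×ˢ Y).filter fun p => (∀ i, p.2 i (p.1 i) = z i) ∧ p.2 = y).card : ℝ))
    (by
      intro y hy
      rw [Nat.cast_eq_zero, Finset.card_eq_zero, Finset.filter_eq_empty_iff]
      rintro p hp ⟨-, h⟩
      exact hy (h ▸ (Finset.mem_product.1 hp).2))
    L X.card η ε (((X ×ˢ Y).filter fun p => ∀ i, p.2 i (p.1 i) = z i).card : ℝ) hLpos hXc hη hε
    ((hC.trans Finset.sum_comm).trans (Finset.sum_congr rfl fun y hy => (hfy y hy).symm))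
    ((Finset.sum_congr rfl fun y hy => by rw [hfy y hy]).trans_le hDy)
  refine ⟨?_, hX.2, hY.2⟩
  rw [← Finset.card_pos]
  exact_mod_cast hX.1

lemma density_num (n k : ℕ) (hn : 2 ≤ n) :
    ((n ^ 256 : ℕ) : ℝ) ^ (-(0.9 * (k : ℝ))) ≤ (((n : ℝ) ^ 230)⁻¹) ^ k := by
  have hn0 : (0:ℝ) < n := by exact_mod_cast (by omega : 0 < n)
  have hn1 : (1:ℝ) ≤ n := by exact_mod_cast (by omega : 1 ≤ n)
  have h1 : ((n ^ 256 : ℕ) : ℝ) = (n : ℝ) ^ (256 : ℝ) := by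
    rw [Nat.cast_pow, ← Real.rpow_natCast]; norm_num
  have h2 : (((n : ℝ) ^ 230)⁻¹) ^ k = (n : ℝ) ^ (-(230 * (k:ℝ))) := by
    rw [inv_pow, ← pow_mul, Real.rpow_neg hn0.le, ← Real.rpow_natCast]
    push_cast
    rfl
  rw [h1, h2, ← Real.rpow_mul hn0.le]
  apply Real.rpow_le_rpow_of_exponent_le hn1
  have : (0:ℝ) ≤ k := by positivity
  linarith

lemma eta_num (n k : ℕ) (hn : 2 ≤ n) (hk : k ≤ n) :
    (1 + ((n:ℝ) ^ 4)⁻¹) ^ k - 1 ≤ 1 / ((n:ℝ) ^ 2 + 1) := by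
  have hn2 : (2:ℝ) ≤ n := by exact_mod_cast hn
  set δ : ℝ := ((n:ℝ) ^ 4)⁻¹ with hδ
  have hδ0 : 0 < δ := by positivity
  have hnδ : n * δ = ((n:ℝ)^3)⁻¹ := by rw [hδ]; field_simp
  have hδ1 : δ ≤ 1 := inv_le_one_of_one_le₀ (one_le_pow₀ (by linarith))
  have h1 : (1 + δ) ^ k ≤ (1 + δ) ^ n := pow_le_pow_right₀ (by linarith) hk
  have h2 : 1 - n * δ ≤ (1 - δ) ^ n := by
    have := one_add_mul_le_pow (a := -δ) (by linarith) n
    calc _ = 1 + n * (-δ) := by ring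
      _ ≤ _ := this
      _ = _ := by ring
  have h3 : (1 + δ) ^ n * (1 - δ) ^ n ≤ 1 := by
    rw [← mul_pow]
    apply pow_le_one₀ <;> nlinarith
  have h4 : (1 + δ) ^ n * (1 - n * δ) ≤ 1 :=
    (mul_le_mul_of_nonneg_left h2 (by positivity)).trans h3
  have h5 : (n:ℝ) * δ * ((n:ℝ)^2 + 2) ≤ 1 := by
    rw [hnδ, inv_mul_le_iff₀ (by positivity)]
    nlinarith [sq_nonneg ((n:ℝ))]
  -- `1 - nδ ≥ (n²+1)/(n²+2)`
  have hA : (0:ℝ) < (n:ℝ)^2 + 1 := by positivity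
  have h6 : (1 + δ) ^ n * ((n:ℝ)^2 + 1) ≤ (n:ℝ)^2 + 2 := by
    have hp : (0:ℝ) ≤ (1 + δ) ^ n := by positivity
    have : (n:ℝ)^2 + 1 ≤ ((n:ℝ)^2 + 2) * (1 - n * δ) := by nlinarith
    calc _ ≤ (1 + δ) ^ n * (((n:ℝ)^2 + 2) * (1 - n * δ)) := by gcongr
      _ = ((n:ℝ)^2 + 2) * ((1 + δ) ^ n * (1 - n * δ)) := by ring
      _ ≤ ((n:ℝ)^2 + 2) * 1 := by gcongr
      _ = _ := by ring
  rw [le_div_iff₀ hA]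
  nlinarith [mul_le_mul_of_nonneg_right h1 hA.le]

lemma def_num (n m c : ℕ) (hc : 0 < c)
    (h : (n : ℝ) * (m : ℝ) - Real.logb 2 (c : ℝ) ≤ (n : ℝ) ^ 3) :
    (Fintype.card (Fin n → Fin m → Bool) : ℝ) ≤ 2 ^ (n^3) * c := by
  have hc' : (0:ℝ) < c := by exact_mod_cast hc
  have h1 : (Fintype.card (Fin n → Fin m → Bool) : ℝ) = (2:ℝ) ^ ((n:ℝ) * m) := by
    simp only [Fintype.card_fun, Fintype.card_fin, Fintype.card_bool]
    push_cast
    rw [← pow_mul, ← Real.rpow_natCast]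
    push_cast
    rw [mul_comm]
  have h2 : (2:ℝ) ^ (n^3) * c = (2:ℝ) ^ ((n:ℝ)^3 + Real.logb 2 c) := by
    rw [Real.rpow_add (by norm_num), Real.rpow_logb (by norm_num) (by norm_num) hc',
      ← Real.rpow_natCast]
    push_cast
    rfl
  rw [h1, h2]
  exact Real.rpow_le_rpow_of_exponent_le (by norm_num) (by linarith)

/-- **Uniform marginals lemma (general version).** For `ρ ∈ {0,1,*}^n` (encoded as
`ρ : Fin n → Option Bool`, with `none` meaning `*`) and a `ρ`-structured rectangle
`X × Y` with `nm - log₂|Y| ≤ n³`: for every `z` consistent with `ρ`, the slice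
`G⁻¹(z) ∩ (X × Y)` is nonempty and the marginals of the uniform distribution on it are
`1/n²`-close in total variation to uniform on `X` and on `Y`. -/
theorem uniform_marginals_general :
    ∃ N : ℕ, ∀ n : ℕ, N ≤ n →
    ∀ (ρ : Fin n → Option Bool)
      (X : Finset (Fin n → Fin (n ^ 256))) (Y : Finset (Fin n → Fin (n ^ 256) → Bool)),
      X.Nonempty → Y.Nonempty →
      -- all elements of X agree on the fixed positions of ρ
      (∀ x ∈ X, ∀ x' ∈ X, ∀ i : Fin n, ρ i ≠ none → x i = x' i) →
      -- the projection of X to free(ρ) is 0.9-dense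
      (∀ I : Finset (Fin n), (∀ i ∈ I, ρ i = none) → I.Nonempty →
        ∀ α : Fin n → Fin (n ^ 256),
        ((X.filter fun x => ∀ i ∈ I, x i = α i).card : ℝ) ≤
          (X.card : ℝ) * ((n ^ 256 : ℕ) : ℝ) ^ (-(0.9 * (I.card : ℝ)))) →
      -- every output G(x,y) on X × Y is consistent with ρ
      (∀ x ∈ X, ∀ y ∈ Y, ∀ i : Fin n, ∀ b : Bool, ρ i = some b → y i (x i) = b) →
      -- deficiency of Y at most n³
      ((n : ℝ) * ((n ^ 256 : ℕ) : ℝ) - Real.logb 2 (Y.card : ℝ) ≤ (n : ℝ) ^ 3) →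
      ∀ z : Fin n → Bool,
        -- z agrees with ρ on the fixed positions
        (∀ i : Fin n, ∀ b : Bool, ρ i = some b → z i = b) →
        -- G⁻¹(z) ∩ (X × Y) is nonempty
        (((X ×ˢ Y).filter fun p => ∀ i, p.2 i (p.1 i) = z i).Nonempty) ∧
        -- the first marginal is 1/n²-close to uniform on X
        ((1 / 2) * ∑ x : Fin n → Fin (n ^ 256),
            |(((X ×ˢ Y).filter fun p => (∀ i, p.2 i (p.1 i) = z i) ∧ p.1 = x).card : ℝ) /
                (((X ×ˢ Y).filter fun p => ∀ i, p.2 i (p.1 i) = z i).card : ℝ) -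
              (if x ∈ X then 1 / (X.card : ℝ) else 0)| ≤ 1 / (n : ℝ) ^ 2) ∧
        -- the second marginal is 1/n²-close to uniform on Y
        ((1 / 2) * ∑ y : Fin n → Fin (n ^ 256) → Bool,
            |(((X ×ˢ Y).filter fun p => (∀ i, p.2 i (p.1 i) = z i) ∧ p.2 = y).card : ℝ) /
                (((X ×ˢ Y).filter fun p => ∀ i, p.2 i (p.1 i) = z i).card : ℝ) -
              (if y ∈ Y then 1 / (Y.card : ℝ) else 0)| ≤ 1 / (n : ℝ) ^ 2) := by
  refine ⟨2, ?_⟩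
  intro n hn ρ X Y hXne hYne _ hdense hcons hdef z hz
  have hn2 : (2:ℝ) ≤ n := by exact_mod_cast hn
  have hn0 : (0:ℝ) < n := by linarith
  have hcardY := def_num n (n ^ 256) Y.card hYne.card_pos hdef
  have hden := fun k => density_num n k hn
  generalize n ^ 256 = m at *
  set F : Finset (Fin n) := Finset.univ.filter fun i => ρ i = none with hF
  have hFc : F.card ≤ n := by
    simpa using Finset.card_le_univ F
  have hηle := eta_num n F.card hn hFc
  set η : ℝ := (1 + ((n:ℝ) ^ 4)⁻¹) ^ F.card - 1 with hηdef
  have hAle : (5:ℝ) ≤ (n:ℝ)^2 + 1 := by nlinarith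
  have hη1 : η * ((n:ℝ)^2 + 1) ≤ 1 := by rwa [le_div_iff₀ (by positivity)] at hηle
  refine rect_core n m X Y hXne hYne F z ?_ (2 ^ F.card) (by positivity) η _ ?_ ?_ ?_
  · intro x hx y hy
    constructor
    · intro h i _; exact h i
    · intro h i
      rcases hρ : ρ i with _ | b
      · exact h i (by simp [hF, hρ])
      · rw [hcons x hx y hy i b hρ, hz i b hρ]
  · nlinarith
  · rw [one_div, inv_mul_eq_div, le_div_iff₀ (by positivity)]
    linarith
  · intro s hs
    have hbig : 16 * (n:ℝ)^3 * (n:ℝ)^8 ≤ (n:ℝ)^230 := by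
      have h16 : (16:ℝ) ≤ (n:ℝ)^4 := by
        calc (16:ℝ) = 2^4 := by norm_num
          _ ≤ _ := by gcongr
      calc 16 * (n:ℝ)^3 * (n:ℝ)^8 ≤ (n:ℝ)^4 * (n:ℝ)^3 * (n:ℝ)^8 := by gcongr
        _ = (n:ℝ)^15 := by ring
        _ ≤ _ := pow_le_pow_right₀ (by linarith) (by norm_num)
    have h := disc_bound (fun a : X => (a : Fin n → Fin m)) F ((n:ℝ)^230) (by positivity) ?_ z
      (fun a => s a) (fun a => hs a) (n^3) (by positivity) ?_ ((n:ℝ)^4)⁻¹ (by positivity) ?_ Y hcardY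
    · rw [Fintype.card_coe] at h
      refine le_trans (le_of_eq ?_) h
      apply Finset.sum_congr rfl
      intro y _
      rw [← Finset.sum_coe_sort X]
      congr!
    · intro T hT β
      have e : ∑ x ∈ X, (if ∀ i ∈ T, x i = β i then (1:ℝ) else 0) ≤ X.card * (((n:ℝ)^230)⁻¹) ^ T.card := by
        rw [Finset.sum_boole]
        rcases T.eq_empty_or_nonempty with rfl | hTne
        · simp
        · refine le_trans (le_of_eq ?_) ((hdense T ?_ hTne β).trans ?_)
          · congr!
          · intro i hi
            have := hT hi
            simpa [hF] using this
          · exact mul_le_mul_of_nonneg_left (hden _) (by positivity)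
      rw [Fintype.card_coe]
      refine le_trans (le_of_eq ?_) e
      rw [← Finset.sum_coe_sort X]
      congr!
    · push_cast
      have : (1:ℝ) ≤ (n:ℝ)^8 := one_le_pow₀ (by linarith)
      have h3 : (0:ℝ) < (n:ℝ)^3 := by positivity
      nlinarith
    · push_cast
      rw [div_le_iff₀ (by positivity), inv_pow, inv_mul_eq_div, le_div_iff₀ (by positivity)]
      calc _ = 16 * (n:ℝ)^3 * (n:ℝ)^8 := by ring
        _ ≤ _ := hbig
end

section
/- Pointwise uniformity lemma: There exists N such that for every n ≥ N the following holds with m = n^256. Let ρ ∈ {0,1,*}^n and let X × Y ⊆ [m]^n × ({0,1}^m)^n be a ρ-essentially-structured rectangle with nm − log₂|Y| ≤ n³ + 1. Then for every z ∈ {0,1}^n that agrees with ρ on fix(ρ), the number of pairs (x,y) ∈ X × Y with G(x,y) = z satisfies (1 − 1/n³) · 2^(−|free(ρ)|) · |X| · |Y| ≤ |G^{-1}(z) ∩ (X × Y)| ≤ (1 + 1/n³) · 2^(−|free(ρ)|) · |X| · |Y|; in particular, the distribution of G(x,y) for (x,y) uniform on X × Y is 1/n³-pointwise-close to the uniform distribution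 on the set of all z consistent with ρ. -/
open Finset

namespace PU

/-- The sign character of a bit. -/
def sgn (b : Bool) : ℝ := if b then -1 else 1

lemma sgn_not (b : Bool) : sgn (!b) = - sgn b := by cases b <;> simp [sgn]

lemma abs_sgn (b : Bool) : |sgn b| = 1 := by cases b <;> simp [sgn]

open Classical in
/-- Coordinates in `I` whose value in sample `j` reappears in a later sample. -/
noncomputable def rep {ι β α : Type*} (u : α → ι → β) (I : Finset ι) {T : ℕ}
    (x : Fin T → α) (j : Fin T) : Finset ι :=
  I.filter fun i => ∃ j', j < j' ∧ u (x j') i = u (x j) i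

open Classical in
lemma step_card {ι β α : Type*} [Fintype α] [Nonempty β] (u : α → ι → β) (S : Finset ι)
    (q : ℝ)
    (h : ∀ v : ι → β, ((univ.filter fun a => ∀ i ∈ S, u a i = v i).card : ℝ) ≤
      2 * (Fintype.card α : ℝ) * q ^ S.card)
    {T : ℕ} (x : Fin T → α) :
    ((univ.filter fun a => ∀ i ∈ S, ∃ j, u (x j) i = u a i).card : ℝ) ≤
      2 * (Fintype.card α : ℝ) * (T * q) ^ S.card := by
  let V : (S → Fin T) → ι → β := fun w i =>
    if hi : i ∈ S then u (x (w ⟨i, hi⟩)) i else Classical.arbitrary β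
  have hsub : (univ.filter fun a => ∀ i ∈ S, ∃ j, u (x j) i = u a i) ⊆
      (univ : Finset (S → Fin T)).biUnion fun w => univ.filter fun a => ∀ i ∈ S, u a i = V w i := by
    intro a ha
    simp only [mem_filter, mem_univ, true_and, mem_biUnion] at ha ⊢
    choose f hf using ha
    refine ⟨fun i => f i.1 i.2, fun i hi => ?_⟩
    simp [V, hi, hf i hi]
  calc ((univ.filter fun a => ∀ i ∈ S, ∃ j, u (x j) i = u a i).card : ℝ)
      ≤ (∑ w : S → Fin T, (univ.filter fun a => ∀ i ∈ S, u a i = V w i).card : ℕ) := by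
        exact_mod_cast (card_le_card hsub).trans card_biUnion_le
    _ ≤ ∑ w : S → Fin T, 2 * (Fintype.card α : ℝ) * q ^ S.card := by
        push_cast
        exact sum_le_sum fun w _ => h _
    _ = _ := by
        simp [mul_pow]; ring

open Classical in
lemma step_sum {ι β α : Type*} [Fintype α] [Nonempty β] (u : α → ι → β) (I : Finset ι)
    (q C : ℝ) (hC : 0 ≤ C)
    (h : ∀ S ⊆ I, ∀ v : ι → β, ((univ.filter fun a => ∀ i ∈ S, u a i = v i).card : ℝ) ≤
      2 * (Fintype.card α : ℝ) * q ^ S.card)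
    {T : ℕ} (x : Fin T → α) :
    ∑ a : α, C ^ (I.filter fun i => ∃ j, u (x j) i = u a i).card ≤
      2 * (Fintype.card α : ℝ) * (1 + C * (T * q)) ^ I.card := by
  have h1 : ∀ a : α, C ^ (I.filter fun i => ∃ j, u (x j) i = u a i).card ≤
      ∑ S ∈ I.powerset, if ∀ i ∈ S, ∃ j, u (x j) i = u a i then C ^ S.card else 0 := by
    intro a
    have hmem : (I.filter fun i => ∃ j, u (x j) i = u a i) ∈ I.powerset := by simp
    refine le_trans ?_ (single_le_sum (f := fun S : Finset ι =>
      if ∀ i ∈ S, ∃ j, u (x j) i = u a i then C ^ S.card else 0) ?_ hmem)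
    · have : ∀ i ∈ (I.filter fun i => ∃ j, u (x j) i = u a i), ∃ j, u (x j) i = u a i := by
        intro i hi; exact (mem_filter.1 hi).2
      simp only [if_pos this, le_refl]
    · intro S _
      split_ifs <;> positivity
  calc _ ≤ ∑ a : α, ∑ S ∈ I.powerset,
        (if ∀ i ∈ S, ∃ j, u (x j) i = u a i then C ^ S.card else 0) := sum_le_sum fun a _ => h1 a
    _ = ∑ S ∈ I.powerset, C ^ S.card *
        ((univ.filter fun a => ∀ i ∈ S, ∃ j, u (x j) i = u a i).card : ℝ) := by
        rw [sum_comm]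
        refine sum_congr rfl fun S _ => ?_
        rw [← sum_filter, sum_const, nsmul_eq_mul, mul_comm]
    _ ≤ ∑ S ∈ I.powerset, C ^ S.card * (2 * (Fintype.card α : ℝ) * (T * q) ^ S.card) := by
        refine sum_le_sum fun S hS => ?_
        exact mul_le_mul_of_nonneg_left
          (step_card u S q (h S (mem_powerset.1 hS)) x) (by positivity)
    _ = _ := by
        have := prod_one_add (f := fun _ : ι => C * (T * q)) I
        simp only [prod_const] at this
        rw [this, mul_sum]
        refine sum_congr rfl fun S _ => ?_
        rw [mul_pow]; ring

lemma rep_zero {ι β α : Type*} (u : α → ι → β) (I : Finset ι) {T : ℕ}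
    (a : α) (x : Fin T → α) : rep u I (Fin.cons a x : Fin (T+1) → α) 0 =
      (by classical exact I.filter fun i => ∃ j, u (x j) i = u a i) := by
  ext i
  simp [rep, Fin.exists_fin_succ]

lemma rep_succ {ι β α : Type*} (u : α → ι → β) (I : Finset ι) {T : ℕ}
    (a : α) (x : Fin T → α) (j : Fin T) :
    rep u I (Fin.cons a x : Fin (T+1) → α) j.succ = rep u I x j := by
  ext i
  simp [rep, Fin.exists_fin_succ]

open Classical in
lemma tuple_sum {ι β α : Type*} [Fintype α] [Nonempty β] (u : α → ι → β) (I : Finset ι)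
    (q C : ℝ) (hC : 0 ≤ C) (hq : 0 ≤ q)
    (h : ∀ S ⊆ I, ∀ v : ι → β, ((univ.filter fun a => ∀ i ∈ S, u a i = v i).card : ℝ) ≤
      2 * (Fintype.card α : ℝ) * q ^ S.card) (T' T : ℕ) (hT : T ≤ T') :
    ∑ x : Fin T → α, ∏ j, C ^ (rep u I x j).card ≤
      (2 * (Fintype.card α : ℝ) * (1 + C * (T' * q)) ^ I.card) ^ T := by
  induction T with
  | zero => simp
  | succ T ih =>
    rw [← (Fin.consEquiv fun _ : Fin (T+1) => α).sum_comp, Fintype.sum_prod_type, sum_comm]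
    have : ∀ x : Fin T → α, ∀ a : α,
        ∏ j, C ^ (rep u I ((Fin.consEquiv fun _ : Fin (T+1) => α) (a, x)) j).card =
        C ^ (I.filter fun i => ∃ j, u (x j) i = u a i).card * ∏ j, C ^ (rep u I x j).card := by
      intro x a
      change ∏ j, C ^ (rep u I (Fin.cons a x : Fin (T+1) → α) j).card = _
      rw [Fin.prod_univ_succ, rep_zero]
      simp only [rep_succ]
    simp only [this]
    simp only [← sum_mul]
    rw [pow_succ', ]
    calc _ ≤ ∑ x : Fin T → α, (2 * (Fintype.card α : ℝ) * (1 + C * (T' * q)) ^ I.card) *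
            ∏ j, C ^ (rep u I x j).card := by
          refine sum_le_sum fun x _ => ?_
          refine mul_le_mul_of_nonneg_right ((step_sum u I q C hC h x).trans ?_)
            (prod_nonneg fun _ _ => by positivity)
          gcongr
          omega
      _ ≤ _ := by
          rw [← mul_sum]
          exact mul_le_mul_of_nonneg_left (ih (by omega)) (by positivity)

/-- No sample has a lonely coordinate. -/
def Good {ι β α : Type*} (u : α → ι → β) (I : Finset ι) {T : ℕ} (x : Fin T → α) : Prop :=
  ∀ i ∈ I, ∀ j, ∃ j', j' ≠ j ∧ u (x j') i = u (x j) i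

open Classical in
lemma good_card {ι β α : Type*} (u : α → ι → β) (I : Finset ι) (t : ℕ)
    (x : Fin (2 * t) → α) (hx : Good u I x) : t * I.card ≤ ∑ j, (rep u I x j).card := by
  have e : ∑ j, (rep u I x j).card =
      ∑ i ∈ I, (univ.filter fun j => ∃ j', j < j' ∧ u (x j') i = u (x j) i).card := by
    simp only [rep, card_filter]
    rw [sum_comm]
  rw [e, mul_comm, ← smul_eq_mul]
  refine card_nsmul_le_sum I _ t fun i hi => ?_
  have hc := card_filter_add_card_filter_not (s := (univ : Finset (Fin (2*t))))
    (fun j => ∃ j', j < j' ∧ u (x j') i = u (x j) i)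
  have hle : (univ.filter fun j => ¬ ∃ j', j < j' ∧ u (x j') i = u (x j) i).card ≤
      (univ.filter fun j => ∃ j', j < j' ∧ u (x j') i = u (x j) i).card := by
    choose f hf1 hf2 using hx i hi
    refine card_le_card_of_injOn f ?_ ?_
    · intro j hj
      simp only [coe_filter, mem_univ, true_and, Set.mem_ofPred_eq, not_exists, not_and] at hj ⊢
      refine ⟨j, lt_of_le_of_ne ?_ (hf1 j), (hf2 j).symm⟩
      by_contra hlt
      exact hj _ (not_le.1 hlt) (hf2 j)
    · intro j hj k hk hjk
      simp only [coe_filter, mem_univ, true_and, Set.mem_ofPred_eq, not_exists, not_and] at hj hk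
      have : u (x j) i = u (x k) i := by rw [← hf2 j, ← hf2 k, hjk]
      rcases lt_trichotomy j k with hh | hh | hh
      · exact absurd this.symm (hj _ hh)
      · exact hh
      · exact absurd this (hk _ hh)
  simp only [card_univ, Fintype.card_fin] at hc
  omega

open Classical in
lemma good_count {ι β α : Type*} [Fintype α] [Nonempty β] (u : α → ι → β) (I : Finset ι)
    (q C : ℝ) (hC : 1 ≤ C) (hq : 0 ≤ q)
    (h : ∀ S ⊆ I, ∀ v : ι → β, ((univ.filter fun a => ∀ i ∈ S, u a i = v i).card : ℝ) ≤
      2 * (Fintype.card α : ℝ) * q ^ S.card) (t : ℕ) :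
    ((univ.filter fun x : Fin (2 * t) → α => Good u I x).card : ℝ) * C ^ (t * I.card) ≤
      (2 * (Fintype.card α : ℝ) * (1 + C * ((2 * t : ℕ) * q)) ^ I.card) ^ (2 * t) := by
  refine le_trans ?_ (tuple_sum u I q C (by linarith) hq h (2*t) (2*t) le_rfl)
  rw [← nsmul_eq_mul]
  refine le_trans (card_nsmul_le_sum _ (fun x => ∏ j, C ^ (rep u I x j).card) _ ?_)
    (sum_le_sum_of_subset_of_nonneg (filter_subset _ _)
      fun x _ _ => prod_nonneg fun _ _ => by positivity)
  intro x hx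
  rw [prod_pow_eq_pow_sum]
  exact pow_le_pow_right₀ hC (good_card u I t x (mem_filter.1 hx).2)

open Classical in
lemma lonely_zero {ι β α : Type*} [Fintype ι] [Fintype β] (u : α → ι → β) (I : Finset ι)
    {T : ℕ} (x : Fin T → α) (hx : ¬ Good u I x) :
    ∑ y : ι → β → Bool, ∏ j, ∏ i ∈ I, sgn (y i (u (x j) i)) = 0 := by
  simp only [Good, not_forall, not_exists, not_and] at hx
  obtain ⟨i₀, hi₀, j₀, hj⟩ := hx
  let g : (ι → β → Bool) → (ι → β → Bool) := fun y i b =>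
    if i = i₀ ∧ b = u (x j₀) i₀ then !(y i b) else y i b
  refine sum_involution (fun y _ => g y) ?_ ?_ (fun _ _ => mem_univ _) ?_
  · intro y _
    have hm : (j₀, i₀) ∈ (univ : Finset (Fin T)) ×ˢ I := by simp [hi₀]
    rw [← prod_product', ← prod_product', ← mul_prod_erase _ _ hm, ← mul_prod_erase _ _ hm]
    have h2 : ∏ p ∈ ((univ : Finset (Fin T)) ×ˢ I).erase (j₀, i₀), sgn (g y p.2 (u (x p.1) p.2)) =
        ∏ p ∈ ((univ : Finset (Fin T)) ×ˢ I).erase (j₀, i₀), sgn (y p.2 (u (x p.1) p.2)) := by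
      refine prod_congr rfl fun p hp => ?_
      have : ¬ (p.2 = i₀ ∧ u (x p.1) p.2 = u (x j₀) i₀) := by
        rintro ⟨h1, h3⟩
        have hne : p.1 ≠ j₀ := by
          intro h4
          exact (mem_erase.1 hp).1 (Prod.ext h4 h1)
        rw [h1] at h3
        exact hj _ hne h3
      simp only [g, if_neg this]
    rw [h2]
    have h3 : g y i₀ (u (x j₀) i₀) = !(y i₀ (u (x j₀) i₀)) := by simp [g]
    simp only [h3, sgn_not]
    ring
  · intro y _ _ h
    have h3 : g y i₀ (u (x j₀) i₀) = !(y i₀ (u (x j₀) i₀)) := by simp [g]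
    rw [h] at h3
    simp at h3
  · intro y _
    funext i b
    simp only [g]
    split_ifs <;> simp

open Classical in
lemma moment {ι β α : Type*} [Fintype ι] [Fintype β] [Fintype α] (u : α → ι → β) (I : Finset ι)
    (T : ℕ) :
    ∑ y : ι → β → Bool, (∑ a, ∏ i ∈ I, sgn (y i (u a i))) ^ T ≤
      (Fintype.card (ι → β → Bool) : ℝ) *
        ((univ.filter fun x : Fin T → α => Good u I x).card : ℝ) := by
  simp only [Fintype.sum_pow]
  rw [sum_comm, ← sum_filter_add_sum_filter_not univ (fun x : Fin T → α => Good u I x)]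
  have h0 : ∑ x ∈ univ.filter (fun x : Fin T → α => ¬ Good u I x),
      ∑ y : ι → β → Bool, ∏ j, ∏ i ∈ I, sgn (y i (u (x j) i)) = 0 :=
    sum_eq_zero fun x hx => lonely_zero u I x (mem_filter.1 hx).2
  rw [h0, add_zero, mul_comm, ← nsmul_eq_mul]
  refine sum_le_card_nsmul _ _ _ fun x _ => ?_
  rw [← card_univ, ← nsmul_one]
  refine sum_le_card_nsmul _ _ _ fun y _ => ?_
  refine (le_abs_self _).trans ?_
  simp [abs_prod, abs_sgn]

lemma power_mean {γ : Type*} (Y : Finset γ) (F : γ → ℝ) (t : ℕ) (ht : 0 < t) :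
    |∑ y ∈ Y, F y| ^ (2 * t) ≤ (Y.card : ℝ) ^ (2 * t - 1) * ∑ y ∈ Y, F y ^ (2 * t) := by
  have h1 := pow_sum_le_card_mul_sum_pow (s := Y) (f := fun y => |F y|)
    (fun _ _ => abs_nonneg _) (2 * t - 1)
  have e : 2 * t - 1 + 1 = 2 * t := by omega
  rw [e] at h1
  refine (pow_le_pow_left₀ (abs_nonneg _) (abs_sum_le_sum_abs _ _) _).trans (h1.trans_eq ?_)
  simp only [Even.pow_abs (even_two_mul t)]

lemma real_part (F M A Yc N D B : ℝ) (k t : ℕ) (ht : 0 < t) (hA : 0 ≤ A) (hM : 0 ≤ M)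
    (hYn : 0 ≤ Yc) (_hD0 : 0 ≤ D) (_hF : 0 ≤ F) (hB : 0 ≤ B) (hB1 : B ≤ 1)
    (h0 : F ^ (2 * t) ≤ Yc ^ (2 * t - 1) * (N * M))
    (hN : N ≤ Yc * 2 ^ (2 * t))
    (hgc : M * (D ^ 2) ^ (t * k) ≤ (2 * A * (1 + B) ^ k) ^ (2 * t)) :
    F * D ^ k ≤ 4 * 2 ^ k * A * Yc := by
  have h1 : F ^ (2 * t) ≤ Yc ^ (2 * t - 1) * ((Yc * 2 ^ (2 * t)) * M) :=
    h0.trans (mul_le_mul_of_nonneg_left (mul_le_mul_of_nonneg_right hN hM) (by positivity))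
  have h2 : Yc ^ (2 * t - 1) * ((Yc * 2 ^ (2 * t)) * M) = (Yc * 2) ^ (2 * t) * M := by
    have e : Yc ^ (2 * t) = Yc ^ (2 * t - 1) * Yc := by
      rw [← pow_succ]; congr 1; omega
    rw [mul_pow, e]; ring
  have h3 : M * (D ^ 2) ^ (t * k) ≤ (2 * A * 2 ^ k) ^ (2 * t) := by
    refine hgc.trans ?_
    gcongr
    linarith
  have h4 : (F * D ^ k) ^ (2 * t) ≤ (4 * 2 ^ k * A * Yc) ^ (2 * t) := by
    calc (F * D ^ k) ^ (2 * t) = F ^ (2 * t) * (D ^ 2) ^ (t * k) := by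
          rw [mul_pow, ← pow_mul, ← pow_mul, show k * (2 * t) = 2 * (t * k) by ring]
      _ ≤ ((Yc * 2) ^ (2 * t) * M) * (D ^ 2) ^ (t * k) := by
          rw [← h2]
          exact mul_le_mul_of_nonneg_right h1 (by positivity)
      _ = (Yc * 2) ^ (2 * t) * (M * (D ^ 2) ^ (t * k)) := by ring
      _ ≤ (Yc * 2) ^ (2 * t) * (2 * A * 2 ^ k) ^ (2 * t) :=
          mul_le_mul_of_nonneg_left h3 (by positivity)
      _ = (4 * 2 ^ k * A * Yc) ^ (2 * t) := by
          rw [← mul_pow, show Yc * 2 * (2 * A * 2 ^ k) = 4 * 2 ^ k * A * Yc by ring]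
  exact le_of_pow_le_pow_left₀ (by omega) (by positivity) h4

open Classical in
lemma key {ι β α : Type*} [Fintype ι] [Fintype β] [Fintype α] [Nonempty β]
    (u : α → ι → β) (I : Finset ι) (q D : ℝ) (hD : 1 ≤ D) (hq : 0 ≤ q)
    (h : ∀ S ⊆ I, ∀ v : ι → β, ((univ.filter fun a => ∀ i ∈ S, u a i = v i).card : ℝ) ≤
      2 * (Fintype.card α : ℝ) * q ^ S.card) (t : ℕ) (ht : 0 < t)
    (hDq : D ^ 2 * ((2 * t : ℕ) * q) ≤ 1)
    (Y : Finset (ι → β → Bool))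
    (hY : ((2 : ℝ) ^ Fintype.card β) ^ Fintype.card ι ≤ Y.card * 2 ^ (2 * t)) :
    |∑ y ∈ Y, ∑ a, ∏ i ∈ I, sgn (y i (u a i))| * D ^ I.card ≤
      4 * 2 ^ I.card * (Fintype.card α : ℝ) * Y.card := by
  have hsub : ∑ y ∈ Y, (∑ a, ∏ i ∈ I, sgn (y i (u a i))) ^ (2 * t) ≤
      ∑ y : ι → β → Bool, (∑ a, ∏ i ∈ I, sgn (y i (u a i))) ^ (2 * t) :=
    sum_le_sum_of_subset_of_nonneg (subset_univ _)
      fun y _ _ => Even.pow_nonneg (even_two_mul t) _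
  have hcard : (Fintype.card (ι → β → Bool) : ℝ) =
      ((2 : ℝ) ^ Fintype.card β) ^ Fintype.card ι := by
    simp
  rw [← hcard] at hY
  have hmo := moment u I (2 * t)
  have hpm := power_mean Y (fun y => ∑ a, ∏ i ∈ I, sgn (y i (u a i))) t ht
  have hgc := good_count u I q (D ^ 2) (one_le_pow₀ hD) hq
    (fun S hS v => by convert h S hS v) t
  have hB : 0 ≤ D ^ 2 * ((2 * t : ℕ) * q) := by positivity
  have hD0 : 0 ≤ D := by linarith
  have h5 := hpm.trans (mul_le_mul_of_nonneg_left (hsub.trans hmo)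
    (pow_nonneg (Nat.cast_nonneg _) _))
  exact real_part _ _ _ _ _ D _ I.card t ht (Nat.cast_nonneg _)
    (Nat.cast_nonneg _) (Nat.cast_nonneg _) hD0 (abs_nonneg _) hB hDq h5 hY hgc

open Classical in
lemma key' {n m : ℕ} (hm : 0 < m) (X : Finset (Fin n → Fin m)) (S : Finset (Fin n))
    (Q D : ℝ) (hD : 1 ≤ D) (hQ : 0 ≤ Q)
    (h : ∀ R ⊆ S, R.Nonempty → ∀ v : Fin n → Fin m,
      ((X.filter fun x => ∀ i ∈ R, x i = v i).card : ℝ) ≤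
        2 * (X.card : ℝ) * Q ^ (-(0.9 * (R.card : ℝ))))
    (t : ℕ) (ht : 0 < t) (hDq : D ^ 2 * ((2 * t : ℕ) * Q ^ (-(0.9 : ℝ))) ≤ 1)
    (Y : Finset (Fin n → Fin m → Bool))
    (hY : ((2 : ℝ) ^ m) ^ n ≤ Y.card * 2 ^ (2 * t)) :
    |∑ y ∈ Y, ∑ x : X, ∏ i ∈ S, sgn (y i (x.1 i))| * D ^ S.card ≤
      4 * 2 ^ S.card * (X.card : ℝ) * Y.card := by
  have : Nonempty (Fin m) := ⟨⟨0, hm⟩⟩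
  have hk := key (fun x : X => x.1) S (Q ^ (-(0.9 : ℝ))) D hD (by positivity) (by
        intro R hR v
        have hcard : ((univ.filter fun a : X => ∀ i ∈ R, a.1 i = v i).card : ℝ) =
            ((X.filter fun x => ∀ i ∈ R, x i = v i).card : ℝ) := by
          rw [card_filter, card_filter,
            ← sum_coe_sort X (fun x => if ∀ i ∈ R, x i = v i then 1 else 0)]
        rw [Fintype.card_coe]
        rcases R.eq_empty_or_nonempty with rfl | hRne
        · have : (0 : ℝ) ≤ X.card := Nat.cast_nonneg _
          simp
          linarith
        · have := h R hR hRne v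
          rw [← hcard] at this
          have e : Q ^ (-(0.9 * (R.card : ℝ))) = (Q ^ (-(0.9 : ℝ))) ^ R.card := by
            rw [← Real.rpow_natCast, ← Real.rpow_mul hQ, neg_mul]
          rw [e] at this
          convert this)
      t ht hDq Y (by simpa only [Fintype.card_fin] using hY)
  rwa [Fintype.card_coe] at hk

lemma indicator_prod {n : ℕ} (J : Finset (Fin n)) (w z : Fin n → Bool)
    (hJ : ∀ i, i ∉ J → w i = z i) :
    (if ∀ i, w i = z i then (1 : ℝ) else 0) =
      (1 / 2) ^ J.card * ∑ S ∈ J.powerset, (∏ i ∈ S, sgn (z i)) * ∏ i ∈ S, sgn (w i) := by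
  have h1 : ∀ i, (1 : ℝ) + sgn (z i) * sgn (w i) = if w i = z i then 2 else 0 := by
    intro i
    cases w i <;> cases z i <;> norm_num [sgn]
  simp only [← prod_mul_distrib]
  rw [← prod_one_add]
  simp only [h1]
  split_ifs with h
  · simp [h]
  · push Not at h
    obtain ⟨i, hi⟩ := h
    have : i ∈ J := by
      by_contra hh; exact hi (hJ i hh)
    rw [prod_eq_zero this (by simp [hi]), mul_zero]

lemma count_eq {n m : ℕ} (J : Finset (Fin n)) (X : Finset (Fin n → Fin m))
    (Y : Finset (Fin n → Fin m → Bool)) (z : Fin n → Bool)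
    (hJ : ∀ x ∈ X, ∀ y ∈ Y, ∀ i, i ∉ J → y i (x i) = z i) :
    (((X ×ˢ Y).filter fun p => ∀ i, p.2 i (p.1 i) = z i).card : ℝ) =
      (1 / 2) ^ J.card * ∑ S ∈ J.powerset, (∏ i ∈ S, sgn (z i)) *
        ∑ y ∈ Y, ∑ x : X, ∏ i ∈ S, sgn (y i (x.1 i)) := by
  rw [card_filter]
  push_cast
  rw [sum_product_right]
  have : ∀ y ∈ Y, ∑ x ∈ X, (if ∀ i, y i (x i) = z i then (1 : ℝ) else 0) =
      (1 / 2) ^ J.card * ∑ S ∈ J.powerset, (∏ i ∈ S, sgn (z i)) *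
        ∑ x : X, ∏ i ∈ S, sgn (y i (x.1 i)) := by
    intro y hy
    rw [← sum_coe_sort X]
    rw [sum_congr rfl fun x _ => indicator_prod J (fun i => y i (x.1 i)) z (hJ x.1 x.2 y hy)]
    rw [← mul_sum, sum_comm]
    simp only [mul_sum]
  rw [sum_congr rfl this, ← mul_sum, sum_comm]
  simp only [mul_sum]

lemma tail_bound (n f : ℕ) (hn : 2 ≤ n) (hf : f ≤ n) :
    (1 + 1 / (n : ℝ) ^ 5) ^ f - 1 ≤ 1 / (n : ℝ) ^ 3 := by
  have hn' : (2 : ℝ) ≤ n := by exact_mod_cast hn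
  have hn0 : (0 : ℝ) < n := by linarith
  have h1 : (1 + 1 / (n : ℝ) ^ 5) ^ f ≤ (1 + 1 / (n : ℝ) ^ 5) ^ n :=
    pow_le_pow_right₀ (by simp) hf
  have h2 : (1 + 1 / (n : ℝ) ^ 5) ^ n ≤ Real.exp (1 / (n : ℝ) ^ 4) := by
    calc (1 + 1 / (n : ℝ) ^ 5) ^ n ≤ (Real.exp (1 / (n : ℝ) ^ 5)) ^ n := by
          refine pow_le_pow_left₀ (by positivity) ?_ _
          rw [add_comm]; exact Real.add_one_le_exp _
      _ = _ := by
          rw [← Real.exp_nat_mul]; congr 1; field_simp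
  have h4 : |1 / (n : ℝ) ^ 4| = 1 / (n : ℝ) ^ 4 := abs_of_nonneg (by positivity)
  have h3 := Real.abs_exp_sub_one_le (x := 1 / (n : ℝ) ^ 4) (by
    rw [h4, div_le_one (by positivity)]; exact one_le_pow₀ (by linarith))
  rw [h4] at h3
  have h5 := (le_abs_self _).trans h3
  have h6 : 2 * (1 / (n : ℝ) ^ 4) ≤ 1 / (n : ℝ) ^ 3 := by
    rw [mul_one_div, div_le_div_iff₀ (by positivity) (by positivity)]
    nlinarith [pow_pos hn0 3]
  linarith

lemma q_bound (n : ℕ) (hn : 2 ≤ n) :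
    ((n : ℝ) ^ 10) ^ 2 * ((2 * n ^ 3 : ℕ) * ((n ^ 256 : ℕ) : ℝ) ^ (-(0.9 : ℝ))) ≤ 1 := by
  have hn' : (2 : ℝ) ≤ n := by exact_mod_cast hn
  have hn0 : (0 : ℝ) < n := by linarith
  have h1 : ((n ^ 256 : ℕ) : ℝ) ^ (-(0.9 : ℝ)) ≤ ((n : ℝ) ^ 24)⁻¹ := by
    push_cast
    rw [← Real.rpow_natCast, ← Real.rpow_natCast, ← Real.rpow_mul hn0.le, ← Real.rpow_neg hn0.le]
    exact Real.rpow_le_rpow_of_exponent_le (by linarith) (by norm_num)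
  calc _ ≤ ((n : ℝ) ^ 10) ^ 2 * ((2 * n ^ 3 : ℕ) * ((n : ℝ) ^ 24)⁻¹) := by gcongr
    _ = 2 / n := by push_cast; field_simp
    _ ≤ 1 := by rw [div_le_one hn0]; exact hn'

lemma Y_bound (n m : ℕ) (hn : 2 ≤ n) (Y : Finset (Fin n → Fin m → Bool)) (hY : Y.Nonempty)
    (h : (n : ℝ) * (m : ℝ) - Real.logb 2 (Y.card : ℝ) ≤ (n : ℝ) ^ 3 + 1) :
    ((2 : ℝ) ^ m) ^ n ≤ Y.card * 2 ^ (2 * n ^ 3) := by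
  have hc : (0 : ℝ) < Y.card := by exact_mod_cast hY.card_pos
  have e : ((2 : ℝ) ^ m) ^ n = (2 : ℝ) ^ ((n : ℝ) * m) := by
    rw [show (n : ℝ) * m = ((m * n : ℕ) : ℝ) by push_cast; ring, Real.rpow_natCast, pow_mul]
  have e2 : (Y.card : ℝ) = (2 : ℝ) ^ (Real.logb 2 (Y.card : ℝ)) :=
    (Real.rpow_logb (by norm_num) (by norm_num) hc).symm
  rw [e, e2, ← Real.rpow_natCast, ← Real.rpow_add (by norm_num)]
  refine Real.rpow_le_rpow_of_exponent_le (by norm_num) ?_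
  have h1 : (1 : ℝ) ≤ (n : ℝ) ^ 3 := one_le_pow₀ (by exact_mod_cast (by omega : 1 ≤ n))
  push_cast
  linarith

end PU

/-- **Pointwise uniformity lemma.** For `ρ ∈ {0,1,*}^n` (encoded as
`ρ : Fin n → Option Bool`) and a `ρ`-essentially-structured rectangle `X × Y` with
`nm − log₂|Y| ≤ n³ + 1`: for every `z` consistent with `ρ`,
`(1 − 1/n³)·2^(−|free(ρ)|)·|X|·|Y| ≤ |G⁻¹(z) ∩ (X × Y)| ≤ (1 + 1/n³)·2^(−|free(ρ)|)·|X|·|Y|`;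
i.e. the distribution of `G(x,y)` for uniform `(x,y) ∈ X × Y` is `1/n³`-pointwise-close
to uniform on the set of `z` consistent with `ρ`. -/
theorem pointwise_uniformity :
    ∃ N : ℕ, ∀ n : ℕ, N ≤ n →
    ∀ (ρ : Fin n → Option Bool)
      (X : Finset (Fin n → Fin (n ^ 256))) (Y : Finset (Fin n → Fin (n ^ 256) → Bool)),
      X.Nonempty → Y.Nonempty →
      -- all elements of X agree on the fixed positions of ρ
      (∀ x ∈ X, ∀ x' ∈ X, ∀ i : Fin n, ρ i ≠ none → x i = x' i) →
      (∀ I : Finset (Fin n), (∀ i ∈ I, ρ i = none) → I.Nonempty →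
        ∀ α : Fin n → Fin (n ^ 256),
        ((X.filter fun x => ∀ i ∈ I, x i = α i).card : ℝ) ≤
          2 * (X.card : ℝ) * ((n ^ 256 : ℕ) : ℝ) ^ (-(0.9 * (I.card : ℝ)))) →
      -- every output G(x,y) on X × Y is consistent with ρ
      (∀ x ∈ X, ∀ y ∈ Y, ∀ i : Fin n, ∀ b : Bool, ρ i = some b → y i (x i) = b) →
      -- deficiency of Y at most n³ + 1
      ((n : ℝ) * ((n ^ 256 : ℕ) : ℝ) - Real.logb 2 (Y.card : ℝ) ≤ (n : ℝ) ^ 3 + 1) →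
      ∀ z : Fin n → Bool,
        (∀ i : Fin n, ∀ b : Bool, ρ i = some b → z i = b) →
        ((1 - 1 / (n : ℝ) ^ 3) *
            (2 : ℝ) ^ (-(((Finset.univ.filter fun i => ρ i = none).card : ℝ))) *
            (X.card : ℝ) * (Y.card : ℝ) ≤
          (((X ×ˢ Y).filter fun p => ∀ i, p.2 i (p.1 i) = z i).card : ℝ)) ∧
        ((((X ×ˢ Y).filter fun p => ∀ i, p.2 i (p.1 i) = z i).card : ℝ) ≤
          (1 + 1 / (n : ℝ) ^ 3) *
            (2 : ℝ) ^ (-(((Finset.univ.filter fun i => ρ i = none).card : ℝ))) *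
            (X.card : ℝ) * (Y.card : ℝ)) := by
  refine ⟨8, ?_⟩
  intro n hn ρ X Y hX hY _hfix hdense hcons hdef z hz
  have hn' : (8 : ℝ) ≤ n := by exact_mod_cast hn
  have hn0 : (0 : ℝ) < n := by linarith
  set J := Finset.univ.filter fun i => ρ i = none with hJdef
  have hm : 0 < n ^ 256 := Nat.pow_pos (by omega)
  have hcount := PU.count_eq J X Y z (by
    intro x hx y hy i hi
    have hne : ρ i ≠ none := by simpa [hJdef] using hi
    obtain ⟨b, hb⟩ := Option.ne_none_iff_exists'.1 hne
    rw [hcons x hx y hy i b hb, hz i b hb])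
  have hXY : (0 : ℝ) ≤ (X.card : ℝ) * Y.card := by positivity
  -- bound on every nontrivial character
  have hchar : ∀ S ∈ J.powerset, S.Nonempty →
      |∑ y ∈ Y, ∑ x : X, ∏ i ∈ S, PU.sgn (y i (x.1 i))| ≤
        (1 / (n : ℝ) ^ 5) ^ S.card * ((X.card : ℝ) * Y.card) := by
    intro S hS hSne
    have hSJ := mem_powerset.1 hS
    have hk := PU.key' hm X S (((n ^ 256 : ℕ) : ℝ)) ((n : ℝ) ^ 10)
      (one_le_pow₀ (by linarith)) (Nat.cast_nonneg _) (by
        intro R hR hRne v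
        have := hdense R (fun i hi => by simpa [hJdef] using hSJ (hR hi)) hRne v
        convert this)
      (n ^ 3) (Nat.pow_pos (by omega)) (PU.q_bound n (by omega)) Y
      (PU.Y_bound n _ (by omega) Y hY hdef)
    set F := ∑ y ∈ Y, ∑ x : X, ∏ i ∈ S, PU.sgn (y i (x.1 i))
    have hk1 : 1 ≤ S.card := hSne.card_pos
    have h8 : (4 : ℝ) * 2 ^ S.card ≤ ((n : ℝ) ^ 5) ^ S.card := by
      calc (4 : ℝ) * 2 ^ S.card ≤ 4 ^ S.card * 2 ^ S.card := by
            gcongr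
            exact le_self_pow₀ (by norm_num) (by omega)
        _ = 8 ^ S.card := by rw [← mul_pow]; norm_num
        _ ≤ ((n : ℝ) ^ 5) ^ S.card := by
            gcongr
            exact hn'.trans (le_self_pow₀ (by linarith) (by norm_num))
    have h9 : |F| * ((n : ℝ) ^ 10) ^ S.card ≤
        ((n : ℝ) ^ 5) ^ S.card * ((X.card : ℝ) * Y.card) := by
      refine hk.trans ?_
      rw [mul_assoc]
      exact mul_le_mul_of_nonneg_right h8 hXY
    have h10 : ((n : ℝ) ^ 10) ^ S.card = ((n : ℝ) ^ 5) ^ S.card * ((n : ℝ) ^ 5) ^ S.card := by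
      rw [← mul_pow]; congr 1; ring
    have hp : 0 < ((n : ℝ) ^ 5) ^ S.card := by positivity
    rw [h10, ← mul_assoc, mul_comm (|F|), mul_assoc] at h9
    have h11 := le_of_mul_le_mul_left h9 hp
    rw [one_div, inv_pow, ← div_eq_inv_mul, le_div_iff₀ hp]
    exact h11
  -- total error
  set E := ∑ S ∈ J.powerset, (∏ i ∈ S, PU.sgn (z i)) *
        ∑ y ∈ Y, ∑ x : X, ∏ i ∈ S, PU.sgn (y i (x.1 i)) with hE
  have hmain : |E - (X.card : ℝ) * Y.card| ≤ 1 / (n : ℝ) ^ 3 * ((X.card : ℝ) * Y.card) := by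
    have hmem : (∅ : Finset (Fin n)) ∈ J.powerset := by simp
    have e1 := add_sum_erase J.powerset (fun S => (∏ i ∈ S, PU.sgn (z i)) *
        ∑ y ∈ Y, ∑ x : X, ∏ i ∈ S, PU.sgn (y i (x.1 i))) hmem
    have e2 := add_sum_erase J.powerset (fun S => (1 / (n : ℝ) ^ 5) ^ S.card) hmem
    have e3 := prod_one_add (f := fun _ : Fin n => 1 / (n : ℝ) ^ 5) J
    simp only [prod_const] at e3
    rw [← e3] at e2
    rw [← hE] at e1
    simp only [prod_empty, sum_const, card_univ, Fintype.card_coe, one_mul, nsmul_eq_mul, mul_one,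
      card_empty, pow_zero] at e1 e2
    have e4 : E - (X.card : ℝ) * Y.card = ∑ S ∈ J.powerset.erase ∅, (∏ i ∈ S, PU.sgn (z i)) *
        ∑ y ∈ Y, ∑ x : X, ∏ i ∈ S, PU.sgn (y i (x.1 i)) := by
      rw [← e1]; ring
    rw [e4]
    calc _ ≤ ∑ S ∈ J.powerset.erase ∅, (1 / (n : ℝ) ^ 5) ^ S.card * ((X.card : ℝ) * Y.card) := by
          refine (abs_sum_le_sum_abs _ _).trans (sum_le_sum fun S hS => ?_)
          rw [abs_mul, abs_prod]
          simp only [PU.abs_sgn, prod_const_one, one_mul]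
          exact hchar S (mem_of_mem_erase hS) (nonempty_iff_ne_empty.2 (ne_of_mem_erase hS))
      _ = ((1 + 1 / (n : ℝ) ^ 5) ^ J.card - 1) * ((X.card : ℝ) * Y.card) := by
          rw [← sum_mul, ← e2]; ring
      _ ≤ _ := by
          refine mul_le_mul_of_nonneg_right (PU.tail_bound n _ (by omega) ?_) hXY
          simpa using card_le_univ J
  have hpow : (2 : ℝ) ^ (-(J.card : ℝ)) = (1 / 2) ^ J.card := by
    rw [Real.rpow_neg (by norm_num), Real.rpow_natCast, one_div, inv_pow]
  have hP : (0 : ℝ) ≤ (1 / 2) ^ J.card := by positivity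
  rw [hcount, hpow]
  obtain ⟨hlo, hhi⟩ := abs_le.1 hmain
  constructor
  · calc _ = (1 / 2 : ℝ) ^ J.card * ((1 - 1 / (n : ℝ) ^ 3) * ((X.card : ℝ) * Y.card)) := by ring
      _ ≤ _ := mul_le_mul_of_nonneg_left (by linarith) hP
  · calc _ ≤ (1 / 2 : ℝ) ^ J.card * ((1 + 1 / (n : ℝ) ^ 3) * ((X.card : ℝ) * Y.card)) :=
          mul_le_mul_of_nonneg_left (by linarith) hP
      _ = _ := by ring
end

section
/- Focused decomposition lemma: There exists N such that for every n ≥ N the following holds with m = n^256 (so √m = n^128 is an integer). Let I ⊆ [n] be nonempty, let X ⊆ [m]^I be nonempty and 0.9-essentially-dense, and let Y ⊆ ({0,1}^m)^I be nonempty with |I|·m − log₂|Y| ≤ n³ + 1. Then the product of the uniform distributions on X and on Y can be written as a finite mixture Σ_{d∈D} μ(d) · (x^d × y^d), where μ is a probability distribution on a finite set D and each x^d × y^d is a product of a distribution x^d on [m]^I and a distribution y^d on ({0,1}^m)^I, such that Σ{μ(d) : x^d × y^d is focused} ≥ 1 − (1/2) · n^(−5|I|). -/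
open Finset

/-- The bucket index of `j ∈ [m]` where `m = n^256` is partitioned into `√m = n^128`
consecutive buckets of size `√m = n^128` each. -/
def bucket (n : ℕ) (j : Fin (n ^ 256)) : Fin (n ^ 128) :=
  ⟨j.val / n ^ 128, by
    have hj := j.isLt
    have hn : 0 < n := by
      rcases Nat.eq_zero_or_pos n with rfl | h
      · exact absurd hj (by norm_num)
      · exact h
    have h256 : n ^ 256 = n ^ 128 * n ^ 128 := by ring
    exact Nat.div_lt_of_lt_mul (h256 ▸ hj)⟩

/-- The product distribution `x × y` (given by pmfs `px`, `py` over `[m]^I` resp.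
`({0,1}^m)^I`, with `m = n^256`) is *focused*: there is a partial assignment
`σ ∈ {0,1,*}^I` (encoded by `Option Bool`, `none` = `*`) with free set `I' = σ⁻¹(*)` and
bucket indices `ℓᵢ` such that `|I'| ≥ |I|/2`; the gadget outputs agree with `σ` on
`I ∖ I'` with probability 1; for `i ∈ I'` the pointer `xᵢ` lies in bucket `T_{ℓᵢ}` with
probability 1; `Pr[x_{I'} = a] ≤ (√m)^(−0.4|I'|)` for every `a`; and
`Pr[y_T = γ] ≤ 2·2^(−|I'|·√m)` for every `γ`, where `T = ⋃_{i∈I'} {i} × T_{ℓᵢ}`. -/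
def Focused (n : ℕ) (I : Finset (Fin n))
    (px : ({i // i ∈ I} → Fin (n ^ 256)) → ℝ)
    (py : ({i // i ∈ I} → Fin (n ^ 256) → Bool) → ℝ) : Prop :=
  ∃ (σ : {i // i ∈ I} → Option Bool) (ℓ : {i // i ∈ I} → Fin (n ^ 128)),
    I.card ≤ 2 * (Finset.univ.filter fun i => σ i = none).card ∧
    (∀ x, px x ≠ 0 → ∀ y, py y ≠ 0 → ∀ i, ∀ b : Bool, σ i = some b → y i (x i) = b) ∧
    (∀ x, px x ≠ 0 → ∀ i, σ i = none → bucket n (x i) = ℓ i) ∧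
    (∀ a : {i // i ∈ I} → Fin (n ^ 256),
      ∑ x ∈ Finset.univ.filter
          (fun x : {i // i ∈ I} → Fin (n ^ 256) => ∀ i, σ i = none → x i = a i), px x ≤
        ((n ^ 128 : ℕ) : ℝ) ^
          (-(0.4 * (((Finset.univ.filter fun i => σ i = none).card : ℝ))))) ∧
    (∀ γ : {i // i ∈ I} → Fin (n ^ 256) → Bool,
      ∑ y ∈ Finset.univ.filter
          (fun y : {i // i ∈ I} → Fin (n ^ 256) → Bool =>
            ∀ i, σ i = none → ∀ j, bucket n j = ℓ i → y i j = γ i j), py y ≤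
        2 * (2 : ℝ) ^
          (-((((Finset.univ.filter fun i => σ i = none).card : ℝ)) * ((n ^ 128 : ℕ) : ℝ))))

open Classical in
/-- Mixture representation of `f` by products, non-`Foc` weight at most `e`. -/
def FDecomp {A B : Type} [Fintype A] [Fintype B] (Foc : (A → ℝ) → (B → ℝ) → Prop)
    (f : A → B → ℝ) (e : ℝ) : Prop :=
  ∃ (ι : Type) (_ : Fintype ι) (μ : ι → ℝ) (px : ι → A → ℝ) (py : ι → B → ℝ),
    (∀ d, 0 ≤ μ d) ∧ (∀ d a, 0 ≤ px d a) ∧ (∀ d, ∑ a, px d a = 1) ∧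
    (∀ d b, 0 ≤ py d b) ∧ (∀ d, ∑ b, py d b = 1) ∧
    (∀ a b, ∑ d, μ d * (px d a * py d b) = f a b) ∧
    (∑ d, if Foc (px d) (py d) then 0 else μ d) ≤ e

open Classical in
/-- uniform pmf -/
noncomputable def upmf {A : Type} (P : Finset A) (a : A) : ℝ :=
  if a ∈ P then 1 / (P.card : ℝ) else 0

open Classical in
/-- rectangle indicator -/
noncomputable def rectI {A B : Type} (P : Finset A) (Q : Finset B) (a : A) (b : B) : ℝ :=
  if a ∈ P ∧ b ∈ Q then 1 else 0

lemma upmf_nonneg {A : Type} (P : Finset A) (a : A) : 0 ≤ upmf P a := by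
  unfold upmf; split_ifs <;> positivity

open Classical in
lemma upmf_filter {A : Type} [Fintype A] (P : Finset A) (T : Finset A) :
    ∑ a ∈ T, upmf P a = ((P ∩ T).card : ℝ) / P.card := by
  unfold upmf
  rw [Finset.sum_ite_mem, Finset.sum_const, nsmul_eq_mul, Finset.inter_comm]
  ring

lemma upmf_sum {A : Type} [Fintype A] (P : Finset A) (h : P.Nonempty) :
    ∑ a, upmf P a = 1 := by
  classical
  rw [upmf_filter, Finset.inter_univ, div_self]
  have := h.card_pos
  positivity

lemma upmf_ne {A : Type} (P : Finset A) (a : A) (h : upmf P a ≠ 0) : a ∈ P := by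
  unfold upmf at h
  by_contra hc
  simp [hc] at h

section
variable {A B : Type} [Fintype A] [Fintype B] {Foc : (A → ℝ) → (B → ℝ) → Prop}

lemma FDecomp.mono {f : A → B → ℝ} {e e' : ℝ} (h : FDecomp Foc f e) (he : e ≤ e') :
    FDecomp Foc f e' := by
  obtain ⟨ι, i1, μ, px, py, h1, h2, h3, h4, h5, h6, h7⟩ := h
  exact ⟨ι, i1, μ, px, py, h1, h2, h3, h4, h5, h6, h7.trans he⟩

lemma FDecomp.zero : FDecomp Foc (fun _ _ => 0) 0 := by
  refine ⟨Empty, inferInstance, fun _ => 0, fun _ _ => 0, fun _ _ => 0, ?_, ?_, ?_, ?_, ?_, ?_, ?_⟩ <;>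
    simp

lemma FDecomp.add {f g : A → B → ℝ} {e e' : ℝ} (h : FDecomp Foc f e) (h' : FDecomp Foc g e') :
    FDecomp Foc (fun a b => f a b + g a b) (e + e') := by
  obtain ⟨ι, i1, μ, px, py, h1, h2, h3, h4, h5, h6, h7⟩ := h
  obtain ⟨κ, i2, ν, qx, qy, g1, g2, g3, g4, g5, g6, g7⟩ := h'
  refine ⟨ι ⊕ κ, inferInstance, Sum.elim μ ν, Sum.elim px qx, Sum.elim py qy,
    ?_, ?_, ?_, ?_, ?_, ?_, ?_⟩
  · rintro (d | d) <;> simp [h1, g1]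
  · rintro (d | d) <;> simp [h2, g2]
  · rintro (d | d) <;> simp [h3, g3]
  · rintro (d | d) <;> simp [h4, g4]
  · rintro (d | d) <;> simp [h5, g5]
  · intro a b
    simp [Fintype.sum_sum_type, h6, g6]
  · simp only [Fintype.sum_sum_type, Sum.elim_inl, Sum.elim_inr]
    exact add_le_add h7 g7

lemma FDecomp.sum {κ : Type} (s : Finset κ) (f : κ → A → B → ℝ) (e : κ → ℝ)
    (h : ∀ k ∈ s, FDecomp Foc (f k) (e k)) :
    FDecomp Foc (fun a b => ∑ k ∈ s, f k a b) (∑ k ∈ s, e k) := by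
  classical
  induction s using Finset.induction_on with
  | empty => simpa using FDecomp.zero
  | insert k s hk ih =>
    simp only [Finset.sum_insert hk]
    exact (h k (by simp)).add (ih fun j hj => h j (by simp [hj]))

open Classical in
lemma FDecomp.rect (P : Finset A) (Q : Finset B) (hP : P.Nonempty) (hQ : Q.Nonempty) :
    FDecomp Foc (rectI P Q)
      (if Foc (upmf P) (upmf Q) then 0 else (P.card : ℝ) * Q.card) := by
  have hp := hP.card_pos
  have hq := hQ.card_pos
  refine ⟨Unit, inferInstance, fun _ => (P.card : ℝ) * Q.card, fun _ => upmf P, fun _ => upmf Q,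
    fun _ => by positivity, fun _ => upmf_nonneg P, fun _ => upmf_sum P hP,
    fun _ => upmf_nonneg Q, fun _ => upmf_sum Q hQ, ?_, ?_⟩
  · intro a b
    have : (P.card : ℝ) ≠ 0 := by positivity
    have : (Q.card : ℝ) ≠ 0 := by positivity
    simp only [Finset.univ_unique, Finset.sum_singleton, rectI, upmf]
    by_cases ha : a ∈ P <;> by_cases hb : b ∈ Q <;> simp [ha, hb]
    field_simp
  · simp

lemma FDecomp.rect' (P : Finset A) (Q : Finset B) :
    FDecomp Foc (rectI P Q) ((P.card : ℝ) * Q.card) := by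
  classical
  by_cases h : P.Nonempty ∧ Q.Nonempty
  · refine (FDecomp.rect P Q h.1 h.2).mono ?_
    split_ifs
    · positivity
    · rfl
  · have h0 : rectI P Q = fun _ _ => 0 := by
      funext a b
      simp only [rectI]
      rw [if_neg]
      rintro ⟨ha, hb⟩
      exact h ⟨⟨a, ha⟩, ⟨b, hb⟩⟩
    rw [h0]
    exact FDecomp.zero.mono (by positivity)

open Classical in
lemma FDecomp.final (X : Finset A) (Y : Finset B) (hX : X.Nonempty) (hY : Y.Nonempty) (ε : ℝ)
    (h : FDecomp Foc (rectI X Y) (ε * ((X.card : ℝ) * Y.card))) :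
    ∃ (k : ℕ) (μ : Fin k → ℝ) (px : Fin k → A → ℝ) (py : Fin k → B → ℝ),
        (∀ d, 0 ≤ μ d) ∧ (∑ d, μ d = 1) ∧
        (∀ d a, 0 ≤ px d a) ∧ (∀ d, ∑ a, px d a = 1) ∧
        (∀ d b, 0 ≤ py d b) ∧ (∀ d, ∑ b, py d b = 1) ∧
        (∀ a b, ∑ d, μ d * (px d a * py d b) =
          if a ∈ X ∧ b ∈ Y then 1 / ((X.card : ℝ) * (Y.card : ℝ)) else 0) ∧
        (1 - ε ≤ ∑ d, if Foc (px d) (py d) then μ d else 0) := by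
  obtain ⟨ι, i1, μ, px, py, h1, h2, h3, h4, h5, h6, h7⟩ := h
  have hp := hX.card_pos
  have hq := hY.card_pos
  have hZ : (0 : ℝ) < (X.card : ℝ) * Y.card := by positivity
  set Z := (X.card : ℝ) * Y.card with hZd
  let e := Fintype.equivFin ι
  have htot : ∑ d, μ d = Z := by
    have : ∑ a, ∑ b, ∑ d, μ d * (px d a * py d b) = ∑ d, μ d := by
      calc _ = ∑ d, ∑ a, ∑ b, μ d * (px d a * py d b) := by
            simp_rw [Finset.sum_comm (s := (univ : Finset B)) (t := (univ : Finset ι))]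
            rw [Finset.sum_comm]
        _ = _ := by
            refine Finset.sum_congr rfl fun d _ => ?_
            simp_rw [← Finset.mul_sum, h5, mul_one, h3, mul_one]
    rw [← this]
    simp_rw [h6, rectI, ite_and]
    simp [hZd]
  have key : ∀ g : ι → ℝ, ∑ d : Fin (Fintype.card ι), g (e.symm d) = ∑ d, g d :=
    fun g => Equiv.sum_comp e.symm g
  refine ⟨Fintype.card ι, fun d => μ (e.symm d) / Z, fun d => px (e.symm d), fun d => py (e.symm d),
    fun d => div_nonneg (h1 _) hZ.le, ?_, fun d => h2 _, fun d => h3 _, fun d => h4 _,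
    fun d => h5 _, ?_, ?_⟩
  · rw [key (fun d => μ d / Z), ← Finset.sum_div, htot, div_self hZ.ne']
  · intro a b
    rw [key (fun d => μ d / Z * (px d a * py d b))]
    have : ∀ d, μ d / Z * (px d a * py d b) = (μ d * (px d a * py d b)) / Z := fun d => by ring
    simp_rw [this, ← Finset.sum_div, h6, rectI]
    split_ifs <;> simp
  · rw [key (fun d => if Foc (px d) (py d) then μ d / Z else 0)]
    have : ∑ d, (if Foc (px d) (py d) then μ d / Z else 0) =
        (∑ d, μ d - ∑ d, (if Foc (px d) (py d) then 0 else μ d)) / Z := by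
      rw [← Finset.sum_sub_distrib, Finset.sum_div]
      refine Finset.sum_congr rfl fun d _ => ?_
      split_ifs <;> simp
    rw [this, htot, le_div_iff₀ hZ]
    linarith
end
section
variable {ι J Q : Type} [Fintype ι] [Fintype J] [Fintype Q] [DecidableEq ι] [DecidableEq J]
  [DecidableEq Q]

set_option linter.unusedSectionVars false
lemma card_block (bk : J → Q) (S : ℕ) (hS : ∀ q, (univ.filter fun j => bk j = q).card = S)
    (B : Finset (ι × Q)) :
    ∑ i : ι, ∑ j : J, (if (i, bk j) ∈ B then 1 else 0) = S * B.card := by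
  have h1 : ∀ i : ι, ∑ j : J, (if (i, bk j) ∈ B then 1 else 0) =
      ∑ q : Q, if (i, q) ∈ B then S else 0 := by
    intro i
    rw [← Finset.sum_fiberwise (s := univ) (g := bk)]
    refine Finset.sum_congr rfl fun q _ => ?_
    rw [Finset.sum_congr rfl (g := fun _ => if (i, q) ∈ B then 1 else 0)]
    · rw [Finset.sum_const, hS]; split_ifs <;> simp
    · intro j hj
      simp only [Finset.mem_filter] at hj
      rw [hj.2]
  simp_rw [h1]
  rw [← Fintype.sum_prod_type' (f := fun i q => if (i, q) ∈ B then S else 0)]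
  simp [mul_comm]

lemma count_fixed (bk : J → Q) (S : ℕ) (hS : ∀ q, (univ.filter fun j => bk j = q).card = S)
    (B : Finset (ι × Q)) (γ : ι → J → Bool) (T : Finset (ι → J → Bool))
    (hT : ∀ y ∈ T, ∀ i j, (i, bk j) ∈ B → y i j = γ i j) :
    T.card * (2 ^ S) ^ B.card ≤ 2 ^ (Fintype.card ι * Fintype.card J) := by
  have hsub : T ⊆ Fintype.piFinset (fun i => Fintype.piFinset
      (fun j => if (i, bk j) ∈ B then ({γ i j} : Finset Bool) else univ)) := by
    intro y hy
    simp only [Fintype.mem_piFinset]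
    intro i j
    split_ifs with h
    · simp [hT y hy i j h]
    · simp
  have hc := Finset.card_le_card hsub
  rw [Fintype.card_piFinset] at hc
  simp_rw [Fintype.card_piFinset] at hc
  have e1 : (2 ^ S) ^ B.card = ∏ i : ι, ∏ j : J, 2 ^ (if (i, bk j) ∈ B then 1 else 0) := by
    simp_rw [Finset.prod_pow_eq_pow_sum]
    rw [card_block bk S hS B, pow_mul]
  calc _ ≤ _ := Nat.mul_le_mul_right _ hc
    _ = _ := by
      rw [e1, ← Finset.prod_mul_distrib]
      simp_rw [← Finset.prod_mul_distrib]
      rw [Finset.prod_congr rfl (g := fun _ => 2 ^ Fintype.card J)]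
      · rw [Finset.prod_const, ← pow_mul, mul_comm]; rfl
      · intro i _
        rw [Finset.prod_congr rfl (g := fun _ => 2)]
        · rw [Finset.prod_const]; rfl
        · intro j _
          split_ifs <;> simp

lemma stepY (bk : J → Q) (S : ℕ) (hS : ∀ q, (univ.filter fun j => bk j = q).card = S)
    (n D : ℕ) (Y : Finset (ι → J → Bool)) (hYne : Y.Nonempty)
    (hY : 2 ^ (Fintype.card ι * Fintype.card J) ≤ Y.card * 2 ^ D)
    (θ : ℝ) (hθ1 : 1 < θ) (hθ : θ ^ n = 2) :
    ∃ (F : Finset (ι × Q)) (γ : ι → J → Bool) (Y' : Finset (ι → J → Bool)),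
      Y' ⊆ Y ∧ Y'.Nonempty ∧ F.card ≤ n * D ∧
      (∀ y ∈ Y', ∀ i j, (i, bk j) ∈ F → y i j = γ i j) ∧
      ∀ C : Finset (ι × Q), Disjoint F C → ∀ δ : ι → J → Bool, ∀ T ⊆ Y',
        (∀ y ∈ T, ∀ i j, (i, bk j) ∈ C → y i j = δ i j) →
        (T.card : ℝ) * (2 ^ S) ^ C.card ≤ Y'.card * θ ^ C.card := by
  classical
  let fil : Finset (ι × Q) → (ι → J → Bool) → Finset (ι → J → Bool) := fun B γ =>
    Y.filter fun y => ∀ i j, (i, bk j) ∈ B → y i j = γ i j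
  let V : Finset (Finset (ι × Q)) := univ.filter fun B => ∃ γ,
    (Y.card : ℝ) * θ ^ B.card ≤ (fil B γ).card * (2 ^ S) ^ B.card
  have hV : V.Nonempty := by
    refine ⟨∅, ?_⟩
    simp only [V, Finset.mem_filter, Finset.mem_univ, true_and]
    refine ⟨fun _ _ => true, ?_⟩
    simp [fil]
  obtain ⟨F, hFV, hFmax⟩ := Finset.exists_max_image V Finset.card hV
  have hFV' := hFV
  simp only [V, Finset.mem_filter, Finset.mem_univ, true_and] at hFV'
  obtain ⟨γ, hγ⟩ := hFV'
  have hθ0 : 0 < θ := by linarith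
  have hYpos : (0 : ℝ) < Y.card := by exact_mod_cast hYne.card_pos
  refine ⟨F, γ, fil F γ, Finset.filter_subset _ _, ?_, ?_, ?_, ?_⟩
  · rw [← Finset.card_pos]
    by_contra hc
    have : (fil F γ).card = 0 := by omega
    rw [this] at hγ
    have : 0 < (Y.card : ℝ) * θ ^ F.card := by positivity
    simp at hγ
    linarith
  · have h1 := count_fixed bk S hS F γ (fil F γ) (by
      intro y hy; exact (Finset.mem_filter.1 hy).2)
    have h2 : (Y.card : ℝ) * θ ^ F.card ≤ Y.card * 2 ^ D := by
      refine hγ.trans ?_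
      exact_mod_cast h1.trans hY
    have h3 : θ ^ F.card ≤ θ ^ (n * D) := by
      rw [pow_mul, hθ]
      exact le_of_mul_le_mul_left h2 hYpos
    exact (pow_le_pow_iff_right₀ hθ1).1 h3
  · intro y hy; exact (Finset.mem_filter.1 hy).2
  · intro C hFC δ T hT hTC
    by_contra hcon
    push Not at hcon
    have hCne : C.Nonempty := by
      rw [Finset.nonempty_iff_ne_empty]
      rintro rfl
      simp at hcon
      have := Finset.card_le_card hT
      omega
    let γ' : ι → J → Bool := fun i j => if (i, bk j) ∈ F then γ i j else δ i j
    have hsub : T ⊆ fil (F ∪ C) γ' := by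
      intro y hy
      have hy1 := Finset.mem_filter.1 (hT hy)
      refine Finset.mem_filter.2 ⟨hy1.1, ?_⟩
      intro i j hij
      simp only [γ']
      split_ifs with h
      · exact hy1.2 i j h
      · refine hTC y hy i j ?_
        rcases Finset.mem_union.1 hij with h' | h'
        · exact absurd h' h
        · exact h'
    have hmem : F ∪ C ∈ V := by
      simp only [V, Finset.mem_filter, Finset.mem_univ, true_and]
      refine ⟨γ', ?_⟩
      rw [Finset.card_union_of_disjoint hFC, pow_add, pow_add]
      calc (Y.card : ℝ) * (θ ^ F.card * θ ^ C.card)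
          = (Y.card : ℝ) * θ ^ F.card * θ ^ C.card := by ring
        _ ≤ ((fil F γ).card * (2 ^ S) ^ F.card) * θ ^ C.card := by gcongr
        _ = ((fil F γ).card * θ ^ C.card) * (2 ^ S) ^ F.card := by ring
        _ ≤ (T.card * (2 ^ S) ^ C.card) * (2 ^ S) ^ F.card := by gcongr
        _ ≤ ((fil (F ∪ C) γ').card * (2 ^ S) ^ C.card) * (2 ^ S) ^ F.card := by
            gcongr
        _ = _ := by ring
    have := hFmax _ hmem
    rw [Finset.card_union_of_disjoint hFC] at this
    have := hCne.card_pos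
    omega

lemma bad_count (X : Finset (ι → J)) (ρ t : ℝ) (s : ℕ) (hρ : 0 ≤ ρ) (ht0 : 0 ≤ t) (ht1 : t ≤ 1)
    (hι : 0 < Fintype.card ι)
    (hst : s * ρ ≤ t ^ 2)
    (hX : ∀ H : Finset ι, H.Nonempty → ∀ α : ι → J, ∀ T ⊆ X, (∀ x ∈ T, ∀ i ∈ H, x i = α i) →
      (T.card : ℝ) ≤ 2 * X.card * ρ ^ H.card)
    (Sf : ι → Finset J) (hSf : ∀ i, (Sf i).card ≤ s) (T : Finset (ι → J)) (hT : T ⊆ X)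
    (hTS : ∀ x ∈ T, Fintype.card ι ≤ 2 * (univ.filter fun i => x i ∈ Sf i).card) :
    (T.card : ℝ) ≤ 2 * X.card * (2 * t) ^ Fintype.card ι := by
  classical
  rcases T.eq_empty_or_nonempty with rfl | ⟨x0, hx0⟩
  · simp; positivity
  let HH : Finset (Finset ι) := univ.filter fun H => Fintype.card ι ≤ 2 * H.card
  let AA : Finset ι → Finset (ι → J) := fun H =>
    Fintype.piFinset fun i => if i ∈ H then Sf i else {x0 i}
  have hAA : ∀ H, (AA H).card ≤ s ^ H.card := by
    intro H
    simp only [AA, Fintype.card_piFinset]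
    calc _ ≤ ∏ i : ι, (if i ∈ H then s else 1) := by
          refine Finset.prod_le_prod' fun i _ => ?_
          split_ifs
          · exact hSf i
          · simp
      _ = _ := by simp
  have hcover : T ⊆ HH.biUnion fun H => (AA H).biUnion fun α =>
      T.filter fun x => ∀ i ∈ H, x i = α i := by
    intro x hx
    simp only [Finset.mem_biUnion, Finset.mem_filter]
    refine ⟨univ.filter fun i => x i ∈ Sf i, ?_, fun i => if x i ∈ Sf i then x i else x0 i, ?_, hx, ?_⟩
    · simpa [HH] using hTS x hx
    · simp only [AA, Fintype.mem_piFinset, Finset.mem_filter, Finset.mem_univ, true_and]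
      intro i
      split_ifs with h
      · exact h
      · simp
    · intro i hi
      simp at hi
      simp [hi]
  have h1 := (Finset.card_le_card hcover).trans Finset.card_biUnion_le
  have h2 : ∀ H ∈ HH, ((((AA H).biUnion fun α =>
      T.filter fun x => ∀ i ∈ H, x i = α i).card : ℕ) : ℝ) ≤ 2 * X.card * t ^ Fintype.card ι := by
    intro H hH
    have hH' : Fintype.card ι ≤ 2 * H.card := by simpa [HH] using hH
    have hHne : H.Nonempty := by rw [← Finset.card_pos]; omega
    calc _ ≤ ((∑ α ∈ AA H, (T.filter fun x => ∀ i ∈ H, x i = α i).card : ℕ) : ℝ) := by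
          exact_mod_cast Finset.card_biUnion_le
      _ ≤ ∑ α ∈ AA H, 2 * (X.card : ℝ) * ρ ^ H.card := by
          push_cast
          refine Finset.sum_le_sum fun α _ => ?_
          refine hX H hHne α _ ((Finset.filter_subset _ _).trans hT) ?_
          intro x hx; exact (Finset.mem_filter.1 hx).2
      _ = (AA H).card * (2 * (X.card : ℝ) * ρ ^ H.card) := by simp
      _ ≤ (s ^ H.card : ℕ) * (2 * (X.card : ℝ) * ρ ^ H.card) := by
          gcongr; exact hAA H
      _ = 2 * X.card * (s * ρ) ^ H.card := by push_cast; rw [mul_pow]; ring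
      _ ≤ 2 * X.card * (t ^ 2) ^ H.card := by gcongr
      _ ≤ 2 * X.card * t ^ Fintype.card ι := by
          rw [← pow_mul]
          gcongr ?_ * ?_
          exact pow_le_pow_of_le_one ht0 ht1 hH'
  calc (T.card : ℝ) ≤ ∑ H ∈ HH, 2 * (X.card : ℝ) * t ^ Fintype.card ι := by
        have h3 := (Nat.cast_le (α := ℝ)).2 h1
        push_cast at h3
        exact h3.trans (Finset.sum_le_sum h2)
    _ = HH.card * (2 * (X.card : ℝ) * t ^ Fintype.card ι) := by simp
    _ ≤ (2 ^ Fintype.card ι : ℕ) * (2 * (X.card : ℝ) * t ^ Fintype.card ι) := by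
        gcongr
        calc HH.card ≤ (univ : Finset (Finset ι)).card := Finset.card_filter_le _ _
          _ = _ := by simp
    _ = _ := by push_cast; rw [mul_pow]; ring

/-- key of a coordinate -/
def keyc (bk : J → Q) (F : Finset (ι × Q)) (i : ι) (j : J) : Q × Option J :=
  (bk j, if (i, bk j) ∈ F then some j else none)

lemma card_Sf (bk : J → Q) (S : ℕ) (hS : ∀ q, (univ.filter fun j => bk j = q).card = S)
    (F : Finset (ι × Q)) (i : ι) :
    (univ.filter fun j => (i, bk j) ∈ F).card ≤ F.card * S := by
  have := card_block bk S hS F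
  rw [mul_comm, ← this, Finset.card_filter]
  exact Finset.single_le_sum (f := fun i => ∑ j : J, (if (i, bk j) ∈ F then 1 else 0))
    (fun _ _ => Nat.zero_le _) (Finset.mem_univ i)

lemma key_count (bk : J → Q) (S : ℕ) (hS : ∀ q, (univ.filter fun j => bk j = q).card = S)
    (F : Finset (ι × Q)) (X : Finset (ι → J)) :
    (X.image fun x i => keyc bk F i (x i)).card ≤
      (Fintype.card Q + F.card * S) ^ Fintype.card ι := by
  have hsub : (X.image fun x i => keyc bk F i (x i)) ⊆
      Fintype.piFinset fun i => univ.image (keyc bk F i) := by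
    intro k hk
    obtain ⟨x, _, rfl⟩ := Finset.mem_image.1 hk
    simp [Fintype.mem_piFinset]
  refine (Finset.card_le_card hsub).trans ?_
  rw [Fintype.card_piFinset]
  refine (Finset.prod_le_pow_card _ _ (Fintype.card Q + F.card * S) ?_).trans (le_of_eq rfl)
  intro i _
  have : univ.image (keyc bk F i) ⊆ (univ.image fun q : Q => (q, (none : Option J))) ∪
      ((univ.filter fun j => (i, bk j) ∈ F).image fun j => (bk j, some j)) := by
    intro k hk
    obtain ⟨j, _, rfl⟩ := Finset.mem_image.1 hk
    by_cases h : (i, bk j) ∈ F <;> simp [keyc, h]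
  refine (Finset.card_le_card this).trans ((Finset.card_union_le _ _).trans ?_)
  gcongr
  · exact Finset.card_image_le
  · exact Finset.card_image_le.trans (card_Sf bk S hS F i)
end

lemma bucket_fiber (n : ℕ) (q : Fin (n ^ 128)) :
    (univ.filter fun j : Fin (n ^ 256) => bucket n j = q).card = n ^ 128 := by
  have h256 : n ^ 256 = n ^ 128 * n ^ 128 := by ring
  have hb : ∀ t : Fin (n ^ 128), q.val * n ^ 128 + t.val < n ^ 256 := by
    intro t
    rw [h256]
    have h1 := q.isLt
    have h2 := t.isLt
    nlinarith
  have hS : 0 < n ^ 128 := lt_of_le_of_lt (Nat.zero_le _) q.isLt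
  have : (univ.filter fun j : Fin (n ^ 256) => bucket n j = q) =
      univ.image fun t : Fin (n ^ 128) => (⟨q.val * n ^ 128 + t.val, hb t⟩ : Fin (n ^ 256)) := by
    ext j
    simp only [Finset.mem_filter, Finset.mem_univ, true_and, Finset.mem_image, bucket,
      Fin.ext_iff]
    constructor
    · intro h
      refine ⟨⟨j.val % n ^ 128, Nat.mod_lt _ hS⟩, ?_⟩
      simp only
      rw [← h, mul_comm]
      exact Nat.div_add_mod _ _
    · rintro ⟨t, ht⟩
      rw [← ht, mul_comm, Nat.mul_add_div hS, Nat.div_eq_of_lt t.isLt, add_zero]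
  rw [this, Finset.card_image_of_injective, Finset.card_univ, Fintype.card_fin]
  intro a b hab
  simp only [Fin.ext_iff] at hab
  exact Fin.ext (by omega)
lemma focused_piece (n : ℕ) (hn : 4 ≤ n) (I : Finset (Fin n))
    (P : Finset ({i // i ∈ I} → Fin (n ^ 256))) (Y : Finset ({i // i ∈ I} → Fin (n ^ 256) → Bool))
    (hPne : P.Nonempty) (hYne : Y.Nonempty)
    (F : Finset ({i // i ∈ I} × Fin (n ^ 128))) (γ : {i // i ∈ I} → Fin (n ^ 256) → Bool)
    (θ : ℝ) (hθ1 : 1 < θ) (hθ : θ ^ n = 2)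
    (x0 : {i // i ∈ I} → Fin (n ^ 256))
    (hP : ∀ x ∈ P, ∀ i, keyc (bucket n) F i (x i) = keyc (bucket n) F i (x0 i))
    (hsmall : I.card ≤ 2 * (univ.filter fun i => (i, bucket n (x0 i)) ∉ F).card)
    (hbig : ((n : ℝ) ^ 52) ^ I.card ≤ P.card)
    (hfix : ∀ y ∈ Y, ∀ i j, (i, bucket n j) ∈ F → y i j = γ i j)
    (hspread : ∀ C : Finset ({i // i ∈ I} × Fin (n ^ 128)), Disjoint F C →
      ∀ δ : {i // i ∈ I} → Fin (n ^ 256) → Bool, ∀ T ⊆ Y,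
        (∀ y ∈ T, ∀ i j, (i, bucket n j) ∈ C → y i j = δ i j) →
        (T.card : ℝ) * (2 ^ (n ^ 128)) ^ C.card ≤ Y.card * θ ^ C.card) :
    Focused n I (upmf P) (upmf Y) := by
  classical
  have hb : ∀ x ∈ P, ∀ i, bucket n (x i) = bucket n (x0 i) := by
    intro x hx i
    have := hP x hx i
    simp only [keyc, Prod.mk.injEq] at this
    exact this.1
  have hx : ∀ x ∈ P, ∀ i, (i, bucket n (x0 i)) ∈ F → x i = x0 i := by
    intro x hx i hi
    have := hP x hx i
    simp only [keyc, Prod.mk.injEq, hb x hx i, hi, if_true, Option.some.injEq] at this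
    exact this.2
  have hnone : ∀ i, (if (i, bucket n (x0 i)) ∈ F then some (γ i (x0 i)) else none) = none ↔
      (i, bucket n (x0 i)) ∉ F := by
    intro i; split_ifs with h <;> simp [h]
  refine ⟨fun i => if (i, bucket n (x0 i)) ∈ F then some (γ i (x0 i)) else none,
    fun i => bucket n (x0 i), ?_, ?_, ?_, ?_, ?_⟩
  · simp only [hnone]
    exact hsmall
  · intro x hx1 y hy1 i b hb1
    have hxP := upmf_ne _ _ hx1
    have hyY := upmf_ne _ _ hy1
    dsimp only at hb1
    split_ifs at hb1 with h
    simp only [Option.some.injEq] at hb1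
    rw [← hb1, hx x hxP i h]
    exact hfix y hyY i _ h
  · intro x hx1 i _
    exact hb x (upmf_ne _ _ hx1) i
  · intro a
    simp only [hnone]
    rw [upmf_filter]
    have hPc : (0 : ℝ) < P.card := by exact_mod_cast hPne.card_pos
    set p := (univ.filter fun i => (i, bucket n (x0 i)) ∉ F).card with hp
    have hpI : p ≤ I.card := by
      calc p ≤ (univ : Finset {i // i ∈ I}).card := Finset.card_filter_le _ _
        _ = I.card := by simp
    have h1 : (P ∩ univ.filter fun x : {i // i ∈ I} → Fin (n ^ 256) =>
        ∀ i, (i, bucket n (x0 i)) ∉ F → x i = a i).card ≤ 1 := by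
      rw [Finset.card_le_one]
      intro u hu v hv
      simp only [Finset.mem_inter, Finset.mem_filter, Finset.mem_univ, true_and] at hu hv
      funext i
      by_cases hi : (i, bucket n (x0 i)) ∈ F
      · rw [hx u hu.1 i hi, hx v hv.1 i hi]
      · rw [hu.2 i hi, hv.2 i hi]
    have hn1 : (1 : ℝ) ≤ n := by exact_mod_cast (by omega : 1 ≤ n)
    have hn0 : (0 : ℝ) < n := by linarith
    have h2 : ((n ^ 128 : ℕ) : ℝ) ^ (-(0.4 * (p : ℝ))) = ((n : ℝ) ^ (51.2 * (p : ℝ)))⁻¹ := by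
      rw [← Real.rpow_neg hn0.le]
      push_cast
      rw [← Real.rpow_natCast, ← Real.rpow_mul hn0.le]
      congr 1
      push_cast
      ring
    have h3 : (n : ℝ) ^ (51.2 * (p : ℝ)) ≤ ((n : ℝ) ^ 52) ^ I.card := by
      rw [← pow_mul, ← Real.rpow_natCast]
      apply Real.rpow_le_rpow_of_exponent_le hn1
      push_cast
      have : (p : ℝ) ≤ I.card := by exact_mod_cast hpI
      have : (0 : ℝ) ≤ p := by positivity
      nlinarith
    rw [h2, inv_eq_one_div]
    have h4 : (0 : ℝ) < (n : ℝ) ^ (51.2 * (p : ℝ)) := by positivity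
    apply div_le_div₀ (by norm_num) _ h4 (h3.trans hbig)
    · rw [← Nat.cast_one, Nat.cast_le]
      convert h1
  · intro δ
    simp only [hnone]
    rw [upmf_filter]
    have hYc : (0 : ℝ) < Y.card := by exact_mod_cast hYne.card_pos
    set p := (univ.filter fun i => (i, bucket n (x0 i)) ∉ F).card with hp
    have hpn : p ≤ n := by
      calc p ≤ (univ : Finset {i // i ∈ I}).card := Finset.card_filter_le _ _
        _ = I.card := by simp
        _ ≤ (univ : Finset (Fin n)).card := Finset.card_le_card (Finset.subset_univ _)
        _ = n := by simp
    let C : Finset ({i // i ∈ I} × Fin (n ^ 128)) :=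
      (univ.filter fun i => (i, bucket n (x0 i)) ∉ F).image fun i => (i, bucket n (x0 i))
    have hC : C.card = p := by
      apply Finset.card_image_of_injective
      intro i j hij
      exact (Prod.mk.inj hij).1
    have hd : Disjoint F C := by
      rw [Finset.disjoint_left]
      intro q hq hqC
      obtain ⟨i, hi, rfl⟩ := Finset.mem_image.1 hqC
      exact (Finset.mem_filter.1 hi).2 hq
    have := hspread C hd δ (Y ∩ univ.filter fun y : {i // i ∈ I} → Fin (n ^ 256) → Bool =>
      ∀ i, (i, bucket n (x0 i)) ∉ F → ∀ j, bucket n j = bucket n (x0 i) → y i j = δ i j)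
      Finset.inter_subset_left (by
        intro y hy i j hij
        simp only [Finset.mem_inter, Finset.mem_filter, Finset.mem_univ, true_and] at hy
        obtain ⟨k, hk, hkk⟩ := Finset.mem_image.1 hij
        simp only [Prod.mk.injEq] at hkk
        obtain ⟨rfl, h2⟩ := hkk
        exact hy.2 k (Finset.mem_filter.1 hk).2 j h2.symm)
    rw [hC] at this
    have hth : θ ^ p ≤ 2 := by rw [← hθ]; exact pow_le_pow_right₀ hθ1.le hpn
    have h2 : (2 : ℝ) ^ (-((p : ℝ) * ((n ^ 128 : ℕ) : ℝ))) = (((2 : ℝ) ^ (n ^ 128)) ^ p)⁻¹ := by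
      rw [Real.rpow_neg (by norm_num), ← Nat.cast_mul, Real.rpow_natCast, ← pow_mul, mul_comm]
    rw [h2, ← div_eq_mul_inv, div_le_div_iff₀ hYc (by positivity)]
    refine le_trans (le_of_eq ?_) (this.trans ?_)
    · congr!
    · rw [mul_comm]; gcongr

lemma stepX (n : ℕ) (hn : 4 ≤ n) (I : Finset (Fin n)) (hI : I.Nonempty)
    (X : Finset ({i // i ∈ I} → Fin (n ^ 256))) (Y : Finset ({i // i ∈ I} → Fin (n ^ 256) → Bool))
    (hXne : X.Nonempty) (hYne : Y.Nonempty)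
    (hX : ∀ H : Finset {i // i ∈ I}, H.Nonempty → ∀ α : {i // i ∈ I} → Fin (n ^ 256), ∀ T ⊆ X,
      (∀ x ∈ T, ∀ i ∈ H, x i = α i) → (T.card : ℝ) ≤ 2 * X.card * (((n : ℝ) ^ 230)⁻¹) ^ H.card)
    (F : Finset ({i // i ∈ I} × Fin (n ^ 128))) (γ : {i // i ∈ I} → Fin (n ^ 256) → Bool)
    (θ : ℝ) (hθ1 : 1 < θ) (hθ : θ ^ n = 2)
    (hF : F.card ≤ n ^ 5)
    (hfix : ∀ y ∈ Y, ∀ i j, (i, bucket n j) ∈ F → y i j = γ i j)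
    (hspread : ∀ C : Finset ({i // i ∈ I} × Fin (n ^ 128)), Disjoint F C →
      ∀ δ : {i // i ∈ I} → Fin (n ^ 256) → Bool, ∀ T ⊆ Y,
        (∀ y ∈ T, ∀ i j, (i, bucket n j) ∈ C → y i j = δ i j) →
        (T.card : ℝ) * (2 ^ (n ^ 128)) ^ C.card ≤ Y.card * θ ^ C.card) :
    FDecomp (Focused n I) (rectI X Y)
      ((1 / 4) * (((n : ℝ) ^ I.card) ^ 5)⁻¹ * (X.card * Y.card)) := by
  classical
  set w : ℝ := (n : ℝ) ^ I.card with hw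
  have hcardI : Fintype.card {i // i ∈ I} = I.card := by simp
  have hIpos : 0 < I.card := hI.card_pos
  have hn4 : (4 : ℝ) ≤ n := by exact_mod_cast hn
  have hw4 : 4 ≤ w := by
    calc (4 : ℝ) ≤ n := hn4
      _ = (n : ℝ) ^ 1 := by simp
      _ ≤ w := pow_le_pow_right₀ (by linarith) hIpos
  have hwpow : ∀ k : ℕ, ((n : ℝ) ^ k) ^ I.card = w ^ k := by
    intro k; rw [hw, ← pow_mul, ← pow_mul, mul_comm]
  have hw0 : 0 < w := by linarith
  have hXc : (0 : ℝ) < X.card := by exact_mod_cast hXne.card_pos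
  have hYc : (0 : ℝ) < Y.card := by exact_mod_cast hYne.card_pos
  -- lower bound on X
  have hXlow : w ^ 230 ≤ 2 * X.card := by
    obtain ⟨x, hx⟩ := hXne
    have : Nonempty {i // i ∈ I} := ⟨⟨_, hI.choose_spec⟩⟩
    have h := hX univ Finset.univ_nonempty x {x} (by simpa using hx) (by simp)
    rw [Finset.card_univ, hcardI, inv_pow, hwpow] at h
    simp only [Finset.card_singleton, Nat.cast_one] at h
    rw [← div_eq_mul_inv, le_div_iff₀ (by positivity)] at h
    linarith
  let key : ({i // i ∈ I} → Fin (n ^ 256)) → {i // i ∈ I} → Fin (n ^ 128) × Option (Fin (n ^ 256)) :=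
    fun x i => keyc (bucket n) F i (x i)
  let KK := X.image key
  have hKK : (KK.card : ℝ) ≤ w ^ 134 := by
    have h := key_count (bucket n) (n ^ 128) (bucket_fiber n) F X
    rw [hcardI, Fintype.card_fin] at h
    have h2 : n ^ 128 + F.card * n ^ 128 ≤ n ^ 134 := by
      have h5 : 1 + n ^ 5 ≤ n ^ 6 := by
        have : 1 ≤ n ^ 5 := Nat.one_le_pow _ _ (by omega)
        calc 1 + n ^ 5 ≤ n ^ 5 * 4 := by omega
          _ ≤ n ^ 5 * n := by gcongr
          _ = n ^ 6 := by ring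
      calc n ^ 128 + F.card * n ^ 128 ≤ n ^ 128 + n ^ 5 * n ^ 128 := by gcongr
        _ = (1 + n ^ 5) * n ^ 128 := by ring
        _ ≤ n ^ 6 * n ^ 128 := by gcongr
        _ = n ^ 134 := by ring
    have h3 := h.trans (Nat.pow_le_pow_left h2 _)
    rw [← hwpow]
    exact_mod_cast h3
  let Pc : ({i // i ∈ I} → Fin (n ^ 128) × Option (Fin (n ^ 256))) →
    Finset ({i // i ∈ I} → Fin (n ^ 256)) := fun k => X.filter fun x => key x = k
  have hPcne : ∀ k ∈ KK, (Pc k).Nonempty := by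
    intro k hk
    obtain ⟨x, hx, rfl⟩ := Finset.mem_image.1 hk
    exact ⟨x, by simp [Pc, hx]⟩
  have hmix := FDecomp.sum (Foc := Focused n I) KK (fun k => rectI (Pc k) Y) _
    (fun k hk => FDecomp.rect (Pc k) Y (hPcne k hk) hYne)
  have hfun : (fun a b => ∑ k ∈ KK, rectI (Pc k) Y a b) = rectI X Y := by
    funext a b
    simp only [rectI, Pc, Finset.mem_filter]
    by_cases ha : a ∈ X
    · by_cases hb : b ∈ Y
      · have : key a ∈ KK := Finset.mem_image_of_mem _ ha
        simp [ha, hb, this]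
      · simp [hb]
    · simp [ha]
  rw [hfun] at hmix
  refine hmix.mono ?_
  -- bad set
  let Bad := X.filter fun x => Fintype.card {i // i ∈ I} ≤
    2 * (univ.filter fun i => x i ∈ (univ.filter fun j => (i, bucket n j) ∈ F)).card
  have hBad : (Bad.card : ℝ) ≤ (1 / 8) * (w ^ 5)⁻¹ * X.card := by
    have h := bad_count X (((n : ℝ) ^ 230)⁻¹) (((n : ℝ) ^ 40)⁻¹) (n ^ 133) (by positivity)
      (by positivity) (inv_le_one_of_one_le₀ (one_le_pow₀ (by linarith)))
      (by rw [hcardI]; exact hIpos)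
      (by
        push_cast
        rw [← div_eq_mul_inv, div_le_iff₀ (by positivity), ← inv_pow, ← pow_mul, inv_pow,
          inv_mul_eq_div, le_div_iff₀ (by positivity), ← pow_add]
        exact pow_le_pow_right₀ (by linarith) (by norm_num))
      hX (fun i => univ.filter fun j => (i, bucket n j) ∈ F)
      (fun i => by
        refine (card_Sf (bucket n) (n ^ 128) (bucket_fiber n) F i).trans ?_
        calc F.card * n ^ 128 ≤ n ^ 5 * n ^ 128 := by gcongr
          _ = n ^ 133 := by ring)
      Bad (Finset.filter_subset _ _) (fun x hx => (Finset.mem_filter.1 hx).2)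
    rw [hcardI, mul_pow, inv_pow, hwpow] at h
    refine h.trans ?_
    have h2 : (2 : ℝ) ^ I.card ≤ w := pow_le_pow_left₀ (by norm_num) (by linarith) _
    have h3 : 16 * 2 ^ I.card * w ^ 5 ≤ w ^ 40 := by
      calc 16 * 2 ^ I.card * w ^ 5 ≤ w ^ 2 * w * w ^ 5 := by
            gcongr; nlinarith
        _ = w ^ 8 := by ring
        _ ≤ w ^ 40 := pow_le_pow_right₀ (by linarith) (by norm_num)
    have h4 : 2 * (2 ^ I.card * (w ^ 40)⁻¹) ≤ 1 / 8 * (w ^ 5)⁻¹ := by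
      rw [← div_eq_mul_inv, ← div_eq_mul_inv, ← mul_div_assoc,
        div_le_div_iff₀ (by positivity) (by positivity)]
      linarith
    calc 2 * (X.card : ℝ) * (2 ^ I.card * (w ^ 40)⁻¹)
        = (2 * (2 ^ I.card * (w ^ 40)⁻¹)) * X.card := by ring
      _ ≤ _ := by gcongr
  have hterm : ∀ k ∈ KK, (if Focused n I (upmf (Pc k)) (upmf Y) then 0 else
      ((Pc k).card : ℝ) * Y.card) ≤
      ((1 / 8) * (w ^ 5)⁻¹ * X.card / w ^ 134 + ((Bad.filter fun x => key x = k).card : ℝ)) *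
        Y.card := by
    intro k hk
    split_ifs with hfoc
    · positivity
    refine mul_le_mul_of_nonneg_right ?_ hYc.le
    by_contra hcon
    push Not at hcon
    apply hfoc
    have hk' := hk
    obtain ⟨x0, hx0, hkx⟩ := Finset.mem_image.1 hk'
    have hkeyP : ∀ x ∈ Pc k, ∀ i, keyc (bucket n) F i (x i) = keyc (bucket n) F i (x0 i) := by
      intro x hx i
      have := (Finset.mem_filter.1 hx).2
      rw [← hkx] at this
      exact congrFun this i
    have hpos : 0 ≤ (1 / 8) * (w ^ 5)⁻¹ * X.card / w ^ 134 := by positivity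
    have hnb : x0 ∉ Bad := by
      intro hx0b
      have hsub : Pc k ⊆ Bad.filter fun x => key x = k := by
        intro x hx
        have hx' := Finset.mem_filter.1 hx
        refine Finset.mem_filter.2 ⟨Finset.mem_filter.2 ⟨hx'.1, ?_⟩, hx'.2⟩
        have h := (Finset.mem_filter.1 hx0b).2
        have hb : ∀ i, bucket n (x i) = bucket n (x0 i) := by
          intro i
          have := hkeyP x hx i
          simp only [keyc, Prod.mk.injEq] at this
          exact this.1
        simp only [Finset.mem_filter, Finset.mem_univ, true_and] at h ⊢
        simp only [hb]
        exact h
      have := (Nat.cast_le (α := ℝ)).2 (Finset.card_le_card hsub)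
      linarith
    refine focused_piece n hn I (Pc k) Y (hPcne k hk) hYne F γ θ hθ1 hθ x0 hkeyP ?_ ?_ hfix hspread
    · have h : ¬ (Fintype.card {i // i ∈ I} ≤
        2 * (univ.filter fun i => x0 i ∈ (univ.filter fun j => (i, bucket n j) ∈ F)).card) := by
        intro h
        exact hnb (Finset.mem_filter.2 ⟨hx0, h⟩)
      simp only [Finset.mem_filter, Finset.mem_univ, true_and] at h
      have h' := Finset.card_filter_add_card_filter_not (s := (univ : Finset {i // i ∈ I}))
        (fun i => (i, bucket n (x0 i)) ∈ F)
      rw [Finset.card_univ] at h'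
      rw [hcardI] at h h'
      omega
    · rw [hwpow]
      have h1 : (0 : ℝ) ≤ ((Bad.filter fun x => key x = k).card : ℝ) := by positivity
      have h2 : (1 / 8) * (w ^ 5)⁻¹ * X.card / w ^ 134 ≤ (Pc k).card := by linarith
      refine le_trans ?_ h2
      rw [le_div_iff₀ (by positivity), ← div_eq_mul_inv, div_mul_eq_mul_div,
        le_div_iff₀ (by positivity)]
      have h3 : 16 * w ^ 191 ≤ w ^ 230 := by
        calc 16 * w ^ 191 ≤ w ^ 2 * w ^ 191 := by gcongr; nlinarith
          _ = w ^ 193 := by ring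
          _ ≤ w ^ 230 := pow_le_pow_right₀ (by linarith) (by norm_num)
      have h4 : w ^ 52 * w ^ 134 * w ^ 5 = w ^ 191 := by ring
      rw [h4]
      linarith
  refine (Finset.sum_le_sum hterm).trans ?_
  rw [← Finset.sum_mul, Finset.sum_add_distrib, Finset.sum_const, nsmul_eq_mul]
  have hsumBad : ∑ k ∈ KK, ((Bad.filter fun x => key x = k).card : ℝ) = Bad.card := by
    rw [Finset.card_eq_sum_card_fiberwise (f := key) (s := Bad) (t := KK)]
    · push_cast; rfl
    · intro x hx
      exact Finset.mem_image_of_mem _ (Finset.filter_subset _ _ hx)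
  rw [hsumBad]
  have h5 : (KK.card : ℝ) * ((1 / 8) * (w ^ 5)⁻¹ * X.card / w ^ 134) ≤
      (1 / 8) * (w ^ 5)⁻¹ * X.card := by
    calc _ ≤ w ^ 134 * ((1 / 8) * (w ^ 5)⁻¹ * X.card / w ^ 134) := by gcongr
      _ = _ := by field_simp
  calc _ ≤ ((1 / 8) * (w ^ 5)⁻¹ * X.card + (1 / 8) * (w ^ 5)⁻¹ * X.card) * (Y.card : ℝ) := by
        gcongr
    _ = _ := by ring

lemma mainInd (n : ℕ) (hn : 4 ≤ n) (I : Finset (Fin n)) (hI : I.Nonempty)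
    (X : Finset ({i // i ∈ I} → Fin (n ^ 256))) (Y : Finset ({i // i ∈ I} → Fin (n ^ 256) → Bool))
    (hXne : X.Nonempty)
    (hX : ∀ H : Finset {i // i ∈ I}, H.Nonempty → ∀ α : {i // i ∈ I} → Fin (n ^ 256), ∀ T ⊆ X,
      (∀ x ∈ T, ∀ i ∈ H, x i = α i) → (T.card : ℝ) ≤ 2 * X.card * (((n : ℝ) ^ 230)⁻¹) ^ H.card)
    (hY : (2 : ℝ) ^ (I.card * n ^ 256) ≤ Y.card * 2 ^ (n ^ 3 + 1))
    (N : ℕ) : ∀ Z ⊆ Y, Z.card ≤ N →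
    FDecomp (Focused n I) (rectI X Z)
      ((1 / 4) * (((n : ℝ) ^ I.card) ^ 5)⁻¹ * (X.card * Z.card) +
        (1 / 4) * (((n : ℝ) ^ I.card) ^ 5)⁻¹ * (X.card * Y.card)) := by
  classical
  have hn4 : (4 : ℝ) ≤ n := by exact_mod_cast hn
  have hw0 : (0 : ℝ) < (n : ℝ) ^ I.card := by positivity
  set w : ℝ := (n : ℝ) ^ I.card with hw
  have hIn : I.card ≤ n := by
    calc I.card ≤ (univ : Finset (Fin n)).card := Finset.card_le_card (Finset.subset_univ _)
      _ = n := by simp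
  induction N with
  | zero =>
    intro Z hZ hZN
    have : Z = ∅ := Finset.card_eq_zero.1 (by omega)
    subst this
    refine (FDecomp.rect' X ∅).mono ?_
    simp
    positivity
  | succ N ih =>
    intro Z hZ hZN
    by_cases hsm : (Z.card : ℝ) ≤ (1 / 4) * (w ^ 5)⁻¹ * Y.card
    · refine (FDecomp.rect' X Z).mono ?_
      have h1 : (X.card : ℝ) * Z.card ≤ X.card * ((1 / 4) * (w ^ 5)⁻¹ * Y.card) := by gcongr
      have h2 : 0 ≤ (1 / 4) * (w ^ 5)⁻¹ * ((X.card : ℝ) * Z.card) := by positivity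
      linarith
    push Not at hsm
    have hZne : Z.Nonempty := by
      rw [← Finset.card_pos]
      have : (0 : ℝ) < Z.card := lt_of_le_of_lt (by positivity) hsm
      exact_mod_cast this
    have hn0 : n ≠ 0 := by omega
    have hYZ : (Y.card : ℝ) ≤ Z.card * 2 ^ (5 * n ^ 2 + 2) := by
      have h1 : (Y.card : ℝ) ≤ Z.card * (4 * w ^ 5) := by
        have h3 : (1 / 4) * (w ^ 5)⁻¹ * (Y.card : ℝ) * (4 * w ^ 5) = Y.card := by field_simp
        rw [← h3]
        gcongr
      refine h1.trans ?_
      have hnw : (n : ℝ) ≤ 2 ^ n := by exact_mod_cast (Nat.lt_two_pow_self).le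
      have h2 : w ^ 5 ≤ 2 ^ (5 * n ^ 2) := by
        calc w ^ 5 = (n : ℝ) ^ (I.card * 5) := by rw [hw, ← pow_mul]
          _ ≤ (2 ^ n) ^ (I.card * 5) := by gcongr
          _ = 2 ^ (n * (I.card * 5)) := by rw [← pow_mul]
          _ ≤ 2 ^ (5 * n ^ 2) := by
              apply pow_le_pow_right₀ (by norm_num)
              nlinarith
      have h3 : (2 : ℝ) ^ (5 * n ^ 2 + 2) = 4 * 2 ^ (5 * n ^ 2) := by rw [pow_add]; norm_num; ring
      rw [h3]
      gcongr
    have hbig : (2 : ℝ) ^ (I.card * n ^ 256) ≤ Z.card * 2 ^ (n ^ 4) := by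
      calc (2 : ℝ) ^ (I.card * n ^ 256) ≤ Y.card * 2 ^ (n ^ 3 + 1) := hY
        _ ≤ (Z.card * 2 ^ (5 * n ^ 2 + 2)) * 2 ^ (n ^ 3 + 1) := by gcongr
        _ = Z.card * 2 ^ ((5 * n ^ 2 + 2) + (n ^ 3 + 1)) := by rw [pow_add 2 (5 * n ^ 2 + 2)]; ring
        _ ≤ Z.card * 2 ^ (n ^ 4) := by
            gcongr
            · norm_num
            · have h1 : 4 * n ^ 3 ≤ n ^ 4 := by
                calc 4 * n ^ 3 ≤ n * n ^ 3 := by gcongr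
                  _ = n ^ 4 := by ring
              have h2 : 4 * n ^ 2 ≤ n ^ 3 := by
                calc 4 * n ^ 2 ≤ n * n ^ 2 := by gcongr
                  _ = n ^ 3 := by ring
              nlinarith
    have hθ : ((2 : ℝ) ^ ((n : ℝ)⁻¹)) ^ n = 2 := by
      rw [← Real.rpow_natCast, ← Real.rpow_mul (by norm_num), inv_mul_cancel₀ (by positivity),
        Real.rpow_one]
    have hθ1 : 1 < (2 : ℝ) ^ ((n : ℝ)⁻¹) := Real.one_lt_rpow (by norm_num) (by positivity)
    obtain ⟨F, γ, Y', hY'Z, hY'ne, hF, hfix, hspread⟩ := stepY (bucket n) (n ^ 128)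
      (bucket_fiber n) n (n ^ 4) Z hZne
      (by
        have : Fintype.card {i // i ∈ I} = I.card := by simp
        rw [this, Fintype.card_fin]
        exact_mod_cast hbig) _ hθ1 hθ
    have hx := stepX n hn I hI X Y' hXne hY'ne hX F γ _ hθ1 hθ
      (hF.trans (le_of_eq (by ring))) hfix hspread
    have hcard := Finset.card_sdiff_add_card_eq_card hY'Z
    have hY'pos := hY'ne.card_pos
    have hrec := ih (Z \ Y') (Finset.sdiff_subset.trans hZ) (by omega)
    have hsum := hx.add hrec
    have hfun : (fun a b => rectI X Y' a b + rectI X (Z \ Y') a b) = rectI X Z := by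
      funext a b
      simp only [rectI, Finset.mem_sdiff]
      by_cases ha : a ∈ X
      · by_cases hb : b ∈ Y'
        · simp [ha, hb, hY'Z hb]
        · by_cases hz : b ∈ Z <;> simp [ha, hb, hz]
      · simp [ha]
    rw [hfun] at hsum
    refine hsum.mono (le_of_eq ?_)
    rw [← hcard]
    push_cast
    ring

open Classical in
/-- **Focused decomposition lemma.** There is `N` such that for all `n ≥ N`
(with `m = n^256`): if `I ⊆ [n]` is nonempty, `X ⊆ [m]^I` is nonempty and
0.9-essentially-dense, and `Y ⊆ ({0,1}^m)^I` is nonempty with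
`|I|·m − log₂|Y| ≤ n³ + 1`, then the uniform distribution on `X × Y` is a finite mixture
`Σ_d μ(d)·(x^d × y^d)` of product distributions such that the total mixture weight on
focused products is at least `1 − (1/2)·n^(−5|I|)`. -/
theorem focused_decomposition :
    ∃ N : ℕ, ∀ n : ℕ, N ≤ n →
    ∀ I : Finset (Fin n), I.Nonempty →
    ∀ X : Finset ({i // i ∈ I} → Fin (n ^ 256)), X.Nonempty →
      -- X is 0.9-essentially-dense
      (∀ H : Finset {i // i ∈ I}, H.Nonempty → ∀ α : {i // i ∈ I} → Fin (n ^ 256),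
        ((X.filter fun x => ∀ i ∈ H, x i = α i).card : ℝ) ≤
          2 * (X.card : ℝ) * ((n ^ 256 : ℕ) : ℝ) ^ (-(0.9 * (H.card : ℝ)))) →
    ∀ Y : Finset ({i // i ∈ I} → Fin (n ^ 256) → Bool), Y.Nonempty →
      -- deficiency of Y at most n³ + 1
      ((I.card : ℝ) * ((n ^ 256 : ℕ) : ℝ) - Real.logb 2 (Y.card : ℝ) ≤ (n : ℝ) ^ 3 + 1) →
      ∃ (k : ℕ) (μ : Fin k → ℝ)
        (px : Fin k → (({i // i ∈ I} → Fin (n ^ 256)) → ℝ))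
        (py : Fin k → (({i // i ∈ I} → Fin (n ^ 256) → Bool) → ℝ)),
        (∀ d, 0 ≤ μ d) ∧ (∑ d, μ d = 1) ∧
        (∀ d a, 0 ≤ px d a) ∧ (∀ d, ∑ a, px d a = 1) ∧
        (∀ d b, 0 ≤ py d b) ∧ (∀ d, ∑ b, py d b = 1) ∧
        -- the mixture equals the uniform distribution on X × Y
        (∀ a b, ∑ d, μ d * (px d a * py d b) =
          if a ∈ X ∧ b ∈ Y then 1 / ((X.card : ℝ) * (Y.card : ℝ)) else 0) ∧
        -- the mixture weight of focused products is at least 1 − (1/2)·n^(−5|I|)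
        (1 - (1 / 2) * (n : ℝ) ^ (-(5 * (I.card : ℝ))) ≤
          ∑ d, if Focused n I (px d) (py d) then μ d else 0) := by
  refine ⟨4, ?_⟩
  intro n hn I hI X hXne hX Y hYne hY
  have hn1 : (1 : ℝ) ≤ n := by exact_mod_cast (by omega : 1 ≤ n)
  have hn0 : (0 : ℝ) < n := by linarith
  have hXc : (0 : ℝ) < X.card := by exact_mod_cast hXne.card_pos
  have hYc : (0 : ℝ) < Y.card := by exact_mod_cast hYne.card_pos
  have hX' : ∀ H : Finset {i // i ∈ I}, H.Nonempty → ∀ α : {i // i ∈ I} → Fin (n ^ 256), ∀ T ⊆ X,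
      (∀ x ∈ T, ∀ i ∈ H, x i = α i) →
      (T.card : ℝ) ≤ 2 * X.card * (((n : ℝ) ^ 230)⁻¹) ^ H.card := by
    intro H hH α T hT hTα
    have h1 : (T.card : ℝ) ≤ ((X.filter fun x => ∀ i ∈ H, x i = α i).card : ℝ) := by
      exact_mod_cast Finset.card_le_card fun x hx => Finset.mem_filter.2 ⟨hT hx, hTα x hx⟩
    refine h1.trans ((hX H hH α).trans ?_)
    gcongr
    push_cast
    rw [inv_pow, ← pow_mul, ← Real.rpow_natCast, ← Real.rpow_natCast, ← Real.rpow_mul hn0.le,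
      ← Real.rpow_neg hn0.le]
    apply Real.rpow_le_rpow_of_exponent_le hn1
    push_cast
    have : (0 : ℝ) ≤ H.card := by positivity
    nlinarith
  have hY' : (2 : ℝ) ^ (I.card * n ^ 256) ≤ Y.card * 2 ^ (n ^ 3 + 1) := by
    have h1 : ((I.card * n ^ 256 : ℕ) : ℝ) ≤ Real.logb 2 (Y.card : ℝ) + ((n ^ 3 + 1 : ℕ) : ℝ) := by
      push_cast at hY ⊢
      linarith
    rw [← Real.rpow_natCast 2 (I.card * n ^ 256), ← Real.rpow_natCast 2 (n ^ 3 + 1)]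
    refine (Real.rpow_le_rpow_of_exponent_le (by norm_num) h1).trans (le_of_eq ?_)
    rw [Real.rpow_add (by norm_num), Real.rpow_logb (by norm_num) (by norm_num) hYc]
  have hmain := mainInd n hn I hI X Y hXne hX' hY' Y.card Y (Finset.Subset.refl _) le_rfl
  have hε : (n : ℝ) ^ (-(5 * (I.card : ℝ))) = (((n : ℝ) ^ I.card) ^ 5)⁻¹ := by
    rw [Real.rpow_neg hn0.le, ← pow_mul, ← Real.rpow_natCast]
    push_cast
    rw [mul_comm]
  have hmain2 : FDecomp (Focused n I) (rectI X Y)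
      ((1 / 2) * (n : ℝ) ^ (-(5 * (I.card : ℝ))) * ((X.card : ℝ) * Y.card)) := by
    refine hmain.mono (le_of_eq ?_)
    rw [hε]
    ring
  obtain ⟨k, μ, px, py, h1, h2, h3, h4, h5, h6, h7, h8⟩ := FDecomp.final X Y hXne hYne _ hmain2
  refine ⟨k, μ, px, py, h1, h2, h3, h4, h5, h6, ?_, ?_⟩
  · intro a b
    rw [h7 a b]
    congr
  · refine h8.trans (le_of_eq ?_)
    refine Finset.sum_congr rfl fun d _ => ?_
    congr
end
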